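/- arXiv:0809.3046 — 15 statements merged into one kernel-verified Lean document; each statement's English description precedes it below -/
import Mathlib

section
/- Let p be a prime number, G a group, and H a subgroup of G that is topologically p-embedded in G. Let Γ = ⟨G, t | t⁻¹ht = h for all h ∈ H⟩ be the HNN extension of G with both associated subgroups equal to H and with the identity isomorphism. Then G is topologically p-embedded in Γ; that is, for every normal subgroup N of G whose index [G:N] is a power of p, there exists a normal subgroup M of Γ whose index [Γ:M] is a power of p such that M ∩ G ≤ N (where G is identified with its canonical image in Γ). -/
/-- A subgroup `H` of `G` is topologically `p`-embedded if every normal subgroup of `H`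
of `p`-power index contains the intersection with `H` of some normal subgroup of `G` of
`p`-power index. -/
def TopPEmbedded (p : ℕ) {G : Type*} [Group G] (H : Subgroup G) : Prop :=
  ∀ N : Subgroup H, N.Normal → (∃ k : ℕ, N.index = p ^ k) →
    ∃ M : Subgroup G, M.Normal ∧ (∃ k : ℕ, M.index = p ^ k) ∧ M.subgroupOf H ≤ N

theorem base_top_p_embedded_in_HNN (p : ℕ) (hp : p.Prime) (G : Type*) [Group G]
    (H : Subgroup G) (hH : TopPEmbedded p H) :
    ∀ N : Subgroup G, N.Normal → (∃ k : ℕ, N.index = p ^ k) →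
      ∃ M : Subgroup (HNNExtension G H H (MulEquiv.refl H)), M.Normal ∧
        (∃ k : ℕ, M.index = p ^ k) ∧ M.comap (HNNExtension.of) ≤ N := by
  intro N hN hk
  let f : HNNExtension G H H (MulEquiv.refl H) →* G :=
    HNNExtension.lift (MonoidHom.id G) 1 (by intro a; simp)
  have hf : ∀ g, f (HNNExtension.of g) = g := fun g => by simp [f]
  refine ⟨N.comap f, hN.comap f, ?_, ?_⟩
  · rw [Subgroup.index_comap_of_surjective N (fun g => ⟨_, hf g⟩)]
    exact hk
  · intro g hg
    have h : f (HNNExtension.of g) ∈ N := hg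
    rwa [hf] at h
end

section
/- Let p be a prime number and let G be a right-angled Artin group with finite generating set X, i.e., G is the group presented by ⟨X | [x,y] = 1 for all (x,y) ∈ Σ⟩ for some subset Σ of X × X. Then for every subset X' of X, the subgroup ⟨X'⟩ of G generated by the images of the elements of X' is topologically p-embedded in G: for every normal subgroup N of ⟨X'⟩ of index a power of p there exists a normal subgroup M of G of index a power of p with M ∩ ⟨X'⟩ ≤ N. -/
open scoped commutatorElement

/-- In a right-angled Artin group `⟨X | [x,y] = 1 for (x,y) ∈ S⟩`, the subgroup generated
by the images of any subset `X'` of the generating set `X` is topologically `p`-embedded. -/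
theorem raag_parabolic_top_p_embedded (p : ℕ) (hp : p.Prime) (X : Type*) [Finite X]
    (S : Set (X × X)) (rels : Set (FreeGroup X))
    (hrels : rels = (fun q : X × X => ⁅FreeGroup.of q.1, FreeGroup.of q.2⁆) '' S)
    (X' : Set X) :
    TopPEmbedded p (Subgroup.closure ((PresentedGroup.of (rels := rels)) '' X')) := by
  classical
  set H : Subgroup (PresentedGroup rels) :=
    Subgroup.closure ((PresentedGroup.of (rels := rels)) '' X') with hH
  intro N hN hk
  let f : X → H := fun x => if hx : x ∈ X' then
    ⟨PresentedGroup.of x, Subgroup.subset_closure ⟨x, hx, rfl⟩⟩ else 1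
  have hf : ∀ r ∈ rels, FreeGroup.lift f r = 1 := by
    intro r hr
    have hr' := hr
    rw [hrels] at hr'
    obtain ⟨⟨a, b⟩, hab, rfl⟩ := hr'
    have hG : ⁅(PresentedGroup.of a : PresentedGroup rels),
        (PresentedGroup.of b : PresentedGroup rels)⁆ = 1 := by
      have := PresentedGroup.one_of_mem hr
      simp only [map_commutatorElement] at this
      exact this
    simp only [map_commutatorElement, FreeGroup.lift_apply_of]
    by_cases ha : a ∈ X'
    · by_cases hb : b ∈ X'
      · apply Subtype.ext
        simpa [f, ha, hb, commutatorElement_def] using hG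
      · simp [f, hb]
    · simp [f, ha]
  let φ : PresentedGroup rels →* H := PresentedGroup.toGroup hf
  have hφ : ∀ g (hg : g ∈ H), φ g = ⟨g, hg⟩ := by
    intro g hg
    apply Subtype.ext
    change (H.subtype.comp φ) g = (MonoidHom.id _) g
    refine MonoidHom.eqOn_closure (s := (PresentedGroup.of (rels := rels)) '' X') ?_ hg
    rintro _ ⟨x, hx, rfl⟩
    simp [φ, f, hx]
  have hs : Function.Surjective φ := fun h => ⟨h, hφ h h.2⟩
  refine ⟨N.comap φ, inferInstance, ?_, ?_⟩
  · rwa [Subgroup.index_comap_of_surjective _ hs]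
  · intro h hh
    rw [Subgroup.mem_subgroupOf, Subgroup.mem_comap, hφ h h.2] at hh
    exact hh
end

section
/- Let p be a prime number, let G be a finite p-group, and let H be a subgroup of G. Let Γ = ⟨G, t | t⁻¹ht = h for all h ∈ H⟩ be the HNN extension of G with both associated subgroups equal to H and with the identity isomorphism. Then Γ is residually p-finite. -/
/-- A group is residually `p`-finite if every nontrivial element has nontrivial image
under some homomorphism to a finite `p`-group. -/
def ResiduallyPFinite (p : ℕ) (G : Type*) [Group G] : Prop :=
  ∀ g : G, g ≠ 1 → ∃ (P : Type) (_ : Group P) (f : G →* P),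
    (∃ k : ℕ, Nat.card P = p ^ k) ∧ f g ≠ 1

open Monoid

/-- Upper unitriangular invertible matrices. -/
def UniTri (n : ℕ) (R : Type) [CommRing R] [Finite R] :
    Subgroup (Matrix (Fin n) (Fin n) R)ˣ :=
  let S : Submonoid (Matrix (Fin n) (Fin n) R)ˣ :=
    { carrier := {u | (∀ i j, j < i → u.1 i j = 0) ∧ ∀ i, u.1 i i = 1}
      one_mem' := by
        refine ⟨fun i j h => ?_, fun i => ?_⟩
        · simp [Matrix.one_apply_ne h.ne']
        · simp
      mul_mem' := by
        rintro u v ⟨hu, hu1⟩ ⟨hv, hv1⟩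
        refine ⟨fun i j h => ?_, fun i => ?_⟩
        · rw [Units.val_mul, Matrix.mul_apply]
          refine Finset.sum_eq_zero fun k _ => ?_
          rcases lt_or_ge k i with hk | hk
          · rw [hu _ _ hk, zero_mul]
          · rw [hv _ _ (h.trans_le hk), mul_zero]
        · rw [Units.val_mul, Matrix.mul_apply, Finset.sum_eq_single i]
          · rw [hu1, hv1, one_mul]
          · intro k _ hk
            rcases lt_or_gt_of_ne hk with hk | hk
            · rw [hu _ _ hk, zero_mul]
            · rw [hv _ _ hk, mul_zero]
          · simp }
  { S with
    inv_mem' := by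
      intro u hu
      have hfin : IsOfFinOrder u := isOfFinOrder_of_finite u
      have h : u⁻¹ = u ^ (orderOf u - 1) := by
        rw [inv_eq_iff_mul_eq_one, ← pow_succ', Nat.sub_add_cancel hfin.orderOf_pos, pow_orderOf_eq_one]
      rw [h]
      exact S.pow_mem hu _ }

theorem mem_uniTri {n : ℕ} {R : Type} [CommRing R] [Finite R] (u : (Matrix (Fin n) (Fin n) R)ˣ) :
    u ∈ UniTri n R ↔ (∀ i j, j < i → u.1 i j = 0) ∧ ∀ i, u.1 i i = 1 := Iff.rfl

theorem card_uniTri (n : ℕ) (R : Type) [CommRing R] [Finite R] :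
    ∃ k, Nat.card (UniTri n R) = Nat.card R ^ k := by
  classical
  let f : UniTri n R → ({q : Fin n × Fin n // q.1 < q.2} → R) := fun u q => u.1.1 q.1.1 q.1.2
  have hf : Function.Bijective f := by
    constructor
    · intro u v h
      apply Subtype.ext
      apply Units.ext
      ext i j
      obtain ⟨hu, hu1⟩ := (mem_uniTri _).1 u.2
      obtain ⟨hv, hv1⟩ := (mem_uniTri _).1 v.2
      rcases lt_trichotomy i j with hij | rfl | hij
      · exact congrFun h ⟨(i, j), hij⟩
      · rw [hu1, hv1]
      · rw [hu _ _ hij, hv _ _ hij]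
    · intro g
      let M : Matrix (Fin n) (Fin n) R := fun i j =>
        if h : i < j then g ⟨(i, j), h⟩ else if i = j then 1 else 0
      have h0 : ∀ i j, j < i → M i j = 0 := by
        intro i j h
        simp [M, h.not_gt, h.ne']
      have h1 : ∀ i, M i i = 1 := by
        intro i
        simp [M]
      have hdet : M.det = 1 := by
        rw [Matrix.det_of_isUpperTriangular (fun i j h => h0 i j h)]
        simp [h1]
      have hu : IsUnit M := by
        rw [Matrix.isUnit_iff_isUnit_det, hdet]
        exact isUnit_one
      obtain ⟨u, hu⟩ := hu
      refine ⟨⟨u, (mem_uniTri _).2 ?_⟩, ?_⟩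
      · rw [hu]; exact ⟨h0, h1⟩
      · ext ⟨⟨i, j⟩, h⟩
        have : i < j := h
        simp [f, hu, M, this]
  rw [Nat.card_congr (Equiv.ofBijective f hf), Nat.card_fun]
  exact ⟨_, rfl⟩

section magnus
variable {X : Type} (l : List (Σ _ : X, Multiplicative ℤ)) (R : Type) [CommRing R]

open Classical in
/-- the nilpotent matrix attached to a letter -/
noncomputable def nilMat (x : X) : Matrix (Fin (l.length + 1)) (Fin (l.length + 1)) R :=
  fun i j => if (i : ℕ) + 1 = j ∧ (l[(i : ℕ)]?).map Sigma.fst = some x then 1 else 0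

variable (hl : l.IsChain fun a b => a.1 ≠ b.1)

include hl in
theorem nilMat_sq (x : X) : nilMat l R x * nilMat l R x = 0 := by
  ext i k
  rw [Matrix.mul_apply, Matrix.zero_apply]
  refine Finset.sum_eq_zero fun j _ => ?_
  unfold nilMat
  by_contra hne
  have h1 := left_ne_zero_of_mul hne
  have h2 := right_ne_zero_of_mul hne
  simp only [ne_eq, ite_eq_right_iff, not_forall] at h1 h2
  obtain ⟨⟨h1, h1'⟩, -⟩ := h1
  obtain ⟨⟨h2, h2'⟩, -⟩ := h2
  rw [Option.map_eq_some_iff] at h1' h2'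
  obtain ⟨a, ha, ha'⟩ := h1'
  obtain ⟨b, hb, hb'⟩ := h2'
  rw [← h1] at hb
  obtain ⟨hi, rfl⟩ := List.getElem?_eq_some_iff.1 ha
  obtain ⟨hj, rfl⟩ := List.getElem?_eq_some_iff.1 hb
  exact List.isChain_iff_getElem.1 hl _ hj (ha'.trans hb'.symm)

/-- the one-parameter subgroup of a letter -/
noncomputable def oneParam (x : X) :
    Multiplicative ℤ →* Matrix (Fin (l.length + 1)) (Fin (l.length + 1)) R where
  toFun e := 1 + ((Multiplicative.toAdd e : ℤ) : R) • nilMat l R x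
  map_one' := by simp
  map_mul' a b := by
    simp only [toAdd_mul, Int.cast_add, add_mul, mul_add, one_mul, mul_one, smul_mul_assoc,
      mul_smul_comm, nilMat_sq l R hl, smul_zero, add_smul]
    abel_nf

theorem oneParam_mem [Finite R] (x : X) (e : Multiplicative ℤ) :
    (oneParam l R hl x).toHomUnits e ∈ UniTri (l.length + 1) R := by
  rw [mem_uniTri]
  refine ⟨fun i j h => ?_, fun i => ?_⟩
  · have h' : (j : ℕ) < i := h
    have : ¬ ((i : ℕ) + 1 = j) := by omega
    simp [oneParam, nilMat, this, Matrix.one_apply_ne h.ne']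
  · simp [oneParam, nilMat]

theorem prod_entry (k : ℕ) (hk : k ≤ l.length) :
    (∀ j : Fin (l.length + 1), k < j →
      ((l.take k).map fun a => oneParam l R hl a.1 a.2).prod 0 j = 0) ∧
    (∀ j : Fin (l.length + 1), k = j →
      ((l.take k).map fun a => oneParam l R hl a.1 a.2).prod 0 j =
      ((((l.take k).map fun a => (Multiplicative.toAdd a.2 : ℤ)).prod : ℤ) : R)) := by
  induction k with
  | zero =>
    constructor
    · intro j hj
      have : (0 : Fin (l.length + 1)) ≠ j := by
        rintro rfl; simp at hj
      simp [Matrix.one_apply_ne this]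
    · intro j hj
      have : j = 0 := Fin.ext hj.symm
      simp [this]
  | succ k ih =>
    obtain ⟨ih0, ih1⟩ := ih (by omega)
    have hk' : k < l.length := by omega
    rw [List.take_succ_eq_append_getElem hk']
    simp only [List.map_append, List.prod_append, List.map_cons, List.map_nil, List.prod_singleton]
    set P := ((l.take k).map fun a => oneParam l R hl a.1 a.2).prod with hP
    have key : ∀ j : Fin (l.length + 1), (P * oneParam l R hl l[k].1 l[k].2) 0 j =
        P 0 j + ((Multiplicative.toAdd l[k].2 : ℤ) : R) * ∑ i, P 0 i * nilMat l R l[k].1 i j := by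
      intro j
      change (P * (1 + ((Multiplicative.toAdd l[k].2 : ℤ) : R) • nilMat l R l[k].1)) 0 j = _
      rw [mul_add, mul_one, mul_smul_comm, Matrix.add_apply, Matrix.smul_apply, Matrix.mul_apply,
        smul_eq_mul]
    constructor
    · intro j hj
      rw [key, ih0 j (by omega), Finset.sum_eq_zero]
      · simp
      · intro i _
        by_cases hij : (i : ℕ) + 1 = j
        · rw [ih0 i (by omega), zero_mul]
        · simp [nilMat, hij]
    · intro j hj
      rw [key, ih0 j (by omega), Finset.sum_eq_single ⟨k, by omega⟩]
      · rw [ih1 ⟨k, by omega⟩ rfl]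
        simp [nilMat, hj, hk', mul_comm]
      · intro i _ hi
        have : ¬ ((i : ℕ) + 1 = j) := by
          intro h; apply hi; apply Fin.ext; simp; omega
        simp [nilMat, this]
      · simp

end magnus

theorem coprodI_resid (p : ℕ) (hp : p.Prime) (X : Type) :
    ResiduallyPFinite p (CoprodI (fun _ : X => Multiplicative ℤ)) := by
  classical
  intro g hg
  let w := CoprodI.Word.equiv g
  have hwg : w.prod = g := CoprodI.Word.equiv.symm_apply_apply g
  let l := w.toList
  have hl : l.IsChain fun a b => a.1 ≠ b.1 := w.chain_ne
  have hne : l ≠ [] := by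
    intro h
    apply hg
    rw [← hwg, CoprodI.Word.prod]
    change (l.map _).prod = 1
    rw [h]; rfl
  let E : ℤ := (l.map fun a => (Multiplicative.toAdd a.2 : ℤ)).prod
  have hE : E ≠ 0 := by
    intro h
    rw [List.prod_eq_zero_iff, List.mem_map] at h
    obtain ⟨a, ha, h⟩ := h
    exact w.ne_one a ha (Multiplicative.toAdd.injective h)
  let q := p ^ E.natAbs
  have hq : E.natAbs < q := Nat.lt_pow_self hp.one_lt
  have : NeZero q := ⟨by omega⟩
  let R := ZMod q
  have hER : (E : R) ≠ 0 := by
    intro h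
    have h' := (ZMod.intCast_zmod_eq_zero_iff_dvd E q).1 h
    have h2 := Int.natCast_dvd.1 h'
    have h3 := Nat.le_of_dvd (Int.natAbs_pos.2 hE) h2
    omega
  let n := l.length + 1
  let φ : CoprodI (fun _ : X => Multiplicative ℤ) →* UniTri n R :=
    CoprodI.lift fun x => ((oneParam l R hl x).toHomUnits).codRestrict _ (oneParam_mem l R hl x)
  refine ⟨UniTri n R, inferInstance, φ, ?_, ?_⟩
  · obtain ⟨k, hk⟩ := card_uniTri n R
    exact ⟨E.natAbs * k, by rw [hk, Nat.card_zmod, pow_mul]⟩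
  · intro h
    have h1 : ((φ g).1.1 : Matrix (Fin n) (Fin n) R) =
        (l.map fun a => oneParam l R hl a.1 a.2).prod := by
      rw [← hwg, CoprodI.Word.prod]
      change (((Units.coeHom _).comp (UniTri n R).subtype).comp φ) _ = _
      rw [map_list_prod, List.map_map]
      congr 1
    obtain ⟨-, h2⟩ := prod_entry l R hl l.length le_rfl
    have h3 := h2 (Fin.last _) rfl
    rw [List.take_length, ← h1, h] at h3
    apply hER
    rw [← h3]
    have : (0 : Fin n) ≠ Fin.last _ := by
      intro h
      have := congrArg Fin.val h
      simp at this
      exact hne (List.length_eq_zero_iff.1 this.symm)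
    simp [Matrix.one_apply_ne this]

theorem freeGroup_resid (p : ℕ) (hp : p.Prime) (X : Type) :
    ResiduallyPFinite p (FreeGroup X) := by
  intro g hg
  let a : FreeGroup X →* CoprodI (fun _ : X => Multiplicative ℤ) :=
    FreeGroup.lift fun x => CoprodI.of (i := x) (Multiplicative.ofAdd 1)
  let b : CoprodI (fun _ : X => Multiplicative ℤ) →* FreeGroup X :=
    CoprodI.lift fun x => zpowersHom _ (FreeGroup.of x)
  have hba : b.comp a = MonoidHom.id _ := by
    ext x
    simp [a, b]
  have hag : a g ≠ 1 := by
    intro h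
    apply hg
    have := DFunLike.congr_fun hba g
    simpa [h] using this.symm
  obtain ⟨P, _, f, hP, hf⟩ := coprodI_resid p hp X (a g) hag
  exact ⟨P, _, f.comp a, hP, hf⟩

theorem semidirect_resid (p : ℕ) (F G : Type) [Group F] [Group G] [Finite G]
    (hG : ∃ k : ℕ, Nat.card G = p ^ k) (α : G →* MulAut F) (hF : ResiduallyPFinite p F) :
    ResiduallyPFinite p (F ⋊[α] G) := by
  intro g hg
  by_cases h : g.right = 1
  · have hl : g.left ≠ 1 := fun h' => hg (SemidirectProduct.ext h' h)
    obtain ⟨P, _, f, ⟨m, hP⟩, hf⟩ := hF _ hl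
    let f1 : F →* RegularWreathProduct P G :=
      { toFun := fun w => ⟨fun x => f (α x⁻¹ w), 1⟩
        map_one' := by ext <;> simp
        map_mul' := fun a b => by ext <;> simp }
    let θ : F ⋊[α] G →* RegularWreathProduct P G :=
      SemidirectProduct.lift f1 RegularWreathProduct.inl (by
        intro g
        ext w x
        · have : α (g⁻¹ * x)⁻¹ w = α x⁻¹ (α g w) := by
            rw [mul_inv_rev, inv_inv, map_mul]; rfl
          have h2 : (f1 (α g w)).left x = f (α (g⁻¹ * x)⁻¹ w) := by rw [this]; rfl
          change (f1 (α g w)).left x = _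
          rw [h2]
          simp [f1, -map_inv, -map_mul, -mul_inv_rev]
        · simp [f1])
    refine ⟨RegularWreathProduct P G, inferInstance, θ, ?_, ?_⟩
    · obtain ⟨k, hk⟩ := hG
      rw [RegularWreathProduct.card, hP, hk, ← pow_mul, ← pow_add]
      exact ⟨_, rfl⟩
    · intro hh
      apply hf
      have := congrFun (congrArg RegularWreathProduct.left hh) 1
      have h2 : (1 : MulAut F).symm g.left = g.left := rfl
      simpa [θ, SemidirectProduct.lift, f1, h2] using this
  · exact ⟨G, inferInstance, SemidirectProduct.rightHom, hG, h⟩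

theorem HNN_of_finite_p_group_residually_p_finite (p : ℕ) (hp : p.Prime)
    (G : Type) [Group G] [Finite G] (hG : ∃ k : ℕ, Nat.card G = p ^ k)
    (H : Subgroup G) :
    ResiduallyPFinite p (HNNExtension G H H (MulEquiv.refl H)) := by
  let α : G →* MulAut (FreeGroup (G ⧸ H)) :=
    { toFun := fun g => FreeGroup.freeGroupCongr (MulAction.toPerm g)
      map_one' := by
        apply MulEquiv.toMonoidHom_injective
        ext x; simp
      map_mul' := fun a b => by
        apply MulEquiv.toMonoidHom_injective
        ext x; simp [mul_smul] }
  have hα : ∀ g x, α g (FreeGroup.of x) = FreeGroup.of (g • x) := fun g x => by simp [α]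
  let a : HNNExtension G H H (MulEquiv.refl H) →* FreeGroup (G ⧸ H) ⋊[α] G :=
    HNNExtension.lift SemidirectProduct.inr
      (SemidirectProduct.inl (FreeGroup.of ((1 : G) : G ⧸ H))) (by
        intro h
        have hh : (h : G) • ((1 : G) : G ⧸ H) = ((1 : G) : G ⧸ H) := by
          change (((h : G) * 1 : G) : G ⧸ H) = _
          rw [QuotientGroup.eq]; simp
        ext <;> simp [hα, hh])
  let c : G ⧸ H → HNNExtension G H H (MulEquiv.refl H) := fun x =>
    Quotient.liftOn' x
      (fun g => HNNExtension.of g * HNNExtension.t * HNNExtension.of g⁻¹) (by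
        intro g g' h
        rw [QuotientGroup.leftRel_apply] at h
        have := HNNExtension.t_mul_of (φ := MulEquiv.refl H) ⟨_, h⟩
        simp only [MulEquiv.refl_apply, map_mul, map_inv] at this ⊢
        have h2 : (HNNExtension.of g' : HNNExtension G H H (MulEquiv.refl H)) =
          HNNExtension.of g * ((HNNExtension.of g)⁻¹ * HNNExtension.of g') := by group
        set y := (HNNExtension.of g : HNNExtension G H H (MulEquiv.refl H))⁻¹ * HNNExtension.of g'
        rw [h2, mul_assoc (HNNExtension.of g) y, ← this]
        group)
  let b : FreeGroup (G ⧸ H) ⋊[α] G →* HNNExtension G H H (MulEquiv.refl H) :=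
    SemidirectProduct.lift (FreeGroup.lift c) HNNExtension.of (by
      intro g
      ext x
      induction x using QuotientGroup.induction_on with
      | H x =>
        have : g • (x : G ⧸ H) = ((g * x : G) : G ⧸ H) := rfl
        simp only [MonoidHom.comp_apply, MulEquiv.coe_toMonoidHom, hα, FreeGroup.lift_apply_of, this,
          MulAut.conj_apply]
        change HNNExtension.of (g * x) * HNNExtension.t * HNNExtension.of (g * x)⁻¹ =
          HNNExtension.of g * (HNNExtension.of x * HNNExtension.t * HNNExtension.of x⁻¹) *
            (HNNExtension.of g)⁻¹
        simp only [map_mul, map_inv]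
        group)
  have hba : b.comp a = MonoidHom.id _ := by
    apply HNNExtension.hom_ext
    · ext g
      simp [a, b]
    · have : c ((1 : G) : G ⧸ H) = HNNExtension.t := by
        change HNNExtension.of (1 : G) * HNNExtension.t * HNNExtension.of (1 : G)⁻¹ = _
        simp
      simp [a, b, this]
  intro g hg
  have hag : a g ≠ 1 := by
    intro h
    apply hg
    have := DFunLike.congr_fun hba g
    simpa [h] using this.symm
  obtain ⟨P, _, f, hP, hf⟩ := semidirect_resid p _ G hG α (freeGroup_resid p hp _) (a g) hag
  exact ⟨P, _, f.comp a, hP, hf⟩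
end

section
/- Let p be a prime number, let G be a group, and let H be a subgroup of G that is closed in the pro-p topology on G. Let Γ = ⟨G, t | t⁻¹ht = h for all h ∈ H⟩ be the HNN extension of G with both associated subgroups equal to H and with the identity isomorphism. If G is residually p-finite, then Γ is residually p-finite. -/
open scoped Pointwise
/-- A subgroup `H` of `G` is closed in the pro-`p` topology on `G` if for every `g ∉ H`
there is a normal subgroup `N` of `G` of `p`-power index with `g ∉ NH`. -/
def ClosedInProP (p : ℕ) {G : Type*} [Group G] (H : Subgroup G) : Prop :=
  ∀ g : G, g ∉ H → ∃ N : Subgroup G, N.Normal ∧ (∃ k : ℕ, N.index = p ^ k) ∧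
    g ∉ (N : Set G) * (H : Set G)

theorem aux_freeWord {X : Type} (u : FreeGroup X) :
    ∃ l : List (X × ℤ), (∀ a ∈ l, a.2 ≠ 0) ∧ l.IsChain (fun a b => a.1 ≠ b.1) ∧
      u = (l.map fun a => FreeGroup.of a.1 ^ a.2).prod := by
  classical
  let F : FreeGroup X →* Monoid.CoprodI (fun _ : X => Multiplicative ℤ) :=
    FreeGroup.lift (fun x => Monoid.CoprodI.of (i := x) (Multiplicative.ofAdd 1))
  let E : Monoid.CoprodI (fun _ : X => Multiplicative ℤ) →* FreeGroup X :=
    Monoid.CoprodI.lift (fun x => zpowersHom _ (FreeGroup.of x))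
  have hEF : E.comp F = MonoidHom.id _ := by
    ext x
    simp [E, F]
  let w := Monoid.CoprodI.Word.equiv (F u)
  have hw : w.prod = F u := Monoid.CoprodI.Word.equiv.symm_apply_apply (F u)
  refine ⟨w.toList.map (fun a => (a.1, a.2.toAdd)), ?_, ?_, ?_⟩
  · intro a ha
    simp only [List.mem_map] at ha
    obtain ⟨b, hb, rfl⟩ := ha
    intro h
    exact w.ne_one b hb (Multiplicative.toAdd.injective h)
  · rw [List.isChain_map]
    exact w.chain_ne
  · have h1 : u = E (F u) := (DFunLike.congr_fun hEF u).symm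
    rw [h1, ← hw, Monoid.CoprodI.Word.prod, map_list_prod]
    simp [E, Function.comp_def, zpowersHom_apply]

theorem aux_pow {A : Type} [Ring A] (p : ℕ) (hp : p.Prime) (k s : ℕ) (hk : ((p : A) ^ (k+1)) = 0)
    (T : A) (hT : T ^ p ^ s = 0) : (1 + T) ^ p ^ (s + k) = 1 := by
  have h1 : ((p : Polynomial ℤ)) ∣ (1 + Polynomial.X) ^ p ^ s - (1 + Polynomial.X ^ p ^ s) := by
    obtain ⟨r, hr⟩ := exists_add_pow_prime_pow_eq hp (1 : Polynomial ℤ) Polynomial.X s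
    rw [hr]
    refine ⟨Polynomial.X * r, ?_⟩
    simp
    ring
  obtain ⟨q, hq⟩ := dvd_sub_pow_of_dvd_sub h1 k
  have h2 := congrArg (Polynomial.aeval T) hq
  simp only [map_sub, map_pow, map_add, map_one, Polynomial.aeval_X, map_mul, map_natCast, hk, hT,
    zero_mul, add_zero, one_pow] at h2
  rw [pow_add, pow_mul]
  exact sub_eq_zero.mp h2

/-- unitriangular matrices -/
def auxS (n : ℕ) (R : Type) [CommRing R] : Submonoid (Matrix (Fin n) (Fin n) R) where
  carrier := {A | ∀ i j, j ≤ i → A i j = (1 : Matrix (Fin n) (Fin n) R) i j}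
  one_mem' := by intro i j _; rfl
  mul_mem' := by
    intro A B hA hB i j hij
    rw [Matrix.mul_apply]
    rw [Finset.sum_eq_single i]
    · rw [hA i i le_rfl, hB i j hij]; simp
    · intro k _ hk
      rcases lt_or_gt_of_ne hk with h | h
      · rw [hA i k h.le, Matrix.one_apply_ne hk.symm, zero_mul]
      · rw [hB k j (hij.trans h.le), Matrix.one_apply_ne (hij.trans_lt h).ne', mul_zero]
    · simp

theorem auxS_nil (n : ℕ) (R : Type) [CommRing R] (T : Matrix (Fin n) (Fin n) R)
    (hT : ∀ i j, j ≤ i → T i j = 0) (m : ℕ) (i j : Fin n) (h : (j : ℕ) < i + m) :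
    (T ^ m) i j = 0 := by
  induction m generalizing j with
  | zero =>
    rw [pow_zero, Matrix.one_apply_ne]
    rintro rfl
    omega
  | succ m ih =>
    rw [pow_succ, Matrix.mul_apply]
    refine Finset.sum_eq_zero fun k _ => ?_
    by_cases hk : (k : ℕ) < i + m
    · rw [ih k hk, zero_mul]
    · rw [hT k j (by rw [Fin.le_def]; omega), mul_zero]

theorem auxS_pgroup (n p k : ℕ) (hp : p.Prime) :
    IsPGroup p (auxS n (ZMod (p ^ (k+1))))ˣ := by
  intro u
  refine ⟨n + k, ?_⟩
  ext1
  apply Subtype.ext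
  have hu := u.1.2
  set A : Matrix (Fin n) (Fin n) (ZMod (p ^ (k+1))) := u.1.1 with hA
  have hT : ∀ i j, j ≤ i → (A - 1) i j = 0 := by
    intro i j hij
    rw [Matrix.sub_apply, hu i j hij, sub_self]
  have h0 : (A - 1) ^ p ^ n = 0 := by
    ext i j
    apply auxS_nil n _ _ hT
    have := Nat.lt_pow_self hp.one_lt (n := n)
    omega
  have := aux_pow (A := Matrix (Fin n) (Fin n) (ZMod (p ^ (k+1)))) p hp k n ?_ (A - 1) h0
  · rw [add_sub_cancel] at this
    simpa using this
  · have h3 : ((p ^ (k+1) : ℕ) : ZMod (p ^ (k+1))) = 0 := ZMod.natCast_self _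
    have h4 := congrArg (algebraMap (ZMod (p ^ (k+1))) (Matrix (Fin n) (Fin n) (ZMod (p ^ (k+1))))) h3
    rw [map_natCast, map_zero] at h4
    exact_mod_cast h4

/-- The hom `m ↦ 1 + m N` for `N² = 0` strictly triangular. -/
def auxHom (n : ℕ) (R : Type) [CommRing R] (N : Matrix (Fin n) (Fin n) R)
    (hN : ∀ i j, j ≤ i → N i j = 0) (hN2 : N * N = 0) : Multiplicative ℤ →* (auxS n R)ˣ :=
  MonoidHom.toHomUnits
  { toFun := fun m => ⟨1 + m.toAdd • N, by
      intro i j hij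
      rw [Matrix.add_apply, Matrix.smul_apply, hN i j hij, smul_zero, add_zero]⟩
    map_one' := by apply Subtype.ext; simp
    map_mul' := by
      intro a b
      apply Subtype.ext
      simp only [toAdd_mul, Submonoid.coe_mul, mul_add, add_mul, mul_one, one_mul, add_smul,
        smul_mul_assoc, mul_smul_comm, hN2, smul_zero, add_zero]
      abel }

theorem auxHom_coe (n : ℕ) (R : Type) [CommRing R] (N : Matrix (Fin n) (Fin n) R)
    (hN : ∀ i j, j ≤ i → N i j = 0) (hN2 : N * N = 0) (m : ℤ) :
    ((auxHom n R N hN hN2 (Multiplicative.ofAdd m)).1.1) = 1 + m • N := rfl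

theorem aux_free_sep {Y : Type} (p : ℕ) (hp : p.Prime) (l : List (Y × ℤ)) (hl : l ≠ [])
    (h0 : ∀ a ∈ l, a.2 ≠ 0) (hc : l.IsChain (fun a b => a.1 ≠ b.1)) :
    ∃ (U : Type) (_ : Group U) (f : FreeGroup Y →* U), (∃ k : ℕ, Nat.card U = p ^ k) ∧
      f (l.map fun a => FreeGroup.of a.1 ^ a.2).prod ≠ 1 := by
  classical
  have : Fact p.Prime := ⟨hp⟩
  set r := l.length with hr
  set M : ℤ := (l.map Prod.snd).prod with hM
  have hM0 : M ≠ 0 := by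
    rw [hM]
    apply List.prod_ne_zero
    intro h
    rw [List.mem_map] at h
    obtain ⟨a, ha, h⟩ := h
    exact h0 a ha h
  set k := M.natAbs
  let R := ZMod (p ^ (k+1))
  have : NeZero (p ^ (k+1)) := ⟨(pow_pos hp.pos _).ne'⟩
  have hMR : (M : R) ≠ 0 := by
    intro h
    rw [ZMod.intCast_zmod_eq_zero_iff_dvd] at h
    have h1 := Int.natAbs_dvd_natAbs.mpr h
    rw [Int.natAbs_natCast] at h1
    have h2 := Nat.le_of_dvd (Int.natAbs_pos.mpr hM0) h1
    have h3 := Nat.lt_pow_self hp.one_lt (n := k+1)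
    change _ ≤ k at h2
    omega
  let N : Y → Matrix (Fin (r+1)) (Fin (r+1)) R := fun c => Matrix.of fun i j =>
    if (i : ℕ) + 1 = j ∧ (l[(i : ℕ)]?).map Prod.fst = some c then 1 else 0
  have hN : ∀ c, ∀ i j, j ≤ i → N c i j = 0 := by
    intro c i j hij
    simp only [N, Matrix.of_apply]
    rw [if_neg]
    rintro ⟨h, -⟩
    rw [Fin.le_def] at hij
    omega
  have hN2 : ∀ c, N c * N c = 0 := by
    intro c
    ext i j
    rw [Matrix.mul_apply, Matrix.zero_apply]
    refine Finset.sum_eq_zero fun q _ => ?_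
    simp only [N, Matrix.of_apply]
    rw [ite_mul, zero_mul, one_mul]
    split_ifs with h1 h2
    · exfalso
      obtain ⟨h1, h1'⟩ := h1
      obtain ⟨h2, h2'⟩ := h2
      rw [← h1] at h2'
      rw [Option.map_eq_some_iff] at h1' h2'
      obtain ⟨a, ha, ha'⟩ := h1'
      obtain ⟨b, hb, hb'⟩ := h2'
      rw [List.getElem?_eq_some_iff] at ha hb
      obtain ⟨hia, ha⟩ := ha
      obtain ⟨hib, hb⟩ := hb
      have := List.isChain_iff_getElem.mp hc i hib
      rw [ha, hb, ha', hb'] at this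
      exact this rfl
    · rfl
    · rfl
  let ψ : Y → Multiplicative ℤ →* (auxS (r+1) R)ˣ := fun c => auxHom (r+1) R (N c) (hN c) (hN2 c)
  let f : FreeGroup Y →* (auxS (r+1) R)ˣ := FreeGroup.lift (fun c => ψ c (Multiplicative.ofAdd 1))
  have hf : ∀ c m, f (FreeGroup.of c ^ m) = ψ c (Multiplicative.ofAdd m) := by
    intro c m
    simp only [f, map_zpow, FreeGroup.lift_apply_of]
    rw [← map_zpow, ← ofAdd_zsmul]
    simp
  refine ⟨(auxS (r+1) R)ˣ, inferInstance, f, ?_, ?_⟩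
  · have : Finite R := inferInstanceAs (Finite (ZMod (p ^ (k+1))))
    exact IsPGroup.iff_card.mp (auxS_pgroup (r+1) p k hp)
  · have key : ∀ s : ℕ, s ≤ r → ∀ j : Fin (r+1), s ≤ j →
        (f ((l.map fun a => FreeGroup.of a.1 ^ a.2).take s).prod).1.1 0 j
          = if (j : ℕ) = s then ((((l.map Prod.snd).take s).prod : ℤ) : R) else 0 := by
      intro s
      induction s with
      | zero =>
        intro _ j _
        simp only [List.take_zero, List.prod_nil, map_one, Units.val_one, OneMemClass.coe_one,
          Int.cast_one, Matrix.one_apply]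
        congr 1
        rw [Fin.ext_iff, Fin.val_zero]
        exact propext eq_comm
      | succ s ih =>
        intro hs j hj
        rw [List.prod_take_succ _ _ (by simp; omega), List.prod_take_succ _ _ (by simp; omega),
          map_mul, List.getElem_map, List.getElem_map, hf, Units.val_mul, Submonoid.coe_mul,
          auxHom_coe, mul_add, mul_one, Matrix.add_apply, ih (by omega) j (by omega),
          if_neg (by omega), zero_add, Matrix.mul_apply]
        rw [Finset.sum_eq_single (⟨(j : ℕ) - 1, by omega⟩ : Fin (r+1))]
        · rw [ih (by omega) _ (by simp; omega)]
          by_cases hjs : (j : ℕ) = s + 1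
          · have e : (j : ℕ) - 1 = s := by omega
            simp only [Matrix.smul_apply, N, Matrix.of_apply, hjs]
            simp [List.getElem?_eq_getElem (show s < l.length by omega)]
          · rw [if_neg (by simp; omega), if_neg hjs, zero_mul]
        · intro q _ hq
          simp only [Matrix.smul_apply, N, Matrix.of_apply]
          rw [if_neg, smul_zero, mul_zero]
          rintro ⟨h, -⟩
          apply hq
          ext
          simp
          omega
        · simp
    intro h
    have := key r le_rfl (Fin.last r) (by simp)
    rw [List.take_of_length_le (by simp [hr]), List.take_of_length_le (by simp [hr]), h] at this
    have hr0 : 0 < r := List.length_pos_iff.mpr hl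
    simp only [Units.val_one, OneMemClass.coe_one, Fin.val_last, if_true] at this
    rw [Matrix.one_apply_ne (by rw [Ne, Fin.ext_iff]; simp; omega)] at this
    exact hMR this.symm

theorem aux_sep (p : ℕ) (hp : p.Prime) {G : Type} [Group G] (H : Subgroup G)
    (hH : ClosedInProP p H) (gs : List G) :
    ∃ N : Subgroup G, N.Normal ∧ (∃ k : ℕ, N.index = p ^ k) ∧
      ∀ g ∈ gs, g ∉ H → g ∉ (N : Set G) * (H : Set G) := by
  induction gs with
  | nil => exact ⟨⊤, inferInstance, ⟨0, by simp⟩, by simp⟩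
  | cons g gs ih =>
    obtain ⟨N, hN, ⟨a, ha⟩, h⟩ := ih
    by_cases hg : g ∈ H
    · refine ⟨N, hN, ⟨a, ha⟩, ?_⟩
      intro x hx hxH
      rcases List.mem_cons.mp hx with rfl | hx
      · exact absurd hg hxH
      · exact h x hx hxH
    · obtain ⟨M, hM, ⟨b, hb⟩, h'⟩ := hH g hg
      refine ⟨M ⊓ N, inferInstance, ?_, ?_⟩
      · have h1 := Subgroup.relIndex_mul_index (inf_le_right : M ⊓ N ≤ N)
        rw [Subgroup.inf_relIndex_right] at h1
        have h2 := Subgroup.relIndex_dvd_index_of_normal M N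
        have h3 : (M ⊓ N).index ∣ p ^ (b + a) := by
          rw [← h1, pow_add, ← ha, ← hb]
          exact mul_dvd_mul_right h2 _
        obtain ⟨c, -, hc⟩ := (Nat.dvd_prime_pow hp).mp h3
        exact ⟨c, hc⟩
      · intro x hx hxH hmem
        obtain ⟨y, hy, z, hz, rfl⟩ := hmem
        rcases List.mem_cons.mp hx with hx | hx
        · exact h' (hx ▸ Set.mul_mem_mul hy.1 hz)
        · exact h _ hx hxH (Set.mul_mem_mul hy.2 hz)

section
variable {G : Type} [Group G] (H : Subgroup G)

/-- The free subgroup. -/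
noncomputable def auxJ : FreeGroup (G ⧸ H) →* HNNExtension G H H (MulEquiv.refl H) :=
  FreeGroup.lift fun x => HNNExtension.of x.out * HNNExtension.t * (HNNExtension.of x.out)⁻¹

theorem auxJ_of (g : G) : auxJ H (FreeGroup.of (g : G ⧸ H)) =
    HNNExtension.of g * HNNExtension.t * (HNNExtension.of g)⁻¹ := by
  obtain ⟨h, hh⟩ := QuotientGroup.mk_out_eq_mul H g
  rw [auxJ, FreeGroup.lift_apply_of, hh, map_mul]
  have := HNNExtension.t_mul_of (φ := MulEquiv.refl H) h
  simp only [MulEquiv.refl_apply] at this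
  rw [mul_assoc (HNNExtension.of g), ← this]
  group

theorem auxJ_map (g : G) (u : FreeGroup (G ⧸ H)) :
    auxJ H (FreeGroup.map (fun x => g • x) u) =
      HNNExtension.of g * auxJ H u * (HNNExtension.of g)⁻¹ := by
  have : (auxJ H).comp (FreeGroup.map (fun x => g • x)) =
      (MulAut.conj (HNNExtension.of g)).toMonoidHom.comp (auxJ H) := by
    ext x
    induction x using QuotientGroup.induction_on with
    | H x =>
      simp only [MonoidHom.comp_apply, FreeGroup.map.of, MulAction.Quotient.smul_coe, smul_eq_mul,
        auxJ_of, MulEquiv.toMonoidHom_eq_coe, MonoidHom.coe_coe, MulAut.conj_apply, map_mul]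
      group
  exact DFunLike.congr_fun this u

theorem aux_decomp (γ : HNNExtension G H H (MulEquiv.refl H)) :
    ∃ u g, γ = auxJ H u * HNNExtension.of g := by
  induction γ using HNNExtension.induction_on with
  | of g => exact ⟨1, g, by simp⟩
  | t => exact ⟨FreeGroup.of ((1 : G) : G ⧸ H), 1, by rw [auxJ_of]; simp⟩
  | mul x y hx hy =>
    obtain ⟨u, g, rfl⟩ := hx
    obtain ⟨v, k, rfl⟩ := hy
    refine ⟨u * FreeGroup.map (fun x => g • x) v, g * k, ?_⟩
    rw [map_mul, auxJ_map, map_mul]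
    group
  | inv x hx =>
    obtain ⟨u, g, rfl⟩ := hx
    refine ⟨FreeGroup.map (fun x => g⁻¹ • x) u⁻¹, g⁻¹, ?_⟩
    rw [auxJ_map, map_inv, map_inv]
    group

end

theorem HNN_residually_p_finite (p : ℕ) (hp : p.Prime) (G : Type) [Group G]
    (H : Subgroup G) (hH : ClosedInProP p H) (hG : ResiduallyPFinite p G) :
    ResiduallyPFinite p (HNNExtension G H H (MulEquiv.refl H)) := by
  classical
  intro γ hγ
  obtain ⟨u, g, rfl⟩ := aux_decomp H γ
  by_cases hg : g = 1
  swap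
  · obtain ⟨P, iP, f, hP, hf⟩ := hG g hg
    let F : HNNExtension G H H (MulEquiv.refl H) →* P := HNNExtension.lift f 1 (by simp)
    refine ⟨P, iP, F, hP, ?_⟩
    have h1 : F.comp (auxJ H) = 1 := by
      ext x
      simp [auxJ, F]
    have h2 : F (auxJ H u) = 1 := DFunLike.congr_fun h1 u
    rw [map_mul, h2, one_mul]
    simpa [F] using hf
  subst hg
  rw [map_one, mul_one] at hγ ⊢
  have hu : u ≠ 1 := by rintro rfl; exact hγ (map_one _)
  obtain ⟨l, hl0, hlc, hlu⟩ := aux_freeWord u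
  have hl : l ≠ [] := by rintro rfl; exact hu (by simpa using hlu)
  obtain ⟨N, hN, ⟨a, ha⟩, hsep⟩ := aux_sep p hp H hH
    (((l ×ˢ l : List _)).map fun q => (q.1.1.out)⁻¹ * q.2.1.out)
  let Q := G ⧸ N
  let K : Subgroup Q := H.map (QuotientGroup.mk' N)
  let π : G ⧸ H → Q ⧸ K := fun x => ((QuotientGroup.mk' N x.out : Q) : Q ⧸ K)
  have hπ : ∀ x y : (G ⧸ H) × ℤ, x ∈ l → y ∈ l → x.1 ≠ y.1 → π x.1 ≠ π y.1 := by
    intro x y hx hy hxy he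
    have h1 := hsep ((x.1.out)⁻¹ * y.1.out)
      (List.mem_map.mpr ⟨(x, y), List.mem_product.mpr ⟨hx, hy⟩, rfl⟩) ?_
    · have h2 := QuotientGroup.eq.mp he
      rw [← map_inv, ← map_mul] at h2
      obtain ⟨h, hh, h3⟩ := h2
      apply h1
      refine ⟨(x.1.out)⁻¹ * y.1.out * h⁻¹, ?_, h, hh, by simp⟩
      have h4 : QuotientGroup.mk' N ((x.1.out)⁻¹ * y.1.out * h⁻¹) = 1 := by
        rw [map_mul, ← h3, ← map_mul, mul_inv_cancel, map_one]
      rw [SetLike.mem_coe, ← QuotientGroup.ker_mk' N]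
      exact h4
    · intro hm
      apply hxy
      rw [← QuotientGroup.out_eq' x.1, ← QuotientGroup.out_eq' y.1]
      exact QuotientGroup.eq.mpr hm
  have hπmk : ∀ g : G, π (g : G ⧸ H) = ((QuotientGroup.mk' N g : Q) : Q ⧸ K) := by
    intro g
    obtain ⟨h, hh⟩ := QuotientGroup.mk_out_eq_mul H g
    simp only [π, hh]
    rw [QuotientGroup.eq]
    refine ⟨(h : G)⁻¹, H.inv_mem h.2, ?_⟩
    rw [map_mul, map_inv, mul_inv_rev, inv_mul_cancel_right]
  let l' : List ((Q ⧸ K) × ℤ) := l.map fun a => (π a.1, a.2)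
  obtain ⟨U, iU, φ, ⟨b, hb⟩, hφ⟩ := aux_free_sep p hp l' (by simpa [l'] using hl)
    (by
      intro a ha
      obtain ⟨c, hc, rfl⟩ := List.mem_map.mp ha
      exact hl0 c hc)
    (by
      rw [List.isChain_map, List.isChain_iff_getElem]
      intro i hi
      exact hπ _ _ (List.getElem_mem _) (List.getElem_mem _)
        (List.isChain_iff_getElem.mp hlc i hi))
  have hmap : (l'.map fun a => FreeGroup.of a.1 ^ a.2).prod = FreeGroup.map π u := by
    rw [hlu, map_list_prod]
    simp [l', Function.comp_def]
  rw [hmap] at hφ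
  have : Finite Q := by
    have : N.FiniteIndex := ⟨by rw [ha]; exact (pow_pos hp.pos _).ne'⟩
    exact inferInstanceAs (Finite (G ⧸ N))
  have hQ : Nat.card Q = p ^ a := ha
  let τ : RegularWreathProduct U Q := ⟨fun q => φ (FreeGroup.of ((q⁻¹ : Q) : Q ⧸ K)), 1⟩
  let F : HNNExtension G H H (MulEquiv.refl H) →* RegularWreathProduct U Q :=
    HNNExtension.lift (RegularWreathProduct.inl.comp (QuotientGroup.mk' N)) τ (by
      intro h
      ext q
      · simp only [RegularWreathProduct.mul_left, τ, MonoidHom.comp_apply, MulEquiv.refl_apply,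
          RegularWreathProduct.left_inl, RegularWreathProduct.right_inl, Pi.mul_apply,
          Pi.one_apply, mul_one, one_mul]
        congr 2
        rw [QuotientGroup.eq]
        refine ⟨h, h.2, ?_⟩
        rw [inv_inv, mul_inv_rev, inv_inv, mul_inv_cancel_left]
      · simp [τ])
  refine ⟨RegularWreathProduct U Q, inferInstance, F, ?_, ?_⟩
  · rw [RegularWreathProduct.card, hb, hQ]
    exact ⟨b * p ^ a + a, by rw [pow_add, pow_mul]⟩
  · have key : ∀ v : FreeGroup (G ⧸ H), (F (auxJ H v)).right = 1 ∧
        (F (auxJ H v)).left 1 = φ (FreeGroup.map π v) := by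
      intro v
      induction v using FreeGroup.induction_on with
      | C1 => simp
      | of x =>
        induction x using QuotientGroup.induction_on with
        | H x =>
          rw [auxJ_of, FreeGroup.map.of, hπmk]
          constructor
          · simp [F, τ]
          · simp only [F, τ, map_mul, map_inv, HNNExtension.lift_of, HNNExtension.lift_t,
              MonoidHom.comp_apply, RegularWreathProduct.mul_left, RegularWreathProduct.mul_right,
              RegularWreathProduct.inv_left, RegularWreathProduct.left_inl,
              RegularWreathProduct.right_inl, Pi.mul_apply, Pi.one_apply, Pi.inv_apply, inv_one,
              mul_one, one_mul]
            exact congrArg (fun z : Q => φ (FreeGroup.of (z : Q ⧸ K))) (inv_inv _)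
      | inv_of x ih =>
        rw [map_inv, map_inv, map_inv, map_inv, ← ih.2]
        simp [ih.1]
      | mul x y hx hy =>
        rw [map_mul, map_mul, map_mul, map_mul, ← hx.2, ← hy.2]
        simp [hx.1, hy.1]
    intro h
    apply hφ
    rw [← (key u).2, h]
    rfl
end

section
/- Let p be a prime number and let G be a right-angled Artin group with finite generating set X, i.e., G is the group presented by ⟨X | [x,y] = 1 for all (x,y) ∈ Σ⟩ for some subset Σ of X × X. Then for every nonempty subset X' of X, the subgroup ⟨X'⟩ of G generated by the images of the elements of X' is closed in the pro-p topology on G: for every g ∈ G with g ∉ ⟨X'⟩ there exists a normal subgroup N of G of index a power of p such that g ∉ N⟨X'⟩. -/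
open scoped Pointwise commutatorElement

namespace RaagProof

/-- Normal subgroups of `p`-power index. -/
def Good (p : ℕ) {G : Type*} [Group G] (N : Subgroup G) : Prop :=
  N.Normal ∧ ∃ k : ℕ, N.index = p ^ k

lemma Good.inf {p : ℕ} (hp : p.Prime) {G : Type*} [Group G] {N M : Subgroup G}
    (hN : Good p N) (hM : Good p M) : Good p (N ⊓ M) := by
  obtain ⟨h1, a, ha⟩ := hN
  obtain ⟨h2, b, hb⟩ := hM
  refine ⟨inferInstance, ?_⟩
  have h := Subgroup.relIndex_mul_index (H := N ⊓ M) (K := M) inf_le_right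
  rw [Subgroup.inf_relIndex_right] at h
  have hd : N.relIndex M ∣ p ^ a := ha ▸ Subgroup.relIndex_dvd_index_of_normal N M
  obtain ⟨c, -, hc⟩ := (Nat.dvd_prime_pow hp).1 hd
  exact ⟨c + b, by rw [← h, hc, hb, pow_add]⟩

lemma Good.comap {p : ℕ} (hp : p.Prime) {G K : Type*} [Group G] [Group K] {N : Subgroup K}
    (hN : Good p N) (f : G →* K) : Good p (N.comap f) := by
  obtain ⟨h1, a, ha⟩ := hN
  refine ⟨inferInstance, ?_⟩
  rw [Subgroup.index_comap]
  have hd : N.relIndex f.range ∣ p ^ a := ha ▸ Subgroup.relIndex_dvd_index_of_normal N _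
  obtain ⟨c, -, hc⟩ := (Nat.dvd_prime_pow hp).1 hd
  exact ⟨c, hc⟩

/-- Separation of a point from a retract. -/
lemma closed_of_retract {p : ℕ} (hp : p.Prime) {G : Type*} [Group G] (A : Subgroup G)
    (r : G →* G) (hr : ∀ a ∈ A, r a = a) (h : G) 
    (hs : ∃ N, Good p N ∧ h⁻¹ * r h ∉ N) : ∃ N, Good p N ∧ h ∉ A ⊔ N := by
  obtain ⟨N, hN, hx⟩ := hs
  have hM := hN.inf hp (hN.comap hp r)
  refine ⟨_, hM, fun hmem => hx ?_⟩
  have := hM.1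
  obtain ⟨a, ha, m, hm, rfl⟩ := Subgroup.mem_sup_of_normal_right.1 hmem
  rw [map_mul, hr a ha]
  have : (a * m)⁻¹ * (a * r m) = m⁻¹ * r m := by group
  rw [this]
  exact N.mul_mem (N.inv_mem hm.1) hm.2

/-- Reduced words `h₀ t^{e₁} h₁ ⋯ h_{k-1} t^{e_k}`. -/
inductive Red {G : Type*} [Group G] (H A : Subgroup G) (t : G) : ℕ → G → Prop
  | base (h : G) (e : ℤ) (hh : h ∈ H) (he : e ≠ 0) : Red H A t 1 (h * t ^ e)
  | step (k : ℕ) (m h : G) (e : ℤ) (hm : Red H A t k m) (hh : h ∈ H) (hA : h ∉ A)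
      (he : e ≠ 0) : Red H A t (k + 1) (m * h * t ^ e)

lemma Red.mono {G : Type*} [Group G] {H A B : Subgroup G} {t : G} (hAB : A ≤ B) {k : ℕ} {m : G}
    (h : Red H B t k m) : Red H A t k m := by
  induction h with
  | base h e hh he => exact .base h e hh he
  | step k m h e hm hh hA he ih => exact .step k m h e ih hh (fun h' => hA (hAB h')) he

lemma Red.good {p : ℕ} (hp : p.Prime) {G : Type*} [Group G] {H A : Subgroup G} {t : G}
    (hcl : ∀ h ∈ H, h ∉ A → ∃ N, Good p N ∧ h ∉ A ⊔ N) {k : ℕ} {m : G}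
    (h : Red H A t k m) : ∃ N, Good p N ∧ Red H (A ⊔ N) t k m := by
  induction h with
  | base h e hh he => exact ⟨⊤, ⟨inferInstance, 0, by simp⟩, .base h e hh he⟩
  | step k m h e hm hh hA he ih =>
    obtain ⟨N, hN, hr⟩ := ih
    obtain ⟨M, hM, hn⟩ := hcl h hh hA
    refine ⟨N ⊓ M, hN.inf hp hM, .step k m h e (hr.mono ?_) hh (fun h' => hn ?_) he⟩
    · exact sup_le_sup_left inf_le_left _
    · exact (sup_le_sup_left inf_le_right A) h'

def HasForm {G : Type*} [Group G] (H A : Subgroup G) (t : G) (g : G) : Prop :=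
  g ∈ H ∨ ∃ k m h, Red H A t k m ∧ h ∈ H ∧ g = m * h

lemma HasForm.mul_H {G : Type*} [Group G] {H A : Subgroup G} {t g : G}
    (hg : HasForm H A t g) {x : G} (hx : x ∈ H) : HasForm H A t (g * x) := by
  rcases hg with hg | ⟨k, m, h, hm, hh, rfl⟩
  · exact .inl (H.mul_mem hg hx)
  · exact .inr ⟨k, m, h * x, hm, H.mul_mem hh hx, mul_assoc _ _ _⟩

lemma Red.mul_t {G : Type*} [Group G] {H A : Subgroup G} {t : G} {k : ℕ} {m : G}
    (hm : Red H A t k m) (e : ℤ) : HasForm H A t (m * t ^ e) := by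
  cases hm with
  | base h e' hh he =>
    by_cases h0 : e' + e = 0
    · left; rwa [mul_assoc, ← zpow_add, h0, zpow_zero, mul_one]
    · right
      refine ⟨1, h * t ^ (e' + e), 1, .base _ _ hh h0, H.one_mem, ?_⟩
      rw [mul_assoc, ← zpow_add, mul_one]
  | step k m h e' hm hh hA he =>
    by_cases h0 : e' + e = 0
    · right
      refine ⟨k, m, h, hm, hh, ?_⟩
      rw [mul_assoc, ← zpow_add, h0, zpow_zero, mul_one]
    · right
      refine ⟨k + 1, m * h * t ^ (e' + e), 1, .step _ _ _ _ hm hh hA h0, H.one_mem, ?_⟩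
      rw [mul_assoc, ← zpow_add, mul_one]

lemma HasForm.mul_t {G : Type*} [Group G] {H A : Subgroup G} {t g : G} 
    (hc : ∀ a ∈ A, Commute a t)
    (hg : HasForm H A t g) {e : ℤ} (he : e ≠ 0) : HasForm H A t (g * t ^ e) := by
  rcases hg with hg | ⟨k, m, h, hm, hh, rfl⟩
  · exact .inr ⟨1, g * t ^ e, 1, .base _ _ hg he, H.one_mem, by simp⟩
  · by_cases hA : h ∈ A
    · rw [mul_assoc, ((hc h hA).zpow_right e).eq, ← mul_assoc]
      exact (hm.mul_t e).mul_H hh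
    · exact .inr ⟨k + 1, _, 1, .step k m h e hm hh hA he, H.one_mem, by simp⟩

lemma hasForm_of_mem {G : Type*} [Group G] {A : Subgroup G} {t : G} (Y : Set G)
    (hc : ∀ a ∈ A, Commute a t) (g : G)
    (hg : g ∈ Subgroup.closure (insert t Y)) : HasForm (Subgroup.closure Y) A t g := by
  induction hg using Subgroup.closure_induction_right with
  | one => exact .inl (one_mem _)
  | mul_right x hx y hy ih =>
    rcases hy with rfl | hy
    · simpa using ih.mul_t hc (e := 1) one_ne_zero
    · exact ih.mul_H (Subgroup.subset_closure hy)
  | mul_inv_cancel x hx y hy ih =>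
    rcases hy with rfl | hy
    · simpa using ih.mul_t hc (e := -1) (by simp)
    · exact ih.mul_H (inv_mem (Subgroup.subset_closure hy))

section Matrices

variable {G : Type*} [Group G] {Ω : Type*} [MulAction G Ω] [Fintype Ω] [DecidableEq Ω]
  (R : Type*) [CommRing R]

/-- Permutation matrices. -/
def permM : G →* Matrix Ω Ω R where
  toFun g := Matrix.of fun a b => if a = g • b then 1 else 0
  map_one' := by ext a b; simp [Matrix.one_apply]
  map_mul' g h := by
    ext a b
    simp [Matrix.mul_apply, mul_smul]

variable {R}

lemma mul_permM (M : Matrix Ω Ω R) (g : G) (a b : Ω) : 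
    (M * permM R g : Matrix Ω Ω R) a b = M a (g • b) := by
  simp [Matrix.mul_apply, permM]

/-- The transvection-like matrix. -/
def tau (o : Ω) : Matrix Ω Ω R := Matrix.of fun a b => if a = o ∧ b ≠ o then 1 else 0

lemma mul_tau (M : Matrix Ω Ω R) (o a b : Ω) :
    (M * tau o : Matrix Ω Ω R) a b = if b = o then 0 else M a o := by
  by_cases h : b = o <;> simp [Matrix.mul_apply, tau, h]

lemma tau_mul_tau (o : Ω) : (tau o * tau o : Matrix Ω Ω R) = 0 := by
  ext a b
  rw [mul_tau]; simp [tau]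

lemma tau_comm (o : Ω) (g : G) (hg : g • o = o) :
    permM R g * tau o = tau o * permM R g := by
  ext a b
  rw [mul_tau, mul_permM]
  have : g • b = o ↔ b = o := by
    constructor
    · intro h; rw [← hg] at h; exact smul_left_cancel g h
    · rintro rfl; exact hg
  by_cases h : b = o <;> simp [tau, permM, this, h, hg]

/-- The units `1 + e s τ`. -/
def uT (s : R) (o : Ω) : Multiplicative ℤ →* (Matrix Ω Ω R) where
  toFun e := 1 + ((e.toAdd : R) * s) • tau o
  map_one' := by simp
  map_mul' e f := by
    simp [add_mul, mul_add, tau_mul_tau, add_smul]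
    abel

lemma uT_zpow (s : R) (o : Ω) (e : ℤ) :
    (((uT s o).toHomUnits (Multiplicative.ofAdd 1) ^ e : (Matrix Ω Ω R)ˣ) : Matrix Ω Ω R)
      = 1 + ((e : R) * s) • tau o := by
  rw [← map_zpow, ← ofAdd_zsmul]
  simp [uT]

end Matrices

lemma dvd_pow_p {E : Type*} [Ring E] (p : ℕ) (x : E) (i : ℕ) (hi : 1 ≤ i)
    (h : (p : E) ^ i ∣ x - 1) : (p : E) ^ (i + 1) ∣ x ^ p - 1 := by
  have h1 : (p : E) ∣ x - 1 := (dvd_pow_self _ (by omega)).trans h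
  have h2 : ∀ n : ℕ, (p : E) ∣ x ^ n - 1 := fun n => by
    rw [← mul_geom_sum]; exact h1.mul_right _
  have h3 : (p : E) ∣ ∑ j ∈ Finset.range p, x ^ j := by
    have : ∑ j ∈ Finset.range p, x ^ j = ∑ j ∈ Finset.range p, (x ^ j - 1) + p := by simp
    rw [this]
    exact dvd_add (Finset.dvd_sum fun j _ => h2 j) dvd_rfl
  rw [← mul_geom_sum]
  obtain ⟨a, ha⟩ := h
  obtain ⟨b, hb⟩ := h3
  refine ⟨a * b, ?_⟩
  rw [ha, hb, pow_succ]
  simp only [mul_assoc]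
  rw [← mul_assoc a, ← (Nat.cast_commute p a).eq, mul_assoc]

lemma ker_good {p : ℕ} (hp : p.Prime) {G : Type*} [Group G] {E : Type*} [Ring E] [Finite E]
    (M : ℕ) (hM : (p : E) ^ M = 0) (Ψ σ : G →* Eˣ)
    (hd : ∀ g, (p : E) ∣ (Ψ g : E) - σ g) (hs : ∀ g, ∃ a : ℕ, (σ g) ^ p ^ a = 1) :
    Good p Ψ.ker := by
  refine ⟨inferInstance, ?_⟩
  have : Fact p.Prime := ⟨hp⟩
  rw [Subgroup.index_ker]
  refine (IsPGroup.iff_card (p := p)).1 ?_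
  rintro ⟨_, g, rfl⟩
  obtain ⟨a, ha⟩ := hs g
  have key : ∀ n : ℕ, (p : E) ^ (n + 1) ∣ ((Ψ g : E) ^ p ^ (a + n)) - 1 := by
    intro n
    induction n with
    | zero =>
      have := hd (g ^ p ^ a)
      rw [map_pow, map_pow, ha] at this
      simpa using this
    | succ n ih =>
      have := dvd_pow_p p _ (n + 1) (by omega) ih
      rwa [← pow_mul, ← pow_succ] at this
  refine ⟨a + M, ?_⟩
  have := key M
  rw [pow_succ, hM, zero_mul, zero_dvd_iff, sub_eq_zero] at this
  ext
  simpa using this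

lemma dvd_of_gen {G : Type*} [Group G] {E : Type*} [Ring E] (z : E) (hz : ∀ x, Commute z x)
    (Ψ σ : G →* Eˣ) (Y : Set G) (hY : Subgroup.closure Y = ⊤)
    (h : ∀ y ∈ Y, z ∣ (Ψ y : E) - σ y) (g : G) : z ∣ (Ψ g : E) - σ g := by
  have hl : ∀ x y : E, z ∣ y → z ∣ x * y := by
    rintro x _ ⟨c, rfl⟩
    exact ⟨x * c, by rw [← mul_assoc, ← (hz x).eq, mul_assoc]⟩
  have hg : g ∈ Subgroup.closure Y := by rw [hY]; trivial
  induction hg using Subgroup.closure_induction with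
  | mem y hy => exact h y hy
  | one => simp
  | mul x y _ _ hx hy =>
    have : ((Ψ (x * y) : Eˣ) : E) - σ (x * y) = (Ψ x - σ x) * Ψ y + σ x * (Ψ y - σ y) := by
      simp [sub_mul, mul_sub]
    rw [this]
    exact dvd_add (hx.mul_right _) (hl _ _ hy)
  | inv x _ hx =>
    have : ((Ψ x⁻¹ : Eˣ) : E) - σ x⁻¹ = 
        -(((Ψ x)⁻¹ : Eˣ) * ((Ψ x - σ x : E) * ((σ x)⁻¹ : Eˣ))) := by
      simp [sub_mul, mul_sub]
    rw [this]
    exact (hl _ _ (hx.mul_right _)).neg_right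

section Raag

variable {X : Type*} (S : Set (X × X))

/-- The relators. -/
abbrev relS : Set (FreeGroup X) :=
  (fun q : X × X => ⁅FreeGroup.of q.1, FreeGroup.of q.2⁆) '' S

abbrev RG := PresentedGroup (relS S)

/-- Generators. -/
abbrev gen (x : X) : RG S := PresentedGroup.of x

variable {S}

lemma gen_comm {q : X × X} (hq : q ∈ S) : Commute (gen S q.1) (gen S q.2) := by
  have h : PresentedGroup.mk (relS S) ⁅FreeGroup.of q.1, FreeGroup.of q.2⁆ = 1 :=
    PresentedGroup.one_of_mem ⟨q, hq, rfl⟩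
  rw [map_commutatorElement, commutatorElement_eq_one_iff_commute] at h
  exact h

/-- Universal property. -/
def rlift {K : Type*} [Group K] (f : X → K) (hf : ∀ q ∈ S, Commute (f q.1) (f q.2)) :
    RG S →* K :=
  PresentedGroup.toGroup (f := f) (by
    rintro _ ⟨q, hq, rfl⟩
    rw [map_commutatorElement, commutatorElement_eq_one_iff_commute]
    simpa using hf q hq)

lemma rlift_gen {K : Type*} [Group K] (f : X → K) (hf : ∀ q ∈ S, Commute (f q.1) (f q.2))
    (x : X) : rlift f hf (gen S x) = f x := PresentedGroup.toGroup.of _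

open Classical in
/-- Retractions. -/
noncomputable def retr (Y : Set X) : RG S →* RG S :=
  rlift (fun x => if x ∈ Y then gen S x else 1) (by
    intro q hq
    have := gen_comm hq
    split_ifs <;> simp [this])

/-- Parabolic subgroups. -/
def par (S : Set (X × X)) (Y : Set X) : Subgroup (RG S) := Subgroup.closure (gen S '' Y)

lemma par_mono {Y Z : Set X} (h : Y ⊆ Z) : par S Y ≤ par S Z :=
  Subgroup.closure_mono (Set.image_mono h)

lemma gen_closure : Subgroup.closure (Set.range (gen S)) = ⊤ :=
  PresentedGroup.closure_range_of _

lemma retr_of_mem {Y : Set X} {g : RG S} (hg : g ∈ par S Y) : retr Y g = g := by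
  refine MonoidHom.eqOn_closure (f := retr Y) (g := MonoidHom.id _) ?_ hg
  rintro _ ⟨y, hy, rfl⟩
  simp [retr, rlift_gen, hy]

lemma retr_mem (Y : Set X) (g : RG S) : retr Y g ∈ par S Y := by
  have : (⊤ : Subgroup (RG S)) ≤ (par S Y).comap (retr Y) := by
    rw [← gen_closure, Subgroup.closure_le]
    rintro _ ⟨y, rfl⟩
    by_cases hy : y ∈ Y
    · have : gen S y ∈ par S Y := Subgroup.subset_closure ⟨y, hy, rfl⟩
      simpa [retr, rlift_gen, hy] using this
    · simp [retr, rlift_gen, hy]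
  exact this trivial

/-- Every nontrivial element of `⟨Y⟩` is separated from `1`. -/
def Res (p : ℕ) (S : Set (X × X)) (Y : Set X) : Prop :=
  ∀ g ∈ par S Y, g ≠ 1 → ∃ N, Good p N ∧ g ∉ N

lemma Res.closed {p : ℕ} (hp : p.Prime) {Y Z : Set X} (hZ : Z ⊆ Y) (h : Res p S Y) (g : RG S)
    (hg : g ∈ par S Y) (hg' : g ∉ par S Z) : ∃ N, Good p N ∧ g ∉ par S Z ⊔ N := by
  refine closed_of_retract hp _ (retr Z) (fun a => retr_of_mem) g (h _ ?_ ?_)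
  · exact mul_mem (inv_mem hg) (par_mono hZ (retr_mem Z g))
  · intro h1
    rw [inv_mul_eq_one] at h1
    exact hg' (h1 ▸ retr_mem Z g)

open Polynomial in
lemma red_coeff {G : Type*} [Group G] {Ω : Type*} [MulAction G Ω] [Fintype Ω] [DecidableEq Ω]
    (o : Ω) (H B : Subgroup G) (t : G) (hB : ∀ h : G, h ∉ B → h • o ≠ o)
    (Φ : G →* (Matrix Ω Ω ℤ[X])ˣ) (hH : ∀ h ∈ H, (Φ h : Matrix Ω Ω ℤ[X]) = permM ℤ[X] h)
    (ht : Φ t = (uT (Polynomial.X : ℤ[X]) o).toHomUnits (Multiplicative.ofAdd 1)) {k : ℕ} {m : G}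
    (hm : Red H B t k m) : 1 ≤ k ∧ ∃ (ω : Ω) (c : ℤ), c ≠ 0 ∧ ∀ a b,
      ((Φ m : Matrix Ω Ω ℤ[X]) a b).natDegree ≤ k ∧
      ((Φ m : Matrix Ω Ω ℤ[X]) a b).coeff k = if a = ω ∧ b ≠ o then c else 0 := by
  have hT : ∀ (M : Matrix Ω Ω ℤ[X]) (e : ℤ) (a b : Ω),
      (M * (Φ (t ^ e) : Matrix Ω Ω ℤ[X])) a b
        = M a b + if b = o then 0 else C e * Polynomial.X * M a o := by
    intro M e a b
    rw [map_zpow, ht, uT_zpow, mul_add, mul_one, Matrix.add_apply, Matrix.mul_smul,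
      Matrix.smul_apply, mul_tau]
    split_ifs <;> simp
  induction hm with
  | base h e hh he =>
    refine ⟨le_rfl, h • o, e, he, fun a b => ?_⟩
    rw [map_mul, Units.val_mul, hT, hH h hh]
    have hp : ∀ a b : Ω, (permM ℤ[X] h) a b = C (if a = h • b then 1 else 0) := by
      intro a b
      simp only [permM, MonoidHom.coe_mk, OneHom.coe_mk, Matrix.of_apply]
      split_ifs <;> simp
    rw [hp, hp]
    constructor
    · split_ifs <;> simp <;> compute_degree
    · by_cases hb : b = o <;> by_cases ha : a = h • o <;> 
        simp [hb, ha, coeff_C, coeff_one, mul_assoc] <;> split_ifs <;> simp [coeff_one]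
  | step k m h e hm hh hA he ih =>
    obtain ⟨hk, ω, c, hc, hab⟩ := ih
    refine ⟨by omega, ω, e * c, mul_ne_zero he hc, fun a b => ?_⟩
    rw [map_mul, Units.val_mul, hT, map_mul, Units.val_mul, hH h hh, mul_permM, mul_permM]
    obtain ⟨h1, h2⟩ := hab a (h • b)
    obtain ⟨h3, h4⟩ := hab a (h • o)
    have h5 := hB h hA
    constructor
    · refine (natDegree_add_le _ _).trans (max_le (by omega) ?_)
      split_ifs
      · simp
      · refine natDegree_mul_le.trans ?_
        have : (C e * Polynomial.X : ℤ[X]).natDegree ≤ 1 := by compute_degree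
        omega
    · rw [coeff_add, coeff_eq_zero_of_natDegree_lt (by omega), zero_add]
      by_cases hb : b = o
      · simp [hb]
      · rw [if_neg hb, mul_assoc, coeff_C_mul, coeff_X_mul, h4]
        simp [hb, h5]

open Polynomial in
lemma sep_of_rep {p : ℕ} (hp : p.Prime) {G : Type*} [Group G] {Ω : Type*} [MulAction G Ω]
    [Fintype Ω] [DecidableEq Ω] (N : Subgroup G) (hN : Good p N)
    (hNΩ : ∀ n ∈ N, ∀ a : Ω, n • a = a)
    (Φ : G →* (Matrix Ω Ω ℤ[X])ˣ) (r : G →* G) (Y : Set G) (hY : Subgroup.closure Y = ⊤)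
    (hd : ∀ y ∈ Y, algebraMap ℤ[X] (Matrix Ω Ω ℤ[X]) Polynomial.X ∣
      (Φ y : Matrix Ω Ω ℤ[X]) - permM ℤ[X] (r y))
    (g : G) (hg : Φ g ≠ 1) : ∃ N, Good p N ∧ g ∉ N := by
  obtain ⟨a, b, hab⟩ : ∃ a b, ((Φ g : Matrix Ω Ω ℤ[X]) - 1) a b ≠ 0 := by
    by_contra! hcon
    apply hg
    ext1
    rw [← sub_eq_zero]
    ext1 a b
    exact hcon a b
  set f := ((Φ g : Matrix Ω Ω ℤ[X]) - 1) a b with hf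
  obtain ⟨L, hL⟩ : ∃ L : ℕ, f.eval ((p : ℤ) ^ (L + 1)) ≠ 0 := by
    by_contra! hcon
    apply hab
    refine eq_zero_of_infinite_isRoot f (Set.infinite_of_injective_forall_mem
      (f := fun L : ℕ => (p : ℤ) ^ (L + 1)) ?_ hcon)
    intro x y hxy
    have : p ^ (x + 1) = p ^ (y + 1) := by
      dsimp only at hxy
      exact_mod_cast hxy
    have := Nat.pow_right_injective hp.two_le this
    omega
  obtain ⟨M, hM⟩ : ∃ M : ℕ, ¬ ((p : ℤ) ^ M ∣ f.eval ((p : ℤ) ^ (L + 1))) := by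
    have : FiniteMultiplicity (p : ℤ) (f.eval ((p : ℤ) ^ (L + 1))) := by
      rw [Int.finiteMultiplicity_iff]
      exact ⟨by simpa using hp.one_lt.ne', hL⟩
    obtain ⟨n, hn⟩ := this
    exact ⟨n + 1, hn⟩
  have : NeZero (p ^ M) := ⟨pow_ne_zero _ hp.ne_zero⟩
  let ev : ℤ[X] →+* ZMod (p ^ M) :=
    (Int.castRingHom _).comp (evalRingHom ((p : ℤ) ^ (L + 1)))
  let mp : Matrix Ω Ω ℤ[X] →+* Matrix Ω Ω (ZMod (p ^ M)) := ev.mapMatrix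
  let Ψ : G →* (Matrix Ω Ω (ZMod (p ^ M)))ˣ := (Units.map mp.toMonoidHom).comp Φ
  let σ0 : G →* (Matrix Ω Ω ℤ[X])ˣ := (permM ℤ[X]).toHomUnits.comp r
  let σ : G →* (Matrix Ω Ω (ZMod (p ^ M)))ˣ := (Units.map mp.toMonoidHom).comp σ0
  refine ⟨Ψ.ker, ker_good hp M ?_ Ψ σ ?_ ?_, ?_⟩
  · have h1 : ((p : ZMod (p ^ M))) ^ M = 0 := by
      rw [← Nat.cast_pow]; exact ZMod.natCast_self _
    have h2 : ((p : Matrix Ω Ω (ZMod (p ^ M)))) ^ M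
        = algebraMap (ZMod (p ^ M)) _ ((p : ZMod (p ^ M)) ^ M) := by simp
    rw [h2, h1, map_zero]
  · intro g
    have h1 := dvd_of_gen (algebraMap ℤ[X] (Matrix Ω Ω ℤ[X]) Polynomial.X)
      (fun x => Algebra.commutes _ _) Φ σ0 Y hY hd g
    have h2 := map_dvd mp h1
    rw [map_sub] at h2
    refine dvd_trans ?_ h2
    have h3 : mp (algebraMap ℤ[X] (Matrix Ω Ω ℤ[X]) Polynomial.X)
        = (p : Matrix Ω Ω (ZMod (p ^ M))) ^ (L + 1) := by
      have h4 : (p : Matrix Ω Ω (ZMod (p ^ M))) ^ (L + 1)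
        = algebraMap (ZMod (p ^ M)) _ ((p : ZMod (p ^ M)) ^ (L + 1)) := by simp
      rw [h4]
      ext i j
      simp only [mp, RingHom.mapMatrix_apply, Matrix.map_apply, Matrix.algebraMap_matrix_apply]
      split_ifs
      · simp [ev]
      · simp
    rw [h3]
    exact dvd_pow_self _ (by omega)
  · intro g
    obtain ⟨hn, k, hk⟩ := hN
    refine ⟨k, ?_⟩
    have h1 : (r g) ^ p ^ k ∈ N := by rw [← hk]; exact Subgroup.pow_index_mem N _
    have h2 : (permM ℤ[X] ((r g) ^ p ^ k) : Matrix Ω Ω ℤ[X]) = 1 := by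
      ext1 i j
      simp [permM, hNΩ _ h1, Matrix.one_apply]
    have h3 : σ0 g ^ p ^ k = 1 := by
      rw [← map_pow]
      ext1
      simpa [σ0] using h2
    simp only [σ, MonoidHom.comp_apply, ← map_pow]
    rw [map_pow σ0, h3, map_one]
  · intro hmem
    apply hM
    have h1 : mp (Φ g : Matrix Ω Ω ℤ[X]) = 1 := congrArg Units.val (MonoidHom.mem_ker.1 hmem)
    have h2 : mp ((Φ g : Matrix Ω Ω ℤ[X]) - 1) = 0 := by rw [map_sub, h1, map_one, sub_self]
    have h3 : ev f = 0 := congrFun (congrFun h2 a) b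
    have h4 : ((f.eval ((p : ℤ) ^ (L + 1)) : ℤ) : ZMod (p ^ M)) = 0 := h3
    rw [ZMod.intCast_zmod_eq_zero_iff_dvd] at h4
    exact_mod_cast h4

open Polynomial Classical in
lemma Res.insert {p : ℕ} (hp : p.Prime) {Y : Set X} {v : X} (hv : v ∉ Y) (h : Res p S Y) :
    Res p S (insert v Y) := by
  intro g hg hg1
  set Z : Set X := {y ∈ Y | (v, y) ∈ S ∨ (y, v) ∈ S} with hZ
  have hZY : Z ⊆ Y := fun y hy => hy.1
  have hc : ∀ a ∈ par S Z, Commute a (gen S v) := by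
    intro a ha
    have : par S Z ≤ Subgroup.centralizer {gen S v} := by
      rw [par, Subgroup.closure_le]
      rintro _ ⟨y, ⟨hy, hvy⟩, rfl⟩
      rw [SetLike.mem_coe, Subgroup.mem_centralizer_singleton_iff]
      rcases hvy with h | h
      · exact (gen_comm h).symm
      · exact (gen_comm h)
    exact Subgroup.mem_centralizer_singleton_iff.1 (this ha)
  have hform : HasForm (par S Y) (par S Z) (gen S v) g := by
    apply hasForm_of_mem _ hc
    rwa [par, Set.image_insert_eq] at hg
  rcases hform with hgY | ⟨k, m, x, hm, hx, rfl⟩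
  · exact h g hgY hg1
  obtain ⟨N, hN, hm⟩ := hm.good hp (fun y hy hy' => h.closed hp hZY y hy hy')
  set B := par S Z ⊔ N with hB
  have hNn := hN.1
  have hfin : B.FiniteIndex := by
    have : N.FiniteIndex := by
      obtain ⟨-, j, hj⟩ := hN
      exact ⟨by rw [hj]; exact pow_ne_zero _ hp.ne_zero⟩
    exact Subgroup.finiteIndex_of_le (le_sup_right : N ≤ B)
  have : Fintype (RG S ⧸ B) := Fintype.ofFinite _
  let o : Option (RG S ⧸ B) := some ((1 : RG S) : RG S ⧸ B)
  have ho : ∀ y : RG S, y • o = o ↔ y ∈ B := by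
    intro y
    have : y • o = some ((y : RG S) : RG S ⧸ B) := by
      have h1 : ((y * 1 : RG S) : RG S ⧸ B) = (y : RG S ⧸ B) := by rw [mul_one]
      exact congrArg some h1
    rw [this]
    simp only [o, Option.some.injEq]
    rw [QuotientGroup.eq]
    simp
  let T : (Matrix (Option (RG S ⧸ B)) (Option (RG S ⧸ B)) ℤ[X])ˣ :=
    (uT (Polynomial.X : ℤ[X]) o).toHomUnits (Multiplicative.ofAdd 1)
  let ρ : RG S →* (Matrix (Option (RG S ⧸ B)) (Option (RG S ⧸ B)) ℤ[X])ˣ :=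
    (permM ℤ[X]).toHomUnits
  have hTρ : ∀ y ∈ Y, ((v, y) ∈ S ∨ (y, v) ∈ S) → Commute T (ρ (gen S y)) := by
    intro y hy hvy
    have hyB : gen S y ∈ B := le_sup_left (α := Subgroup (RG S))
      (Subgroup.subset_closure ⟨y, ⟨hy, hvy⟩, rfl⟩)
    have h1 := tau_comm (R := ℤ[X]) o (gen S y) ((ho _).2 hyB)
    ext1
    have : (T : Matrix (Option (RG S ⧸ B)) (Option (RG S ⧸ B)) ℤ[X])
      = 1 + (Polynomial.X : ℤ[X]) • tau o := by simp [T, uT]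
    rw [Units.val_mul, Units.val_mul, this]
    simp [ρ, add_mul, mul_add, h1]
  let Φ : RG S →* (Matrix (Option (RG S ⧸ B)) (Option (RG S ⧸ B)) ℤ[X])ˣ :=
    rlift (fun y => if y = v then T else if y ∈ Y then ρ (gen S y) else 1) (by
      rintro ⟨y, z⟩ hq
      have h0 : Commute (ρ (gen S y)) (ρ (gen S z)) := (gen_comm hq).map ρ
      dsimp only
      by_cases hy : y = v
      · by_cases hz : z = v
        · simp [hy, hz]
        · by_cases hz' : z ∈ Y
          · simpa [hy, hz, hz'] using hTρ z hz' (.inl (hy ▸ hq))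
          · simp [hz, hz']
      · by_cases hy' : y ∈ Y
        · by_cases hz : z = v
          · simpa [hy, hz, hy'] using (hTρ y hy' (.inr (hz ▸ hq))).symm
          · by_cases hz' : z ∈ Y
            · simpa [hy, hz, hy', hz'] using h0
            · simp [hz, hz']
        · simp [hy, hy'])
  have hΦv : Φ (gen S v) = T := by simp [Φ, rlift_gen]
  have hΦY : ∀ y ∈ par S Y, Φ y = ρ y := by
    intro y hy
    refine MonoidHom.eqOn_closure ?_ hy
    rintro _ ⟨y, hy, rfl⟩
    have : y ≠ v := fun h => hv (h ▸ hy)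
    simp [Φ, rlift_gen, hy, this]
  refine sep_of_rep hp N hN ?_ Φ (retr Y) (Set.range (gen S)) gen_closure ?_ _ ?_
  · rintro n hn (_ | a)
    · rfl
    · induction a using QuotientGroup.induction_on with
      | H a =>
        have h1 : (((n * a : RG S)) : RG S ⧸ B) = (a : RG S ⧸ B) := by
          rw [eq_comm, QuotientGroup.eq]
          have h2 : a⁻¹ * n * a⁻¹⁻¹ ∈ N := hNn.conj_mem n hn a⁻¹
          exact le_sup_right (α := Subgroup (RG S)) (by simpa [mul_assoc] using h2)
        exact congrArg some h1
  · rintro _ ⟨y, rfl⟩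
    by_cases hy : y = v
    · subst hy
      rw [hΦv]
      have h1 : retr Y (gen S y) = 1 := by simp [retr, rlift_gen, hv]
      refine ⟨tau o, ?_⟩
      rw [h1, map_one, ← Algebra.smul_def]
      simp [T, uT]
    · by_cases hy' : y ∈ Y
      · have h1 : retr Y (gen S y) = gen S y := by simp [retr, rlift_gen, hy']
        rw [h1, hΦY _ (Subgroup.subset_closure ⟨y, hy', rfl⟩)]
        simp [ρ]
      · have h1 : retr Y (gen S y) = 1 := by simp [retr, rlift_gen, hy']
        have h2 : Φ (gen S y) = 1 := by simp [Φ, rlift_gen, hy, hy']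
        simp [h1, h2]
  · intro hone
    obtain ⟨hk, ω, c, hc0, hab⟩ := red_coeff o (par S Y) B (gen S v)
      (fun y hy => fun h' => hy ((ho y).1 h')) Φ
      (fun y hy => by rw [hΦY y hy]; rfl) hΦv hm
    have h1 := congrArg Units.val hone
    rw [map_mul, Units.val_mul, hΦY x hx] at h1
    have h2 := congrFun (congrFun h1 ω) none
    have h3 := mul_permM (Φ m : Matrix (Option (RG S ⧸ B)) (Option (RG S ⧸ B)) ℤ[X]) x ω none
    have h4 := (hab ω none).2
    have h5 : (x • none : Option (RG S ⧸ B)) = none := rfl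
    rw [h5] at h3
    rw [← h3] at h4
    erw [h2] at h4
    rw [if_pos ⟨rfl, by simp [o]⟩, Units.val_one, Matrix.one_apply] at h4
    split_ifs at h4
    · rw [coeff_one, if_neg (by omega)] at h4
      exact hc0 h4.symm
    · exact hc0 h4.symm

lemma res_univ {p : ℕ} (hp : p.Prime) [Finite X] : Res p S Set.univ := by
  refine Set.Finite.induction_on (motive := fun Y _ => Res p S Y) _ Set.finite_univ ?_ ?_
  · intro g hg hg1
    simp [par] at hg
    exact absurd hg hg1
  · intro v Y hv _ ih
    exact ih.insert hp hv

lemma final {p : ℕ} (hp : p.Prime) [Finite X] (Y : Set X) : ClosedInProP p (par S Y) := by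
  intro g hg
  obtain ⟨N, hN, hn⟩ := (res_univ hp (S := S)).closed hp (Set.subset_univ Y) g (by
    rw [par, Set.image_univ, gen_closure]; trivial) hg
  refine ⟨N, hN.1, hN.2, ?_⟩
  rintro ⟨n, hn', a, ha, rfl⟩
  exact hn (mul_mem (Subgroup.mem_sup_right hn') (Subgroup.mem_sup_left ha))

end Raag

end RaagProof

/-- In a right-angled Artin group `⟨X | [x,y] = 1 for (x,y) ∈ S⟩`, the subgroup generated
by the images of any nonempty subset `X'` of the generating set `X` is closed in the
pro-`p` topology. -/
theorem raag_parabolic_closed_pro_p (p : ℕ) (hp : p.Prime) (X : Type*) [Finite X]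
    (S : Set (X × X)) (rels : Set (FreeGroup X))
    (hrels : rels = (fun q : X × X => ⁅FreeGroup.of q.1, FreeGroup.of q.2⁆) '' S)
    (X' : Set X) (hX' : X'.Nonempty) :
    ClosedInProP p (Subgroup.closure ((PresentedGroup.of (rels := rels)) '' X')) := by
  subst hrels
  exact RaagProof.final hp X'
end

section
/- Every right-angled Artin group is residually p-finite for every prime p. That is, if G is the group presented by ⟨X | [x,y] = 1 for all (x,y) ∈ Σ⟩, where X is a finite set and Σ ⊆ X × X, then for every prime p and every g ∈ G with g ≠ 1 there exists a homomorphism from G to a finite p-group under which the image of g is nontrivial. -/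
open scoped commutatorElement

namespace Raag

open Polynomial in
theorem unip_pow {A : Type*} [Ring A] (p : ℕ) (hp : p.Prime) (s m : ℕ) (n : A)
    (hn : n ^ m = 0) (hs : (p : A) ^ s = 0) : (1 + n) ^ (p ^ (m + s)) = 1 := by
  obtain ⟨r, hr⟩ := (Commute.one_left (X : ℤ[X])).exists_add_pow_prime_pow_eq hp m
  have h1 : (p : ℤ[X]) ∣ (1 + X) ^ p ^ m - (1 + X ^ p ^ m) := by
    refine ⟨X * r, ?_⟩
    rw [hr, one_pow, add_sub_cancel_left]
    ring
  obtain ⟨t, ht⟩ := dvd_sub_pow_of_dvd_sub h1 s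
  have h2 := congrArg (aeval n) ht
  have hm : n ^ p ^ m = 0 :=
    pow_eq_zero_of_le (Nat.lt_pow_self hp.one_lt).le hn
  simp only [map_sub, map_pow, map_add, map_one, aeval_X, map_mul, map_natCast, hm, add_zero,
    one_pow, pow_succ, hs, zero_mul] at h2
  rw [pow_add, pow_mul]
  exact sub_eq_zero.mp h2

variable {X : Type*} {k : ℕ}

/-- `j` may be added to the state `I`. -/
def Addable (D : X → X → Prop) (lab : Fin k → X) (I : Finset (Fin k)) (j : Fin k) : Prop :=
  ∀ b, D (lab b) (lab j) → (j < b ↔ b ∈ I)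

/-- condition under which `K` is obtained from `K.erase j` by the letter `x` -/
def Cond (D : X → X → Prop) (lab : Fin k → X) (x : X) (K : Finset (Fin k)) (j : Fin k) : Prop :=
  lab j = x ∧ j ∈ K ∧ Addable D lab (K.erase j) j

open Classical in
/-- the nilpotent operator of a letter -/
noncomputable def E (R : Type) [CommRing R] (D : X → X → Prop) (lab : Fin k → X) (x : X) :
    Module.End R (Finset (Fin k) → R) where
  toFun v K := ∑ j, if Cond D lab x K j then v (K.erase j) else 0
  map_add' v w := by
    funext K
    simp only [Pi.add_apply, ← Finset.sum_add_distrib]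
    refine Finset.sum_congr rfl fun j _ => ?_
    split_ifs <;> simp
  map_smul' c v := by
    funext K
    simp only [Pi.smul_apply, smul_eq_mul, Finset.mul_sum, RingHom.id_apply]
    refine Finset.sum_congr rfl fun j _ => ?_
    split_ifs <;> simp

open Classical in
theorem E_apply (R : Type) [CommRing R] (D : X → X → Prop) (lab : Fin k → X) (x : X)
    (v : Finset (Fin k) → R) (K : Finset (Fin k)) :
    E R D lab x v K = ∑ j, if Cond D lab x K j then v (K.erase j) else 0 := rfl

theorem cond_swap (D : X → X → Prop) (hsymm : ∀ x y, D x y → D y x)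
    (lab : Fin k → X) (x y : X) (hxy : ¬ D x y) (K : Finset (Fin k)) (j l : Fin k)
    (h : Cond D lab x K j ∧ Cond D lab y (K.erase j) l) :
    Cond D lab y K l ∧ Cond D lab x (K.erase l) j := by
  obtain ⟨⟨rfl, hj, ha⟩, rfl, hl, hb⟩ := h
  have hl' := Finset.mem_erase.mp hl
  refine ⟨⟨rfl, hl'.2, fun b hD => ?_⟩, rfl, Finset.mem_erase.mpr ⟨Ne.symm hl'.1, hj⟩,
    fun b hD => ?_⟩
  · have hbj : b ≠ j := by rintro rfl; exact hxy hD
    rw [hb b hD]; simp [hbj]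
  · have hbl : b ≠ l := by rintro rfl; exact hxy (hsymm _ _ hD)
    rw [ha b hD]; simp [hbl]

theorem E_comm (R : Type) [CommRing R] (D : X → X → Prop)
    (hsymm : ∀ x y, D x y → D y x)
    (lab : Fin k → X) (x y : X) (hxy : ¬ D x y) :
    Commute (E R D lab x) (E R D lab y) := by
  classical
  refine LinearMap.ext fun v => funext fun K => ?_
  simp only [Module.End.mul_apply, E_apply]
  have key : ∀ x y : X, (∑ j, if Cond D lab x K j then
      ∑ l, (if Cond D lab y (K.erase j) l then v ((K.erase j).erase l) else 0) else 0)
      = ∑ j, ∑ l, if Cond D lab x K j ∧ Cond D lab y (K.erase j) l then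
        v ((K.erase j).erase l) else 0 := by
    intro x y
    refine Finset.sum_congr rfl fun j _ => ?_
    by_cases h : Cond D lab x K j <;> simp [h]
  rw [key, key, Finset.sum_comm]
  refine Finset.sum_congr rfl fun j _ => Finset.sum_congr rfl fun l _ => ?_
  rw [Finset.erase_right_comm]
  refine if_congr ⟨?_, ?_⟩ rfl rfl
  · exact cond_swap D hsymm lab x y hxy K l j
  · exact cond_swap D hsymm lab y x (fun h => hxy (hsymm _ _ h)) K j l

/-- vanishing on small sets -/
def Van {R : Type} [CommRing R] (c : ℕ) (v : Finset (Fin k) → R) : Prop :=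
  ∀ K : Finset (Fin k), K.card < c → v K = 0

theorem Van.add {R : Type} [CommRing R] {c : ℕ} {v w : Finset (Fin k) → R}
    (hv : Van c v) (hw : Van c w) : Van c (v + w) := fun K hK => by
  simp [hv K hK, hw K hK]

theorem Van.mono {R : Type} [CommRing R] {c d : ℕ} {v : Finset (Fin k) → R}
    (hv : Van c v) (h : d ≤ c) : Van d v := fun K hK => hv K (by omega)

/-- operators raising the filtration -/
def Up {R : Type} [CommRing R] (f : Module.End R (Finset (Fin k) → R)) : Prop :=
  ∀ c v, Van c v → Van (c + 1) (f v)

theorem up_E (R : Type) [CommRing R] (D : X → X → Prop) (lab : Fin k → X) (x : X) :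
    Up (E R D lab x) := by
  classical
  intro c v hv K hK
  rw [E_apply]
  refine Finset.sum_eq_zero fun j _ => ?_
  split_ifs with h
  · apply hv
    have := Finset.card_erase_lt_of_mem h.2.1
    omega
  · rfl

theorem Up.pow_eq_zero {R : Type} [CommRing R] {f : Module.End R (Finset (Fin k) → R)}
    (hf : Up f) : f ^ (k + 1) = 0 := by
  have h : ∀ m v, Van m ((f ^ m) v) := by
    intro m
    induction m with
    | zero => intro v K hK; omega
    | succ m ih =>
      intro v
      rw [pow_succ', Module.End.mul_apply]
      exact hf _ _ (ih v)
  refine LinearMap.ext fun v => funext fun K => h (k + 1) v K ?_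
  have := Finset.card_le_univ K
  simp at this
  omega

/-- unipotent operators -/
def U (R : Type) [CommRing R] (k : ℕ) : Submonoid (Module.End R (Finset (Fin k) → R)) where
  carrier := {f | Up (f - 1)}
  one_mem' := by
    intro c v hv K hK
    simp
  mul_mem' := by
    intro f g hf hg c v hv
    have h : (f * g - 1) v = (f - 1) ((g - 1) v) + ((f - 1) v + (g - 1) v) := by
      simp
    rw [h]
    exact ((hf _ _ (hg _ _ hv)).mono (by omega)).add ((hf _ _ hv).add (hg _ _ hv))

theorem U_pow (p : ℕ) (hp : p.Prime) (s : ℕ) (f : U (ZMod (p ^ s)) k) :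
    f ^ p ^ (k + 1 + s) = 1 := by
  apply Subtype.ext
  have h := unip_pow p hp s (k + 1) (f.1 - 1) f.2.pow_eq_zero (by
    have h0 : ((p ^ s : ℕ) : ZMod (p ^ s)) = 0 := ZMod.natCast_self _
    refine LinearMap.ext fun v => funext fun K => ?_
    rw [← Nat.cast_pow, ← nsmul_one]
    rw [LinearMap.smul_apply, Pi.smul_apply, nsmul_eq_mul, h0]
    simp)
  rw [add_sub_cancel] at h
  simpa using h

/-- the group structure -/
noncomputable abbrev UGroup (p : ℕ) (hp : p.Prime) (s k : ℕ) : Group (U (ZMod (p ^ s)) k) :=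
  { (inferInstance : Monoid (U (ZMod (p ^ s)) k)) with
    inv := fun f => f ^ (p ^ (k + 1 + s) - 1)
    inv_mul_cancel := fun f => by
      change f ^ (p ^ (k + 1 + s) - 1) * f = 1
      rw [← pow_succ, Nat.sub_add_cancel (Nat.one_le_pow _ _ hp.pos), U_pow p hp] }

/-- The state supported below `i`. -/
def Supp {R : Type} [CommRing R] (i : ℕ) (v : Finset (Fin k) → R) : Prop :=
  ∀ K : Finset (Fin k), (∃ c ∈ K, c.val < i) → v K = 0

/-- the set of indices at least `i` -/
def B (k i : ℕ) : Finset (Fin k) := Finset.univ.filter fun j => i ≤ j.val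

theorem mem_B {i : ℕ} {j : Fin k} : j ∈ B k i ↔ i ≤ j.val := by simp [B]

theorem E_supp (R : Type) [CommRing R] (D : X → X → Prop) (lab : Fin k → X)
    (H : ∀ i j : Fin k, i < j → lab i = lab j → ∃ l, i < l ∧ l < j ∧ D (lab l) (lab i))
    (i : Fin k) {v : Finset (Fin k) → R} (hv : Supp i.val v) :
    Supp i.val (E R D lab (lab i) v) := by
  classical
  rintro K ⟨c, hcK, hci⟩
  rw [E_apply]
  refine Finset.sum_eq_zero fun j _ => ?_
  split_ifs with h
  · obtain ⟨h1, h2, h3⟩ := h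
    apply hv
    by_cases hj : j = c
    · subst hj
      obtain ⟨l, hjl, hli, hD⟩ := H j i hci h1
      exact ⟨l, (h3 l hD).mp hjl, hli⟩
    · exact ⟨c, Finset.mem_erase.mpr ⟨Ne.symm hj, hcK⟩, hci⟩
  · rfl

theorem not_cond (D : X → X → Prop) (lab : Fin k → X)
    (H : ∀ i j : Fin k, i < j → lab i = lab j → ∃ l, i < l ∧ l < j ∧ D (lab l) (lab i))
    (i : Fin k) (K : Finset (Fin k)) (hK : B k (i.val + 1) ⊆ K) (j : Fin k) (hij : i < j) :
    ¬ Cond D lab (lab i) K j := by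
  rintro ⟨h1, h2, h3⟩
  obtain ⟨l, hil, hlj, hD⟩ := H i j hij h1.symm
  have := (h3 l (h1 ▸ hD)).mpr (Finset.mem_erase.mpr ⟨hlj.ne, hK (mem_B.mpr hil)⟩)
  exact absurd this (not_lt.mpr hlj.le)

theorem E_B (R : Type) [CommRing R] (D : X → X → Prop) (lab : Fin k → X)
    (H : ∀ i j : Fin k, i < j → lab i = lab j → ∃ l, i < l ∧ l < j ∧ D (lab l) (lab i))
    (i : Fin k) (v : Finset (Fin k) → R) : E R D lab (lab i) v (B k (i.val + 1)) = 0 := by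
  classical
  rw [E_apply]
  refine Finset.sum_eq_zero fun j _ => if_neg fun h => ?_
  exact not_cond D lab H i _ subset_rfl j (mem_B.mp h.2.1) h

theorem E_B' (R : Type) [CommRing R] (D : X → X → Prop) (lab : Fin k → X)
    (H : ∀ i j : Fin k, i < j → lab i = lab j → ∃ l, i < l ∧ l < j ∧ D (lab l) (lab i))
    (i : Fin k) (v : Finset (Fin k) → R) :
    E R D lab (lab i) v (B k i.val) = v (B k (i.val + 1)) := by
  classical
  have he : (B k i.val).erase i = B k (i.val + 1) := by
    ext j
    simp only [Finset.mem_erase, mem_B, ne_eq, Fin.ext_iff]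
    omega
  rw [E_apply, Finset.sum_eq_single i]
  · rw [he, if_pos]
    refine ⟨rfl, mem_B.mpr le_rfl, fun b _ => ?_⟩
    rw [he, mem_B]; rfl
  · intro j _ hj
    refine if_neg fun h => ?_
    have h' := mem_B.mp h.2.1
    refine not_cond D lab H i _ ?_ j (lt_of_le_of_ne h' (Ne.symm hj)) h
    intro a ha
    rw [mem_B] at *
    omega
  · simp



/-- the unipotent operator of a letter -/
noncomputable def T (R : Type) [CommRing R] (D : X → X → Prop) (lab : Fin k → X) (x : X) :
    U R k :=
  ⟨1 + E R D lab x, by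
    change Up (1 + E R D lab x - 1)
    rw [add_sub_cancel_left]
    exact up_E R D lab x⟩

theorem T_apply (R : Type) [CommRing R] (D : X → X → Prop) (lab : Fin k → X) (x : X)
    (v : Finset (Fin k) → R) (K : Finset (Fin k)) :
    (T R D lab x).1 v K = v K + E R D lab x v K := rfl

theorem T_comm (R : Type) [CommRing R] (D : X → X → Prop)
    (hsymm : ∀ x y, D x y → D y x)
    (lab : Fin k → X) (x y : X) (hxy : ¬ D x y) :
    Commute (T R D lab x) (T R D lab y) := by
  apply Subtype.ext
  have h := E_comm R D hsymm lab x y hxy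
  exact ((Commute.one_left _).add_left ((Commute.one_right _).add_right h)).eq

theorem T_zpow (p : ℕ) (hp : p.Prime) (s : ℕ) (D : X → X → Prop) (lab : Fin k → X)
    (H : ∀ i j : Fin k, i < j → lab i = lab j → ∃ l, i < l ∧ l < j ∧ D (lab l) (lab i))
    (i : Fin k) (e : ℤ) (v : Finset (Fin k) → ZMod (p ^ s)) (hv : Supp i.val v) :
    letI := UGroup p hp s k
    Supp i.val ((T (ZMod (p ^ s)) D lab (lab i) ^ e).1 v) ∧
    (T (ZMod (p ^ s)) D lab (lab i) ^ e).1 v (B k (i.val + 1)) = v (B k (i.val + 1)) ∧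
    (T (ZMod (p ^ s)) D lab (lab i) ^ e).1 v (B k i.val) =
      v (B k i.val) + e * v (B k (i.val + 1)) := by
  letI := UGroup p hp s k
  set t := T (ZMod (p ^ s)) D lab (lab i) with ht
  have h1 : ∀ w, Supp i.val w → Supp i.val (t.1 w) := fun w hw K hK => by
    rw [ht, T_apply, hw K hK, E_supp _ D lab H i hw K hK, add_zero]
  have h2 : ∀ n : ℕ, ∀ w, Supp i.val w → Supp i.val ((t ^ n).1 w) := by
    intro n
    induction n with
    | zero => intro w hw; simpa using hw
    | succ n ih =>
      intro w hw
      rw [pow_succ]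
      exact ih _ (h1 w hw)
  have h3 : ∀ w, Supp i.val w → Supp i.val ((t⁻¹).1 w) := fun w hw => h2 _ w hw
  have hB : ∀ w, t.1 w (B k (i.val + 1)) = w (B k (i.val + 1)) := fun w => by
    rw [ht, T_apply, E_B _ D lab H, add_zero]
  have hB' : ∀ w, t.1 w (B k i.val) = w (B k i.val) + w (B k (i.val + 1)) := fun w => by
    rw [ht, T_apply, E_B' _ D lab H]
  have hinv : ∀ w, t.1 ((t⁻¹).1 w) = w := fun w => by
    have : (t * t⁻¹).1 w = w := by rw [mul_inv_cancel]; rfl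
    exact this
  induction e generalizing v with
  | zero => simpa using hv
  | succ n ih =>
    rw [zpow_add_one]
    obtain ⟨a, b, c⟩ := ih (t.1 v) (h1 v hv)
    refine ⟨a, b.trans (hB v), c.trans ?_⟩
    rw [hB, hB']
    push_cast
    ring
  | pred n ih =>
    rw [zpow_sub_one]
    obtain ⟨a, b, c⟩ := ih ((t⁻¹).1 v) (h3 v hv)
    have e1 := hB ((t⁻¹).1 v)
    have e2 := hB' ((t⁻¹).1 v)
    rw [hinv] at e1 e2
    refine ⟨a, b.trans e1.symm, c.trans ?_⟩
    rw [e2, ← e1]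
    push_cast
    ring

theorem main_coeff (p : ℕ) (hp : p.Prime) (s : ℕ) (D : X → X → Prop) (L : List (X × ℤ))
    (lab : Fin L.length → X) (hlab : ∀ i : Fin L.length, lab i = (L[i.val]).1)
    (H : ∀ i j : Fin L.length, i < j → lab i = lab j →
      ∃ l, i < l ∧ l < j ∧ D (lab l) (lab i))
    (i : ℕ) (hi : i ≤ L.length) :
    letI := UGroup p hp s L.length
    Supp i (((L.drop i).map fun a => T (ZMod (p ^ s)) D lab a.1 ^ a.2).prod.1
      (Pi.single ∅ 1)) ∧
    ((L.drop i).map fun a => T (ZMod (p ^ s)) D lab a.1 ^ a.2).prod.1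
      (Pi.single ∅ 1) (B L.length i) = (((L.drop i).map Prod.snd).prod : ℤ) := by
  letI := UGroup p hp s L.length
  induction hi using Nat.decreasingInduction with
  | self =>
    have hB : B L.length L.length = ∅ := by
      ext j; simp [mem_B]
    constructor
    · rintro K ⟨c, hc, -⟩
      simp only [List.drop_length, List.map_nil, List.prod_nil]
      change (Pi.single ∅ 1 : Finset (Fin L.length) → ZMod (p ^ s)) K = 0
      rw [Pi.single_eq_of_ne]
      rintro rfl
      simp at hc
    · simp only [List.drop_length, List.map_nil, List.prod_nil, hB]
      change (Pi.single ∅ 1 : Finset (Fin L.length) → ZMod (p ^ s)) ∅ = _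
      simp
  | of_succ i hi ih =>
    obtain ⟨ih1, ih2⟩ := ih
    rw [List.drop_eq_getElem_cons hi]
    simp only [List.map_cons, List.prod_cons]
    set v := ((L.drop (i + 1)).map fun a => T (ZMod (p ^ s)) D lab a.1 ^ a.2).prod.1
      (Pi.single ∅ 1) with hv
    have hs : Supp i v := fun K ⟨c, hc, hci⟩ => ih1 K ⟨c, hc, by omega⟩
    obtain ⟨a, b, c⟩ := T_zpow p hp s D lab H ⟨i, hi⟩ (L[i]).2 v hs
    rw [hlab] at a c
    refine ⟨a, c.trans ?_⟩
    rw [ih2, ih1 (B L.length i) ⟨⟨i, hi⟩, mem_B.mpr le_rfl, Nat.lt_succ_self i⟩]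
    push_cast
    ring

/-- value of a word of syllables -/
def ev {G : Type*} [Group G] (f : X → G) (L : List (X × ℤ)) : G :=
  (L.map fun a => f a.1 ^ a.2).prod

theorem exists_reduced {G : Type*} [Group G] (f : X → G) (D : X → X → Prop)
    (hD : ∀ x y, ¬ D x y → Commute (f x) (f y)) (g : G) (hg : ∃ L, ev f L = g) :
    ∃ L : List (X × ℤ), ev f L = g ∧ (∀ a ∈ L, a.2 ≠ 0) ∧
      ∀ i j : Fin L.length, i < j → (L[i.val]).1 = (L[j.val]).1 →
        ∃ l : Fin L.length, i < l ∧ l < j ∧ D (L[l.val]).1 (L[i.val]).1 := by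
  classical
  have hex : ∃ n, ∃ L : List (X × ℤ), L.length = n ∧ ev f L = g := by
    obtain ⟨L, hL⟩ := hg
    exact ⟨_, L, rfl, hL⟩
  obtain ⟨L, hlen, hL⟩ := Nat.find_spec hex
  have hmin : ∀ L' : List (X × ℤ), ev f L' = g → L.length ≤ L'.length := fun L' h => by
    rw [hlen]
    exact Nat.find_min' hex ⟨L', rfl, h⟩
  refine ⟨L, hL, ?_, ?_⟩
  · intro a ha h0
    obtain ⟨l1, l2, rfl⟩ := List.append_of_mem ha
    have := hmin (l1 ++ l2) (by rw [← hL]; simp [ev, h0])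
    simp at this
  · intro i j hij hlab
    by_contra! hcon
    obtain ⟨i, hi⟩ := i
    obtain ⟨j, hj⟩ := j
    simp only [Fin.mk_lt_mk] at hij hlab
    set mid := (L.drop (i + 1)).take (j - (i + 1)) with hmid
    have e1 : L = L.take i ++ (L[i] :: (mid ++ (L[j] :: L.drop (j + 1)))) := by
      conv_lhs => rw [← List.take_append_drop i L, List.drop_eq_getElem_cons hi,
        ← List.take_append_drop (j - (i + 1)) (L.drop (i + 1)), List.drop_drop,
        show i + 1 + (j - (i + 1)) = j by omega, List.drop_eq_getElem_cons hj]
    have hc : Commute (f L[i].1 ^ L[j].2) (mid.map fun a => f a.1 ^ a.2).prod := by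
      apply Commute.list_prod_right
      intro z hz
      obtain ⟨a, ha, rfl⟩ := List.mem_map.mp hz
      obtain ⟨n, hn, rfl⟩ := List.mem_iff_getElem.mp ha
      have hn' : n < j - (i + 1) := by
        simp only [hmid, List.length_take] at hn; omega
      have hc := hD _ _ (hcon ⟨i + 1 + n, by omega⟩ (by simp only [Fin.mk_lt_mk]; omega)
        (by simp only [Fin.mk_lt_mk]; omega))
      simp only [hmid, List.getElem_take, List.getElem_drop]
      exact (hc.symm.zpow_zpow _ _)
    have := hmin (L.take i ++ ((L[i].1, L[i].2 + L[j].2) :: (mid ++ L.drop (j + 1)))) (by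
      rw [← hL]
      conv_rhs => rw [e1]
      simp only [ev, List.map_append, List.map_cons, List.prod_append, List.prod_cons, ← hlab,
        zpow_add, mul_assoc]
      rw [← mul_assoc (f L[i].1 ^ L[j].2), hc.eq, mul_assoc])
    have h3 := congrArg List.length e1
    simp only [List.length_append, List.length_cons] at this h3
    omega

theorem exists_word (rels : Set (FreeGroup X)) (g : PresentedGroup rels) :
    ∃ L, ev (PresentedGroup.of (rels := rels)) L = g := by
  obtain ⟨w, rfl⟩ := PresentedGroup.mk_surjective rels g
  induction w using FreeGroup.induction_on with
  | C1 => exact ⟨[], by simp [ev]⟩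
  | of x => exact ⟨[(x, 1)], by simp [ev]; rfl⟩
  | inv_of x _ => exact ⟨[(x, -1)], by simp [ev]; rfl⟩
  | mul a b ha hb =>
    obtain ⟨L, hL⟩ := ha
    obtain ⟨M, hM⟩ := hb
    exact ⟨L ++ M, by rw [map_mul, ← hL, ← hM]; simp [ev]⟩

end Raag

/-- Every right-angled Artin group `⟨X | [x,y] = 1 for (x,y) ∈ S⟩` is residually
`p`-finite for every prime `p`. -/
theorem raag_residually_p_finite (p : ℕ) (hp : p.Prime) (X : Type*) [Finite X]
    (S : Set (X × X)) (rels : Set (FreeGroup X))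
    (hrels : rels = (fun q : X × X => ⁅FreeGroup.of q.1, FreeGroup.of q.2⁆) '' S) :
    ResiduallyPFinite p (PresentedGroup rels) := by
  classical
  intro g hg
  set D : X → X → Prop := fun x y => x = y ∨ ¬ ((x, y) ∈ S ∨ (y, x) ∈ S) with hDdef
  have hsymm : ∀ x y, D x y → D y x := by
    rintro x y (h | h)
    · exact Or.inl h.symm
    · exact Or.inr fun h' => h h'.symm
  have hS : ∀ x y, (x, y) ∈ S →
      Commute (PresentedGroup.of (rels := rels) x) (PresentedGroup.of y) := by
    intro x y hxy
    have h : PresentedGroup.mk rels ⁅FreeGroup.of x, FreeGroup.of y⁆ = 1 :=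
      PresentedGroup.one_of_mem (hrels ▸ ⟨(x, y), hxy, rfl⟩)
    rw [map_commutatorElement] at h
    exact commutatorElement_eq_one_iff_commute.mp h
  have hD : ∀ x y, ¬ D x y →
      Commute (PresentedGroup.of (rels := rels) x) (PresentedGroup.of y) := by
    intro x y h
    have h2 : (x, y) ∈ S ∨ (y, x) ∈ S := by
      by_contra hcon
      exact h (Or.inr hcon)
    rcases h2 with h | h
    · exact hS _ _ h
    · exact (hS _ _ h).symm
  obtain ⟨L, hL, hne, H⟩ := Raag.exists_reduced (PresentedGroup.of (rels := rels)) D hD g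
    (Raag.exists_word rels g)
  have hL0 : L ≠ [] := by
    rintro rfl
    exact hg (by rw [← hL]; rfl)
  have hz : (L.map Prod.snd).prod ≠ 0 := by
    rw [Ne, List.prod_eq_zero_iff]
    intro h
    obtain ⟨a, ha, h0⟩ := List.mem_map.mp h
    exact hne a ha h0
  obtain ⟨s, hs⟩ : ∃ s : ℕ, ¬ ((p ^ s : ℕ) : ℤ) ∣ (L.map Prod.snd).prod := by
    refine ⟨(L.map Prod.snd).prod.natAbs, fun h => ?_⟩
    have h1 := Nat.le_of_dvd (Int.natAbs_pos.mpr hz) (Int.natCast_dvd.mp h)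
    exact absurd h1 (not_le.mpr (Nat.lt_pow_self hp.one_lt))
  haveI : NeZero (p ^ s) := ⟨pow_ne_zero _ hp.ne_zero⟩
  haveI : Fact p.Prime := ⟨hp⟩
  letI := Raag.UGroup p hp s L.length
  set lab : Fin L.length → X := fun i => (L[i.val]).1 with hlab
  let t : X → Raag.U (ZMod (p ^ s)) L.length := Raag.T (ZMod (p ^ s)) D lab
  have hrel : ∀ r ∈ rels, FreeGroup.lift t r = 1 := by
    rw [hrels]
    rintro _ ⟨⟨x, y⟩, hxy, rfl⟩
    simp only [map_commutatorElement, FreeGroup.lift_apply_of]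
    rw [commutatorElement_eq_one_iff_commute]
    by_cases h : x = y
    · subst h; exact Commute.refl _
    · exact Raag.T_comm _ D hsymm lab x y (by simp [hDdef, h, hxy])
  refine ⟨Raag.U (ZMod (p ^ s)) L.length, inferInstance, PresentedGroup.toGroup hrel, ?_, ?_⟩
  · haveI : Finite (Module.End (ZMod (p ^ s)) (Finset (Fin L.length) → ZMod (p ^ s))) :=
      DFunLike.finite _
    rw [← IsPGroup.iff_card]
    exact fun f => ⟨_, Raag.U_pow p hp s f⟩
  · intro h1
    have himg : PresentedGroup.toGroup hrel g = (L.map fun a => t a.1 ^ a.2).prod := by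
      rw [← hL, Raag.ev, map_list_prod, List.map_map]
      congr 1
      refine List.map_congr_left fun a _ => ?_
      simp
    have hc := (Raag.main_coeff p hp s D L lab (fun _ => rfl) H 0 (Nat.zero_le _)).2
    rw [List.drop_zero] at hc
    change (L.map fun a => t a.1 ^ a.2).prod.1 _ _ = _ at hc
    rw [← himg, h1] at hc
    change (Pi.single ∅ 1 : Finset (Fin L.length) → ZMod (p ^ s)) _ = _ at hc
    rw [Pi.single_eq_of_ne] at hc
    · exact hs ((ZMod.intCast_zmod_eq_zero_iff_dvd _ _).mp hc.symm)
    · intro h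
      have : (⟨0, List.length_pos_iff.mpr hL0⟩ : Fin L.length) ∈ Raag.B L.length 0 :=
        Raag.mem_B.mpr (Nat.zero_le _)
      rw [h] at this
      simp at this
end

section
/- Let p be a prime number, let G be a residually p-finite group, and let a ∈ G. Then for every natural number n there exists a normal subgroup N of G whose index [G:N] is a power of p such that N ∩ ⟨a⟩ = ⟨a^{p^n}⟩, where ⟨a⟩ denotes the cyclic subgroup generated by a. -/
open scoped commutatorElement in
theorem aux_not_mem {P : Type*} [Group P] (p : ℕ) (hp : p.Prime) (k : ℕ)
    (hP : Nat.card P = p ^ k) (x : P) (hx : x ∈ Subgroup.normalClosure {x ^ p}) : x = 1 := by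
  have : Fact p.Prime := ⟨hp⟩
  have : Finite P := Nat.finite_of_card_ne_zero (by rw [hP]; exact pow_ne_zero _ hp.ne_zero)
  have hpg : IsPGroup p P := IsPGroup.of_card hP
  have : Group.IsNilpotent P := hpg.isNilpotent
  set M := Subgroup.normalClosure {x} with hM
  have hxM : x ∈ M := Subgroup.subset_normalClosure rfl
  let N : Subgroup P := ⁅M, (⊤ : Subgroup P)⁆
  have : N.Normal := inferInstanceAs (⁅M, (⊤ : Subgroup P)⁆).Normal
  let q := QuotientGroup.mk' N
  have hc : ∀ y : P ⧸ N, y * q x = q x * y := by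
    intro y
    obtain ⟨g, rfl⟩ := QuotientGroup.mk'_surjective N y
    have h1 : ⁅x, g⁆ ∈ N := Subgroup.commutator_mem_commutator hxM (Subgroup.mem_top g)
    have h2 : q ⁅x, g⁆ = 1 := (QuotientGroup.eq_one_iff _).2 h1
    rw [map_commutatorElement, commutatorElement_eq_one_iff_mul_comm] at h2
    exact h2.symm
  have hZ : (Subgroup.zpowers (q x ^ p)).Normal := by
    constructor
    rintro _ ⟨j, rfl⟩ y
    have : Commute y ((q x ^ p) ^ j) := ((show Commute y (q x) from hc y).pow_right p).zpow_right j
    refine ⟨j, ?_⟩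
    simp only
    rw [this.eq, mul_inv_cancel_right]
  have hle : Subgroup.normalClosure {x ^ p} ≤ (Subgroup.zpowers (q x ^ p)).comap q := by
    apply Subgroup.normalClosure_le_normal
    rintro _ rfl
    simp [Subgroup.mem_zpowers]
  obtain ⟨j, hj⟩ := Subgroup.mem_zpowers_iff.1 (Subgroup.mem_comap.1 (hle hx))
  have hall : ∀ m : ℕ, ∃ i : ℤ, q x = (q x) ^ ((p : ℤ) ^ m * i) := by
    intro m
    refine ⟨j ^ m, ?_⟩
    induction m with
    | zero => simp
    | succ m ih =>
      have h3 : (q x) ^ ((p : ℤ) * j) = q x := by rw [zpow_mul, zpow_natCast]; exact hj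
      have : (p : ℤ) ^ (m+1) * j ^ (m+1) = ((p : ℤ) * j) * ((p : ℤ) ^ m * j ^ m) := by ring
      rw [this, zpow_mul, h3]; exact ih
  have hq1 : q x = 1 := by
    obtain ⟨i, hi⟩ := hall k
    have : q x ^ (p ^ k) = 1 := by rw [← map_pow, ← hP, pow_card_eq_one', map_one]
    rw [hi, zpow_mul]
    have h4 : q x ^ ((p : ℤ) ^ k) = 1 := by rw [← this]; exact_mod_cast zpow_natCast (q x) (p ^ k)
    rw [h4, one_zpow]
  have hxN : x ∈ N := (QuotientGroup.eq_one_iff _).1 hq1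
  have hMN : M ≤ N := Subgroup.normalClosure_le_normal (by rintro _ rfl; exact hxN)
  have hl : ∀ m, M ≤ (⊤ : Subgroup P).lowerCentralSeries m := by
    intro m
    induction m with
    | zero => simp
    | succ m ih => exact hMN.trans (Subgroup.commutator_mono ih le_rfl)
  obtain ⟨m, hm⟩ := Subgroup.nilpotent_iff_lowerCentralSeries.1 (inferInstance : Group.IsNilpotent P)
  have := hl m hxM
  rw [hm] at this
  simpa using this

theorem exists_normal_p_power_index_inter_zpowers (p : ℕ) (hp : p.Prime)
    (G : Type*) [Group G] (hG : ResiduallyPFinite p G) (a : G) (n : ℕ) :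
    ∃ N : Subgroup G, N.Normal ∧ (∃ k : ℕ, N.index = p ^ k) ∧
      N ⊓ Subgroup.zpowers a = Subgroup.zpowers (a ^ p ^ n) := by
  induction n with
  | zero => exact ⟨⊤, inferInstance, ⟨0, by simp⟩, by simp⟩
  | succ n ih =>
    by_cases hx : a ^ p ^ n = 1
    · obtain ⟨N, h1, h2, h3⟩ := ih
      refine ⟨N, h1, h2, ?_⟩
      rw [h3, pow_succ, pow_mul, hx, one_pow]
    obtain ⟨P, _, f, ⟨k, hk⟩, hf⟩ := hG _ hx
    have hP : IsPGroup p P := IsPGroup.of_card hk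
    have : Finite P := Nat.finite_of_card_ne_zero (by rw [hk]; exact pow_ne_zero _ hp.ne_zero)
    have : Fact p.Prime := ⟨hp⟩
    have hnot : f (a ^ p ^ n) ∉ Subgroup.normalClosure {f (a ^ p ^ n) ^ p} :=
      fun h => hf (aux_not_mem p hp k hk _ h)
    set K := Subgroup.normalClosure {f (a ^ p ^ n) ^ p} with hK
    have hN : (K.comap f).Normal := inferInstance
    have hmem : a ^ p ^ (n+1) ∈ K.comap f := by
      rw [Subgroup.mem_comap, pow_succ, pow_mul, map_pow]
      exact Subgroup.subset_normalClosure rfl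
    refine ⟨K.comap f, hN, ?_, ?_⟩
    · have h1 : (K.comap f).index ∣ p ^ k := by
        rw [Subgroup.index_comap, ← hk]
        exact (Subgroup.relIndex_dvd_card K f.range).trans (Subgroup.card_subgroup_dvd_card _)
      obtain ⟨m, -, hm⟩ := (Nat.dvd_prime_pow hp).1 h1
      exact ⟨m, hm⟩
    · have ho : orderOf (a : G ⧸ K.comap f) = p ^ (n+1) := by
        apply orderOf_eq_prime_pow
        · rw [← QuotientGroup.mk_pow, QuotientGroup.eq_one_iff]; exact hnot
        · rw [← QuotientGroup.mk_pow, QuotientGroup.eq_one_iff]; exact hmem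
      apply le_antisymm
      · rintro _ ⟨h, ⟨j, rfl⟩⟩
        have h' : (a : G ⧸ K.comap f) ^ j = 1 := by
          rw [← QuotientGroup.mk_zpow, QuotientGroup.eq_one_iff]; exact h
        rw [← orderOf_dvd_iff_zpow_eq_one, ho] at h'
        obtain ⟨i, rfl⟩ := h'
        exact ⟨i, by simp only [zpow_mul, zpow_natCast]⟩
      · rw [Subgroup.zpowers_le]
        exact ⟨hmem, Subgroup.npow_mem_zpowers a _⟩
end

section
/- Let p be a prime number, let G be a finite p-group, and let a ∈ G be an element of order p^n. Then for every i with 0 ≤ i ≤ n there exists a normal subgroup K of G such that the image of a in the quotient G/K has order exactly p^i. -/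
universe u

theorem aux_hom (p : ℕ) (hp : p.Prime) : ∀ (N : ℕ) (G : Type u) [Group G]
    [Finite G] (_ : IsPGroup p G) (_ : Nat.card G = N) (a : G) (n : ℕ)
    (_ : orderOf a = p ^ n) (i : ℕ) (_ : i ≤ n),
    ∃ (H : Type u) (_ : Group H) (f : G →* H), orderOf (f a) = p ^ i := by
  haveI : Fact p.Prime := ⟨hp⟩
  intro N
  induction N using Nat.strong_induction_on with
  | _ N ih =>
  intro G _ _ hG hN a n ha i hi
  rcases hi.eq_or_lt with rfl | hlt
  · exact ⟨G, inferInstance, MonoidHom.id G, ha⟩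
  have hne : a ≠ 1 := by
    rintro rfl
    rw [orderOf_one] at ha
    have := Nat.one_lt_pow (by omega : n ≠ 0) hp.one_lt
    omega
  haveI : Nontrivial G := ⟨a, 1, hne⟩
  haveI := hG.center_nontrivial
  have hd : p ∣ Nat.card (Subgroup.center G) := by
    rcases (hG.to_subgroup (Subgroup.center G)).card_eq_or_dvd with h | h
    · have := Finite.one_lt_card (α := Subgroup.center G)
      omega
    · exact h
  obtain ⟨z, hz⟩ := exists_prime_orderOf_dvd_card' p hd
  have hz' : orderOf (z : G) = p := by rw [Subgroup.orderOf_coe, hz]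
  have hnorm : (Subgroup.zpowers (z : G)).Normal := by
    refine ⟨fun x hx g => ?_⟩
    have hc : x ∈ Subgroup.center G :=
      (Subgroup.zpowers_le.2 z.2) hx
    rw [Subgroup.mem_center_iff.1 hc g, mul_inv_cancel_right]
    exact hx
  have hcard : Nat.card (G ⧸ Subgroup.zpowers (z : G)) < N := by
    have h1 := Subgroup.card_eq_card_quotient_mul_card_subgroup (Subgroup.zpowers (z : G))
    rw [Nat.card_zpowers, hz', hN] at h1
    have h2 := Nat.card_pos (α := G ⧸ Subgroup.zpowers (z : G))
    have := hp.two_le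
    nlinarith
  have hQ : IsPGroup p (G ⧸ Subgroup.zpowers (z : G)) := hG.to_quotient _
  obtain ⟨m, hm⟩ := IsPGroup.iff_orderOf.1 hQ (QuotientGroup.mk' _ a)
  have hle : n ≤ m + 1 := by
    have h1 := pow_orderOf_eq_one (QuotientGroup.mk' (Subgroup.zpowers (z : G)) a)
    rw [hm, ← map_pow, QuotientGroup.mk'_apply, QuotientGroup.eq_one_iff] at h1
    have h2 := (orderOf_dvd_of_mem_zpowers h1)
    rw [hz', orderOf_dvd_iff_pow_eq_one, ← pow_mul, ← pow_succ,
      ← orderOf_dvd_iff_pow_eq_one, ha] at h2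
    exact (Nat.pow_dvd_pow_iff_le_right hp.one_lt).1 h2
  obtain ⟨H, hH, f, hf⟩ := ih _ hcard _ hQ rfl _ m hm i (by omega)
  exact ⟨H, hH, f.comp (QuotientGroup.mk' _), hf⟩

theorem exists_quotient_orderOf_eq (p : ℕ) (hp : p.Prime) (G : Type*) [Group G]
    [Finite G] (hG : ∃ k : ℕ, Nat.card G = p ^ k) (a : G) (n : ℕ)
    (ha : orderOf a = p ^ n) :
    ∀ i : ℕ, i ≤ n → ∃ (K : Subgroup G) (_ : K.Normal),
      orderOf ((QuotientGroup.mk' K) a) = p ^ i := by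
  intro i hi
  obtain ⟨k, hk⟩ := hG
  obtain ⟨H, _, f, hf⟩ := aux_hom p hp _ G (IsPGroup.of_card hk) rfl a n ha i hi
  refine ⟨f.ker, inferInstance, ?_⟩
  rw [← hf, ← orderOf_injective (QuotientGroup.kerLift f) (QuotientGroup.kerLift_injective f)]
  rfl
end

section
/- Let p be a prime number and let G1 and G2 be residually p-finite groups with a common cyclic subgroup A. Then G1 and G2 are each topologically p-embedded in the free product with amalgamation G1 *_A G2: for each i ∈ {1,2} and each normal subgroup N of Gi of index a power of p there exists a normal subgroup M of G1 *_A G2 of index a power of p with M ∩ Gi ≤ N. -/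
theorem exists_sec {G Q : Type*} [Group G] [Group Q] (f : G →* Q) :
    ∃ (s : Q → G) (t : Q → Q), (∀ x, x = f (s x) * t x) ∧ ∀ g x, t (f g * x) = t x := by
  let t : Q → Q := fun x => Quotient.out (Quotient.mk (QuotientGroup.rightRel f.range) x)
  have h1 : ∀ x, ∃ g, f g = x * (t x)⁻¹ := by
    intro x
    have h : (QuotientGroup.rightRel f.range) (t x) x := Quotient.exact (Quotient.out_eq _)
    rw [QuotientGroup.rightRel_apply] at h
    exact h
  choose s hs using h1
  refine ⟨s, t, fun x => by rw [hs]; group, fun g x => ?_⟩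
  have : Quotient.mk (QuotientGroup.rightRel f.range) (f g * x)
      = Quotient.mk (QuotientGroup.rightRel f.range) x := by
    apply Quotient.sound
    change (QuotientGroup.rightRel f.range) _ _
    rw [QuotientGroup.rightRel_apply]
    exact ⟨g⁻¹, by simp⟩
  simp only [t, this]

theorem exists_wreath {p : ℕ} {G Q : Type*} [Group G] [Group Q] (f : G →* Q) (s : Q → G)
    (hs : ∀ g x, f ((s (f g * x))⁻¹ * g * s x) = 1) (l : G → ZMod p)
    (hl : ∀ x y, f x = 1 → f y = 1 → l (x * y) = l x + l y) :
    ∃ W : G →* (RegularWreathProduct (Multiplicative (ZMod p)) Q),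
      (∀ g, (W g).right = f g) ∧
      ∀ g y, (W g).left y = Multiplicative.ofAdd (l ((s y)⁻¹ * g * s ((f g)⁻¹ * y))) := by
  have hs' : ∀ g y, f ((s y)⁻¹ * g * s ((f g)⁻¹ * y)) = 1 := by
    intro g y
    have := hs g ((f g)⁻¹ * y)
    rwa [mul_inv_cancel_left] at this
  refine ⟨MonoidHom.mk' (fun g => ⟨fun y =>
    Multiplicative.ofAdd (l ((s y)⁻¹ * g * s ((f g)⁻¹ * y))), f g⟩) ?_, fun _ => rfl,
    fun _ _ => rfl⟩
  intro g h
  ext y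
  · simp only [RegularWreathProduct.mul_left, Pi.mul_apply, ← ofAdd_add]
    rw [← hl _ _ (hs' _ _) (hs' _ _)]
    congr 2
    simp [mul_assoc]
  · simp

/-- `K` is the family of kernels of compatible maps to a finite `p`-group. -/
def GoodFam (p : ℕ) {A : Type*} [Group A] {ι : Type*} {G : ι → Type*} [∀ i, Group (G i)]
    (φ : ∀ i, A →* G i) (K : ∀ i, Subgroup (G i)) : Prop :=
  ∃ (Q : Type) (_ : Group Q) (α : ∀ i, G i →* Q) (θ : A →* Q), (∃ k, Nat.card Q = p ^ k) ∧
    (∀ i b, α i (φ i b) = θ b) ∧ ∀ i x, α i x = 1 ↔ x ∈ K i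

theorem GoodFam.step {p : ℕ} (hp : p.Prime) {A : Type*} [Group A] {ι : Type*} {G : ι → Type*}
    [∀ i, Group (G i)] {φ : ∀ i, A →* G i} {K' : ∀ i, Subgroup (G i)} (h : GoodFam p φ K')
    (l : ∀ i, G i → ZMod p)
    (hmul : ∀ i, ∀ x ∈ K' i, ∀ y ∈ K' i, l i (x * y) = l i x + l i y)
    (hconj : ∀ i g, ∀ x ∈ K' i, l i (g⁻¹ * x * g) = l i x)
    (hag : ∀ i j b, φ i b ∈ K' i → l i (φ i b) = l j (φ j b))
    (K : ∀ i, Subgroup (G i)) (hK : ∀ i x, x ∈ K i ↔ x ∈ K' i ∧ l i x = 0) : GoodFam p φ K := by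
  obtain ⟨Q, _, α, θ, ⟨k, hk⟩, hθ, hker⟩ := h
  obtain ⟨e, r, he, hr⟩ := exists_sec θ
  choose ρ t hρ ht using fun i => exists_sec (α i)
  let s : ∀ i, Q → G i := fun i x => φ i (e x) * ρ i (r x)
  have hst : ∀ i x, x = α i (s i x) * t i x := by
    intro i x
    have h1 : t i x = t i (r x) := by
      conv_lhs => rw [he x, ← hθ i, ht]
    simp only [s, map_mul, hθ, h1, mul_assoc]
    rw [← hρ i (r x), ← he x]
  have hs : ∀ i g x, α i ((s i (α i g * x))⁻¹ * g * s i x) = 1 := by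
    intro i g x
    have h1 := hst i (α i g * x)
    rw [ht] at h1
    have h2 := hst i x
    have h3 : α i (s i x) = x * (t i x)⁻¹ := eq_mul_inv_of_mul_eq h2.symm
    have h4 : α i (s i (α i g * x)) = α i g * x * (t i x)⁻¹ := eq_mul_inv_of_mul_eq h1.symm
    rw [map_mul, map_mul, map_inv, h3, h4]
    group
  choose W hWr hWl using fun i => exists_wreath (α i) (s i) (hs i) (l i)
    (fun x y hx hy => hmul i x ((hker i x).1 hx) y ((hker i y).1 hy))
  have key : ∀ i b y, (W i (φ i b)).left y =
      Multiplicative.ofAdd (l i (φ i ((e y)⁻¹ * b * e ((θ b)⁻¹ * y)))) ∧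
      φ i ((e y)⁻¹ * b * e ((θ b)⁻¹ * y)) ∈ K' i := by
    intro i b y
    have hr' : r ((θ b)⁻¹ * y) = r y := by rw [← map_inv, hr]
    have hm : φ i ((e y)⁻¹ * b * e ((θ b)⁻¹ * y)) ∈ K' i := by
      rw [← hker, hθ, map_mul, map_mul, map_inv]
      have h1 := he y
      have h2 := he ((θ b)⁻¹ * y)
      rw [hr'] at h2
      have h3 : θ (e y) = y * (r y)⁻¹ := eq_mul_inv_of_mul_eq h1.symm
      have h4 : θ (e ((θ b)⁻¹ * y)) = (θ b)⁻¹ * y * (r y)⁻¹ := eq_mul_inv_of_mul_eq h2.symm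
      rw [h3, h4]
      group
    refine ⟨?_, hm⟩
    rw [hWl, hθ, ← hconj i (ρ i (r y)) _ hm]
    simp only [s, hr']
    congr 2
    simp [mul_assoc]
  have hfin : Finite Q := Nat.finite_of_card_ne_zero (by rw [hk]; exact pow_ne_zero _ hp.ne_zero)
  have hW : ∀ i j b, W i (φ i b) = W j (φ j b) := by
    intro i j b
    ext y
    · rw [(key i b y).1, (key j b y).1, hag i j _ (key i b y).2]
    · rw [hWr, hWr, hθ, hθ]
  have hker' : ∀ i x, W i x = 1 ↔ x ∈ K i := by
    intro i x
    rw [hK, ← hker]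
    have hl1 : α i x = 1 → ∀ y, (W i x).left y = Multiplicative.ofAdd (l i x) := by
      intro hx y
      rw [hWl, hx, inv_one, one_mul, hconj i _ _ ((hker i x).1 hx)]
    constructor
    · intro h
      have h1 : α i x = 1 := by rw [← hWr, h]; rfl
      refine ⟨h1, ?_⟩
      have := hl1 h1 1
      rw [h] at this
      exact (Multiplicative.ofAdd.injective this).symm
    · rintro ⟨h1, h2⟩
      ext y
      · rw [hl1 h1, h2]; rfl
      · rw [hWr, h1]; rfl
  have hcard : ∃ k, Nat.card (RegularWreathProduct (Multiplicative (ZMod p)) Q) = p ^ k := by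
    rw [RegularWreathProduct.card, hk]
    have : Nat.card (Multiplicative (ZMod p)) = p := Nat.card_zmod p
    rw [this, ← pow_add]
    exact ⟨_, rfl⟩
  rcases isEmpty_or_nonempty ι with hι | ⟨⟨i0⟩⟩
  · exact ⟨Q, _, α, θ, ⟨k, hk⟩, hθ, fun i => hι.elim i⟩
  · exact ⟨_, inferInstance, W, (W i0).comp (φ i0), hcard, fun i b => hW i i0 b, hker'⟩

theorem exists_up {p : ℕ} (hp : p.Prime) {G : Type*} [Group G] (K : Subgroup G) (hn : K.Normal)
    (hi : ∃ k, K.index = p ^ k) (ht : K ≠ ⊤) :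
    ∃ (K' : Subgroup G) (l : G → ZMod p), K'.Normal ∧ (∃ k, K'.index = p ^ k) ∧ K < K' ∧
      (∀ x ∈ K', x ^ p ∈ K) ∧
      (∀ x ∈ K', ∀ y ∈ K', l (x * y) = l x + l y) ∧ (∀ g, ∀ x ∈ K', l (g⁻¹ * x * g) = l x) ∧
      (∀ x, x ∈ K ↔ x ∈ K' ∧ l x = 0) := by
  have := Fact.mk hp
  obtain ⟨k, hk⟩ := hi
  have hfin : Finite (G ⧸ K) := Nat.finite_of_card_ne_zero
    (by change K.index ≠ 0; rw [hk]; exact pow_ne_zero _ hp.ne_zero)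
  have hP : IsPGroup p (G ⧸ K) := IsPGroup.of_card (n := k) hk
  have hnt : Nontrivial (G ⧸ K) := by
    rw [← not_subsingleton_iff_nontrivial]
    intro h
    exact ht (QuotientGroup.subgroup_eq_top_of_subsingleton K h)
  have hc := hP.center_nontrivial
  obtain ⟨n, hn0, hcard⟩ := (hP.to_subgroup (Subgroup.center (G ⧸ K))).nontrivial_iff_card.1 hc
  obtain ⟨⟨z, hzc⟩, hz⟩ := exists_prime_orderOf_dvd_card' (G := Subgroup.center (G ⧸ K)) p
    (by rw [hcard]; exact dvd_pow_self _ hn0.ne')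
  rw [Subgroup.orderOf_mk] at hz
  rw [Subgroup.mem_center_iff] at hzc
  have hcomm : ∀ (k : ℤ) (g : G ⧸ K), g⁻¹ * z ^ k * g = z ^ k := by
    intro k g
    have : Commute g (z ^ k) := (show Commute g z from hzc g).zpow_right k
    rw [mul_assoc, ← this.eq, inv_mul_cancel_left]
  have hzn : (Subgroup.zpowers z).Normal := by
    constructor
    rintro _ ⟨k, rfl⟩ g
    have := hcomm k g⁻¹
    rw [inv_inv] at this
    exact ⟨k, this.symm⟩
  let K' := (Subgroup.zpowers z).comap (QuotientGroup.mk' K)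
  have hex : ∀ x : G, ∃ k : ℤ, x ∈ K' → z ^ k = (x : G ⧸ K) := by
    intro x
    by_cases hx : x ∈ K'
    · obtain ⟨k, hk⟩ := hx
      exact ⟨k, fun _ => hk⟩
    · exact ⟨0, fun h => absurd h hx⟩
  choose e he using hex
  have hle : K ≤ K' := by
    intro x hx
    change (x : G ⧸ K) ∈ Subgroup.zpowers z
    rw [(QuotientGroup.eq_one_iff x).2 hx]
    exact one_mem _
  have hK'n : K'.Normal := hzn.comap _
  have hiff : ∀ a b : ℤ, (a : ZMod p) = b ↔ z ^ a = z ^ b := by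
    intro a b
    rw [zpow_eq_zpow_iff_modEq, hz, ZMod.intCast_eq_intCast_iff]
  refine ⟨K', fun x => (e x : ZMod p), hK'n, ?_, lt_of_le_of_ne hle ?_, ?_, ?_, ?_, ?_⟩
  · obtain ⟨m, -, hm⟩ := (Nat.dvd_prime_pow hp).1 (hk ▸ Subgroup.index_dvd_of_le hle)
    exact ⟨m, hm⟩
  · intro h
    obtain ⟨g, rfl⟩ := QuotientGroup.mk_surjective z
    have : g ∈ K' := Subgroup.mem_zpowers _
    rw [← h] at this
    rw [(QuotientGroup.eq_one_iff g).2 this, orderOf_one] at hz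
    exact hp.one_lt.ne hz
  · intro x hx
    rw [← QuotientGroup.eq_one_iff, QuotientGroup.mk_pow, ← he x hx, ← zpow_natCast, ← zpow_mul,
      mul_comm, zpow_mul, zpow_natCast, ← hz, pow_orderOf_eq_one, one_zpow]
  · intro x hx y hy
    dsimp only
    rw [← Int.cast_add, hiff, zpow_add, he x hx, he y hy, he _ (mul_mem hx hy)]
    rfl
  · intro g x hx
    have hx' : g⁻¹ * x * g ∈ K' := by
      have := hK'n.conj_mem x hx g⁻¹
      rwa [inv_inv] at this
    dsimp only
    rw [hiff, he _ hx', QuotientGroup.mk_mul, QuotientGroup.mk_mul, ← he x hx,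
      QuotientGroup.mk_inv, hcomm]
  · intro x
    have : ∀ h : x ∈ K', ((e x : ZMod p) = 0 ↔ x ∈ K) := by
      intro h
      have h2 := hiff (e x) 0
      rw [Int.cast_zero] at h2
      rw [h2, he x h, zpow_zero, QuotientGroup.eq_one_iff]
    exact ⟨fun h => ⟨hle h, (this (hle h)).2 h⟩, fun h => (this h.1).1 h.2⟩

theorem cyc_mem {A : Type*} [Group A] {a : A} (ha : ∀ x, x ∈ Subgroup.zpowers a)
    (H : Subgroup A) (hH : H.Normal) (k : ℤ) : a ^ k ∈ H ↔ (H.index : ℤ) ∣ k := by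
  have h1 : orderOf (a : A ⧸ H) = Nat.card (A ⧸ H) := by
    apply orderOf_eq_card_of_forall_mem_zpowers
    intro x
    obtain ⟨x, rfl⟩ := QuotientGroup.mk_surjective x
    obtain ⟨k, rfl⟩ := ha x
    exact ⟨k, rfl⟩
  rw [← QuotientGroup.eq_one_iff, QuotientGroup.mk_zpow, ← orderOf_dvd_iff_zpow_eq_one, h1]
  rfl

theorem cyc_le {A : Type*} [Group A] {a : A} (ha : ∀ x, x ∈ Subgroup.zpowers a)
    (H H' : Subgroup A) (hH : H.Normal) (hH' : H'.Normal) (h : H'.index ∣ H.index) : H ≤ H' := by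
  intro x hx
  obtain ⟨k, rfl⟩ := ha x
  dsimp only at *
  rw [cyc_mem ha _ hH] at hx
  rw [cyc_mem ha _ hH']
  exact (Int.natCast_dvd_natCast.2 h).trans hx

theorem comap_idx {p : ℕ} (hp : p.Prime) {A G : Type*} [Group A] [Group G] (f : A →* G)
    (K : Subgroup G) (hn : K.Normal) (hi : ∃ k, K.index = p ^ k) :
    ∃ k, (K.comap f).index = p ^ k := by
  obtain ⟨k, hk⟩ := hi
  rw [Subgroup.index_comap]
  obtain ⟨m, -, hm⟩ := (Nat.dvd_prime_pow hp).1 (hk ▸ K.relIndex_dvd_index_of_normal f.range)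
  exact ⟨m, hm⟩

theorem goodFam_of {p : ℕ} (hp : p.Prime) {A : Type*} [Group A] [IsCyclic A] {ι : Type*}
    [Fintype ι] {G : ι → Type*} [∀ i, Group (G i)] (φ : ∀ i, A →* G i) :
    ∀ (n : ℕ) (K : ∀ i, Subgroup (G i)), ∑ i, (K i).index = n → (∀ i, (K i).Normal) →
      (∀ i, ∃ k, (K i).index = p ^ k) →
      (∀ i j, (K i).comap (φ i) = (K j).comap (φ j)) → GoodFam p φ K := by
  have := Fact.mk hp
  intro n
  induction n using Nat.strong_induction_on with
  | _ n ih =>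
  intro K hsum hn hi hcm
  obtain ⟨a, ha⟩ := IsCyclic.exists_generator (α := A)
  have hlt : ∀ i (K' : Subgroup (G i)), K i < K' → K'.index < (K i).index := by
    intro i K' h
    have : (K i).FiniteIndex := ⟨by
      obtain ⟨k, hk⟩ := hi i
      rw [hk]; exact pow_ne_zero _ hp.ne_zero⟩
    exact Subgroup.index_strictAnti h
  by_cases hall : ∀ i, K i = ⊤
  · refine ⟨PUnit, inferInstance, fun _ => 1, 1, ⟨0, by simp⟩, fun _ _ => rfl, fun i x => ?_⟩
    simp [hall i]
  have hup := fun i => exists_up hp (K i) (hn i) (hi i)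
  choose K' l hK'n hK'i hK'lt hK'p hmul hconj hK using hup
  by_cases hone : ∃ i, ∃ h : K i ≠ ⊤, (K' i h).comap (φ i) = (K i).comap (φ i)
  · obtain ⟨i, hne, heq⟩ := hone
    have hex : ∀ j, ∃ (L : Subgroup (G j)) (m : G j → ZMod p), L.Normal ∧ (∃ k, L.index = p ^ k) ∧
        K j ≤ L ∧ (j = i → K j < L) ∧ L.comap (φ j) = (K j).comap (φ j) ∧
        (∀ x ∈ L, ∀ y ∈ L, m (x * y) = m x + m y) ∧ (∀ g, ∀ x ∈ L, m (g⁻¹ * x * g) = m x) ∧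
        (∀ x, x ∈ K j ↔ x ∈ L ∧ m x = 0) := by
      intro j
      by_cases hj : j = i
      · subst hj
        exact ⟨K' j hne, l j hne, hK'n j hne, hK'i j hne, (hK'lt j hne).le, fun _ => hK'lt j hne,
          heq, hmul j hne, hconj j hne, hK j hne⟩
      · exact ⟨K j, fun _ => 0, hn j, hi j, le_rfl, fun h => absurd h hj, rfl, by simp, by simp,
          by simp⟩
    choose L m hLn hLi hLle hLlt hLc hLm hLconj hLK using hex
    refine GoodFam.step hp (ih (∑ i, (L i).index) ?_ L rfl hLn hLi ?_) m hLm hLconj ?_ K hLK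
    · rw [← hsum]
      apply Finset.sum_lt_sum
      · intro j _
        rcases (hLle j).eq_or_lt with h | h
        · rw [h]
        · exact (hlt j _ h).le
      · exact ⟨i, Finset.mem_univ _, hlt i _ (hLlt i rfl)⟩
    · intro j j'
      rw [hLc, hLc, hcm]
    · have h0 : ∀ j b, φ j b ∈ L j → m j (φ j b) = 0 ∧ b ∈ (K j).comap (φ j) := by
        intro j b hb
        have : b ∈ (K j).comap (φ j) := by rw [← hLc]; exact hb
        exact ⟨((hLK j _).1 this).2, this⟩
      intro j j' b hb
      obtain ⟨h1, h2⟩ := h0 j b hb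
      rw [hcm j j', ← hLc] at h2
      rw [h1, (h0 j' b h2).1]
  · push Not at hone hall
    obtain ⟨i0, hi0⟩ := hall
    have hne : ∀ i, K i ≠ ⊤ := by
      intro i h
      apply hone i0 hi0
      have : (K i0).comap (φ i0) = ⊤ := by rw [hcm i0 i, h, Subgroup.comap_top]
      rw [this, eq_top_iff, ← this]
      exact Subgroup.comap_mono (hK'lt i0 hi0).le
    obtain ⟨s, hs⟩ := comap_idx hp (φ i0) (K i0) (hn i0) (hi i0)
    have hsi : ∀ i, ((K i).comap (φ i)).index = p ^ s := fun i => by rw [hcm i i0, hs]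
    have hcN : ∀ i, ((K i).comap (φ i)).Normal := fun i => (hn i).comap _
    have hcN' : ∀ i, ((K' i (hne i)).comap (φ i)).Normal := fun i => (hK'n i _).comap _
    have hidx : ∀ i, ((K' i (hne i)).comap (φ i)).index = p ^ (s - 1) ∧ 1 ≤ s := by
      intro i
      obtain ⟨s', hs'⟩ := comap_idx hp (φ i) (K' i (hne i)) (hK'n i _) (hK'i i _)
      have hle : (K i).comap (φ i) ≤ (K' i (hne i)).comap (φ i) :=
        Subgroup.comap_mono (hK'lt i _).le
      have h1 : s' < s := by
        by_contra hcon
        push Not at hcon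
        apply hone i (hne i)
        refine le_antisymm ?_ hle
        apply cyc_le ha _ _ (hcN' i) (hcN i)
        rw [hsi, hs']
        exact pow_dvd_pow _ hcon
      have h2 : a ^ ((p ^ s' : ℕ) : ℤ) ∈ (K' i (hne i)).comap (φ i) := by
        rw [cyc_mem ha _ (hcN' i), hs']
      have h3 : a ^ ((p ^ (s' + 1) : ℕ) : ℤ) ∈ (K i).comap (φ i) := by
        have := hK'p i _ _ h2
        rw [← map_pow, ← zpow_natCast, ← zpow_mul, ← Nat.cast_mul, ← pow_succ] at this
        exact this
      rw [cyc_mem ha _ (hcN i), hsi, Int.natCast_dvd_natCast,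
        Nat.pow_dvd_pow_iff_le_right hp.one_lt] at h3
      have : s' = s - 1 := by omega
      exact ⟨this ▸ hs', by omega⟩
    let c := a ^ (p ^ (s - 1))
    have hc : ∀ i, φ i c ∈ K' i (hne i) := by
      intro i
      change c ∈ (K' i (hne i)).comap (φ i)
      have := (cyc_mem ha _ (hcN' i) ((p ^ (s - 1) : ℕ) : ℤ)).2 (by rw [(hidx i).1])
      rwa [zpow_natCast] at this
    have hcn : ∀ i, l i (hne i) (φ i c) ≠ 0 := by
      intro i h0
      have h1 : c ∈ (K i).comap (φ i) := (hK i (hne i) _).2 ⟨hc i, h0⟩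
      have h2 := (cyc_mem ha _ (hcN i) ((p ^ (s - 1) : ℕ) : ℤ)).1 (by rwa [zpow_natCast])
      rw [hsi, Int.natCast_dvd_natCast, Nat.pow_dvd_pow_iff_le_right hp.one_lt] at h2
      have := (hidx i).2
      omega
    have hone' : ∀ i, l i (hne i) 1 = 0 := fun i => ((hK i (hne i) 1).1 (one_mem _)).2
    have hzp : ∀ i (k : ℤ), l i (hne i) (φ i (c ^ k)) = k * l i (hne i) (φ i c) := by
      intro i k
      have hmem : ∀ k : ℤ, φ i (c ^ k) ∈ K' i (hne i) := fun k => by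
        rw [map_zpow]; exact zpow_mem (hc i) k
      have hsucc : ∀ k : ℤ, l i (hne i) (φ i (c ^ (k + 1))) =
          l i (hne i) (φ i (c ^ k)) + l i (hne i) (φ i c) := by
        intro k
        rw [zpow_add_one, map_mul, hmul i _ _ (hmem k) _ (hc i)]
      induction k using Int.induction_on with
      | zero => simp [hone']
      | succ k ih => rw [hsucc, ih]; push_cast; ring
      | pred k ih =>
        have := hsucc (-k - 1)
        rw [sub_add_cancel, ih] at this
        rw [eq_sub_of_add_eq this.symm]
        push_cast; ring
    refine GoodFam.step hp (ih (∑ i, (K' i (hne i)).index) ?_ (fun i => K' i (hne i)) rfl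
      (fun i => hK'n i _) (fun i => hK'i i _) ?_)
      (fun i x => l i (hne i) x * (l i (hne i) (φ i c))⁻¹) ?_ ?_ ?_ K ?_
    · rw [← hsum]
      exact Finset.sum_lt_sum (fun i _ => (hlt i _ (hK'lt i _)).le)
        ⟨i0, Finset.mem_univ _, hlt i0 _ (hK'lt i0 _)⟩
    · intro i j
      apply le_antisymm
      · apply cyc_le ha _ _ (hcN' i) (hcN' j)
        rw [(hidx i).1, (hidx j).1]
      · apply cyc_le ha _ _ (hcN' j) (hcN' i)
        rw [(hidx i).1, (hidx j).1]
    · intro i x hx y hy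
      rw [hmul i _ x hx y hy, add_mul]
    · intro i g x hx
      rw [hconj i _ g x hx]
    · intro i j b hb
      obtain ⟨k, rfl⟩ := ha b
      dsimp only at hb ⊢
      have hb' : a ^ k ∈ (K' i (hne i)).comap (φ i) := hb
      rw [cyc_mem ha _ (hcN' i), (hidx i).1] at hb'
      obtain ⟨q, rfl⟩ := hb'
      rw [zpow_mul, zpow_natCast]
      change l i _ (φ i (c ^ q)) * _ = l j _ (φ j (c ^ q)) * _
      rw [hzp, hzp, mul_assoc, mul_assoc, mul_inv_cancel₀ (hcn i), mul_inv_cancel₀ (hcn j)]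
    · intro i x
      rw [hK i (hne i) x, mul_eq_zero, or_iff_left (inv_ne_zero (hcn i))]

theorem exists_match {p : ℕ} (hp : p.Prime) {A : Type*} [Group A] [IsCyclic A] {G : Type*}
    [Group G] (f : A →* G) (hf : Function.Injective f) (hres : ResiduallyPFinite p G)
    (B : Subgroup A) (hB : B.Normal) (hi : ∃ k, B.index = p ^ k) :
    ∃ L : Subgroup G, L.Normal ∧ (∃ k, L.index = p ^ k) ∧ L.comap f = B := by
  obtain ⟨a, ha⟩ := IsCyclic.exists_generator (α := A)
  obtain ⟨m, hm⟩ := hi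
  let P : ℕ → Prop := fun n => ∃ L : Subgroup G, L.Normal ∧ L.index = p ^ n ∧ L.comap f ≤ B
  have hP : ∃ n, P n := by
    rcases Nat.eq_zero_or_pos m with h0 | h0
    · refine ⟨0, ⊤, inferInstance, by simp, ?_⟩
      rw [h0, pow_zero, Subgroup.index_eq_one] at hm
      rw [hm]; exact le_top
    · have h1 : a ^ ((p ^ (m - 1) : ℕ) : ℤ) ∉ B := by
        rw [cyc_mem ha _ hB, hm, Int.natCast_dvd_natCast,
          Nat.pow_dvd_pow_iff_le_right hp.one_lt]
        omega
      have h2 : f (a ^ ((p ^ (m - 1) : ℕ) : ℤ)) ≠ 1 := by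
        intro h
        rw [← map_one f] at h
        exact h1 (hf h ▸ one_mem B)
      obtain ⟨R, _, g, ⟨k, hk⟩, hg⟩ := hres _ h2
      have hgi : ∃ n, g.ker.index = p ^ n := by
        rw [Subgroup.index_ker]
        obtain ⟨n, -, hn⟩ := (Nat.dvd_prime_pow hp).1 (hk ▸ Subgroup.card_subgroup_dvd_card g.range)
        exact ⟨n, hn⟩
      have hN : (g.ker.comap f).Normal := inferInstance
      obtain ⟨t, ht⟩ := comap_idx hp f g.ker inferInstance hgi
      obtain ⟨n, hn⟩ := hgi
      refine ⟨n, g.ker, inferInstance, hn, ?_⟩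
      apply cyc_le ha _ _ hN hB
      rw [hm, ht]
      apply pow_dvd_pow
      have h3 : a ^ ((p ^ (m - 1) : ℕ) : ℤ) ∉ g.ker.comap f := hg
      rw [cyc_mem ha _ hN, ht, Int.natCast_dvd_natCast,
          Nat.pow_dvd_pow_iff_le_right hp.one_lt] at h3
      omega
  classical
  obtain ⟨L, hLn, hLi, hLB⟩ := Nat.find_spec hP
  refine ⟨L, hLn, ⟨_, hLi⟩, ?_⟩
  by_contra hne
  have hLt : L ≠ ⊤ := by
    rintro rfl
    rw [Subgroup.comap_top, top_le_iff] at hLB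
    exact hne (by rw [Subgroup.comap_top, hLB])
  obtain ⟨L', -, hL'n, ⟨n', hn'⟩, hlt, hpow, -⟩ := exists_up hp L hLn ⟨_, hLi⟩ hLt
  have : L.FiniteIndex := ⟨by rw [hLi]; exact pow_ne_zero _ hp.ne_zero⟩
  have hidx := Subgroup.index_strictAnti hlt
  rw [hn', hLi, Nat.pow_lt_pow_iff_right hp.one_lt] at hidx
  apply Nat.find_min hP hidx
  refine ⟨L', hL'n, hn', ?_⟩
  have hN : (L.comap f).Normal := hLn.comap _
  have hN' : (L'.comap f).Normal := hL'n.comap _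
  obtain ⟨u, hu⟩ := comap_idx hp f L hLn ⟨_, hLi⟩
  obtain ⟨u', hu'⟩ := comap_idx hp f L' hL'n ⟨_, hn'⟩
  have h1 : m < u := by
    by_contra hcon
    push Not at hcon
    apply hne
    refine le_antisymm hLB (cyc_le ha _ _ hB hN ?_)
    rw [hu, hm]
    exact pow_dvd_pow _ hcon
  have h2 : a ^ ((p ^ u' : ℕ) : ℤ) ∈ L'.comap f := by
    rw [cyc_mem ha _ hN', hu']
  have h3 : a ^ ((p ^ (u' + 1) : ℕ) : ℤ) ∈ L.comap f := by
    have := hpow _ h2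
    rw [← map_pow, ← zpow_natCast, ← zpow_mul, ← Nat.cast_mul, ← pow_succ] at this
    exact this
  rw [cyc_mem ha _ hN, hu, Int.natCast_dvd_natCast,
    Nat.pow_dvd_pow_iff_le_right hp.one_lt] at h3
  apply cyc_le ha _ _ hN' hB
  rw [hm, hu']
  exact pow_dvd_pow _ (by omega)

/-- If `G true` and `G false` are residually `p`-finite groups with a common cyclic
subgroup `A`, then each factor is topologically `p`-embedded in the amalgamated free
product (the pushout of the two injections of `A`). -/
theorem factors_top_p_embedded_cyclic_amalgam (p : ℕ) (hp : p.Prime)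
    (A : Type*) [Group A] [IsCyclic A] (G : Bool → Type*) [∀ i, Group (G i)]
    (φ : ∀ i, A →* G i) (hinj : ∀ i, Function.Injective (φ i))
    (hres : ∀ i, ResiduallyPFinite p (G i)) :
    ∀ i, ∀ N : Subgroup (G i), N.Normal → (∃ k : ℕ, N.index = p ^ k) →
      ∃ M : Subgroup (Monoid.PushoutI φ), M.Normal ∧ (∃ k : ℕ, M.index = p ^ k) ∧
        M.comap (Monoid.PushoutI.of (φ := φ) i) ≤ N := by
  intro i N hN hNi
  have hex : ∀ j, ∃ L : Subgroup (G j), L.Normal ∧ (∃ k, L.index = p ^ k) ∧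
      L.comap (φ j) = N.comap (φ i) ∧ ∀ h : i = j, h ▸ N = L := by
    intro j
    by_cases h : i = j
    · subst h
      exact ⟨N, hN, hNi, rfl, fun _ => rfl⟩
    · obtain ⟨L, h1, h2, h3⟩ := exists_match hp (φ j) (hinj j) (hres j) (N.comap (φ i))
        (hN.comap _) (comap_idx hp (φ i) N hN hNi)
      exact ⟨L, h1, h2, h3, fun h' => absurd h' h⟩
  choose K hKn hKi hKc hKN using hex
  obtain ⟨Q, _, α, θ, ⟨k, hk⟩, hθ, hker⟩ := goodFam_of hp φ _ K rfl hKn hKi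
    (fun j j' => by rw [hKc, hKc])
  let F : Monoid.PushoutI φ →* Q :=
    Monoid.PushoutI.lift α θ (fun j => MonoidHom.ext fun b => hθ j b)
  refine ⟨F.ker, inferInstance, ?_, ?_⟩
  · rw [Subgroup.index_ker]
    obtain ⟨n, -, hn⟩ := (Nat.dvd_prime_pow hp).1 (hk ▸ Subgroup.card_subgroup_dvd_card F.range)
    exact ⟨n, hn⟩
  · intro x hx
    have h1 : F (Monoid.PushoutI.of i x) = 1 := hx
    rw [Monoid.PushoutI.lift_of, hker] at h1
    have h2 : N = K i := hKN i rfl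
    rw [h2]; exact h1
end

section
/- Let p be a prime number and let G1 and G2 be groups with a shared finitely generated central subgroup A (so A is a finitely generated abelian group contained in the center of each Gi). Assume A is topologically p-embedded in G1 and in G2. Then for each pair {N1, N2} with Ni a normal subgroup of Gi of index a power of p (i = 1, 2), there exists a pair {P1, P2} such that Pi is a normal subgroup of Gi of index a power of p, Pi ≤ Ni, and P1 ∩ A = P2 ∩ A; consequently G1 and G2 are each topologically p-embedded in the free product with amalgamation G1 *_A G2. -/
def IsPP (p n : ℕ) : Prop := ∃ k : ℕ, n = p ^ k

theorem IsPP.dvd {p m n : ℕ} (hp : p.Prime) (h : IsPP p n) (hd : m ∣ n) : IsPP p m := by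
  obtain ⟨k, rfl⟩ := h
  obtain ⟨j, _, hj⟩ := (Nat.dvd_prime_pow hp).1 hd
  exact ⟨j, hj⟩

theorem IsPP.mul {p m n : ℕ} (h : IsPP p m) (h' : IsPP p n) : IsPP p (m * n) := by
  obtain ⟨k, rfl⟩ := h
  obtain ⟨j, rfl⟩ := h'
  exact ⟨k + j, (pow_add _ _ _).symm⟩

theorem isPP_inf {p : ℕ} (hp : p.Prime) {G : Type*} [Group G] (M N : Subgroup G) [M.Normal]
    (hM : IsPP p M.index) (hN : IsPP p N.index) : IsPP p (M ⊓ N).index := by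
  have h : (M ⊓ N).index = M.relIndex N * N.index := by
    rw [← Subgroup.inf_relIndex_right, Subgroup.relIndex_mul_index inf_le_right]
  rw [h]
  exact (hM.dvd hp (Subgroup.relIndex_dvd_index_of_normal M N)).mul hN

theorem exists_adjust {p : ℕ} (hp : p.Prime) {A : Type*} [CommGroup A] {G : Type*} [Group G]
    (φ : A →* G) (hinj : Function.Injective φ) (hcent : ∀ a : A, φ a ∈ Subgroup.center G)
    (hemb : TopPEmbedded p φ.range) (B : Subgroup A) (hB : IsPP p B.index)
    (N : Subgroup G) (hNn : N.Normal) (hN : IsPP p N.index) (hBN : B ≤ N.comap φ) :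
    ∃ P : Subgroup G, P.Normal ∧ IsPP p P.index ∧ P ≤ N ∧ P.comap φ = B := by
  let e := MonoidHom.ofInjective hinj
  obtain ⟨M, hMn, hM, hMB⟩ := hemb (B.comap (e.symm : φ.range →* A)) inferInstance (by
    rw [Subgroup.index_comap_of_surjective _ e.symm.surjective]; exact hB)
  have hC : (B.map φ).Normal := ⟨by
    rintro _ ⟨b, hb, rfl⟩ g
    have := Subgroup.mem_center_iff.1 (hcent b) g
    rw [this, mul_inv_cancel_right]
    exact ⟨b, hb, rfl⟩⟩
  refine ⟨(M ⊓ N) ⊔ B.map φ, inferInstance,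
    (isPP_inf hp M N hM hN).dvd hp (Subgroup.index_dvd_of_le le_sup_left),
    sup_le inf_le_right (Subgroup.map_le_iff_le_comap.2 hBN), le_antisymm ?_ ?_⟩
  · intro a ha
    obtain ⟨m, hm, _, ⟨b, hb, rfl⟩, h⟩ := Subgroup.mem_sup_of_normal_right.1 (Subgroup.mem_comap.1 ha)
    have hm' : m = φ (a * b⁻¹) := by rw [map_mul, ← h]; simp
    have h1 : e (a * b⁻¹) ∈ M.subgroupOf φ.range := by
      rw [Subgroup.mem_subgroupOf]
      have : ((e (a * b⁻¹) : φ.range) : G) = φ (a * b⁻¹) := rfl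
      rw [this, ← hm']; exact hm.1
    have h2 := hMB h1
    rw [Subgroup.mem_comap] at h2
    have h3 : a * b⁻¹ ∈ B := by simpa using h2
    simpa using B.mul_mem h3 hb
  · exact Subgroup.map_le_iff_le_comap.1 le_sup_right

theorem amalgam_aux {p : ℕ} (hp : p.Prime)
    {A : Type*} [CommGroup A] {G : Bool → Type*} [∀ i, Group (G i)]
    (φ : ∀ i, A →* G i) (hcent : ∀ i, ∀ a : A, φ i a ∈ Subgroup.center (G i))
    (P : ∀ i, Subgroup (G i)) (hPn : ∀ i, (P i).Normal) (hP : ∀ i, IsPP p (P i).index)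
    (h : (P true).comap (φ true) = (P false).comap (φ false)) :
    ∃ M : Subgroup (Monoid.PushoutI φ), M.Normal ∧ IsPP p M.index ∧
        ∀ i, M.comap (Monoid.PushoutI.of (φ := φ) i) ≤ P i := by
  have := hPn true
  have := hPn false
  let d : A →* G true × G false := (φ true).prod ((φ false).comp (invMonoidHom : A →* A))
  have hd : d.range.Normal := ⟨by
    rintro _ ⟨b, rfl⟩ g
    refine ⟨b, ?_⟩
    have h1 := Subgroup.mem_center_iff.1 (hcent true b) g.1
    have h2 := Subgroup.mem_center_iff.1 (hcent false b⁻¹) g.2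
    ext
    · change φ true b = g.1 * φ true b * g.1⁻¹
      rw [h1, mul_inv_cancel_right]
    · change φ false b⁻¹ = g.2 * φ false b⁻¹ * g.2⁻¹
      rw [h2, mul_inv_cancel_right]⟩
  let K : Subgroup (G true × G false) := (P true).prod (P false) ⊔ d.range
  have hK : IsPP p K.index := by
    refine IsPP.dvd hp ?_ (Subgroup.index_dvd_of_le (le_sup_left : _ ≤ K))
    rw [Subgroup.index_prod]
    exact (hP _).mul (hP _)
  have hKm : ∀ x y, (x, y) ∈ K → ∃ a, x * (φ true a)⁻¹ ∈ P true ∧ y * φ false a ∈ P false := by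
    intro x y hxy
    obtain ⟨m, hm, _, ⟨b, rfl⟩, hb⟩ := Subgroup.mem_sup_of_normal_right.1 hxy
    have h1 : m.1 * φ true b = x := congrArg Prod.fst hb
    have h2 : m.2 * φ false b⁻¹ = y := congrArg Prod.snd hb
    refine ⟨b, ?_, ?_⟩
    · rw [← h1]; simpa using hm.1
    · rw [← h2]; simpa using hm.2
  let f : ∀ i, G i →* (G true × G false) ⧸ K := fun i => match i with
    | true => (QuotientGroup.mk' K).comp (MonoidHom.inl _ _)
    | false => (QuotientGroup.mk' K).comp (MonoidHom.inr _ _)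
  have hf : ∀ i, (f i).comp (φ i) = (f true).comp (φ true) := by
    intro i
    cases i
    · ext a
      refine QuotientGroup.eq.2 ?_
      refine (le_sup_right : d.range ≤ K) ⟨a, ?_⟩
      ext <;> simp [d]
    · rfl
  let F : Monoid.PushoutI φ →* (G true × G false) ⧸ K := Monoid.PushoutI.lift f _ hf
  refine ⟨F.ker, inferInstance, ?_, ?_⟩
  · rw [Subgroup.index_ker]
    exact hK.dvd hp (Subgroup.card_subgroup_dvd_card _)
  · intro i g hg
    have hg' : f i g = 1 := by
      have : F (Monoid.PushoutI.of i g) = 1 := hg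
      simpa [F] using this
    cases i
    · have h1 : ((1 : G true), g) ∈ K := (QuotientGroup.eq_one_iff _).1 hg'
      obtain ⟨a, h2, h3⟩ := hKm _ _ h1
      have h4 : a ∈ (P true).comap (φ true) := by
        rw [Subgroup.mem_comap]; simpa using h2
      rw [h] at h4
      exact (Subgroup.mul_mem_cancel_right (P false) (Subgroup.mem_comap.1 h4)).1 h3
    · have h1 : (g, (1 : G false)) ∈ K := (QuotientGroup.eq_one_iff _).1 hg'
      obtain ⟨a, h2, h3⟩ := hKm _ _ h1
      have h4 : a ∈ (P false).comap (φ false) := by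
        rw [Subgroup.mem_comap]; simpa using h3
      rw [← h] at h4
      exact (Subgroup.mul_mem_cancel_right (P true) ((P true).inv_mem (Subgroup.mem_comap.1 h4))).1 h2

/-- If `A` is a finitely generated abelian group embedded centrally (and topologically
`p`-embedded) in each of `G true` and `G false`, then compatible pairs of normal
subgroups of `p`-power index exist, and consequently each factor is topologically
`p`-embedded in the amalgamated free product (the pushout of the two embeddings). -/
theorem factors_top_p_embedded_central_amalgam (p : ℕ) (hp : p.Prime)
    (A : Type*) [CommGroup A] (hfg : Group.FG A) (G : Bool → Type*) [∀ i, Group (G i)]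
    (φ : ∀ i, A →* G i) (hinj : ∀ i, Function.Injective (φ i))
    (hcent : ∀ i, ∀ a : A, φ i a ∈ Subgroup.center (G i))
    (hemb : ∀ i, TopPEmbedded p (φ i).range) :
    (∀ N : ∀ i, Subgroup (G i), (∀ i, (N i).Normal) →
      (∀ i, ∃ k : ℕ, (N i).index = p ^ k) →
      ∃ P : ∀ i, Subgroup (G i), (∀ i, (P i).Normal) ∧
        (∀ i, ∃ k : ℕ, (P i).index = p ^ k) ∧ (∀ i, P i ≤ N i) ∧
        (P true).comap (φ true) = (P false).comap (φ false)) ∧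
    (∀ i, ∀ N : Subgroup (G i), N.Normal → (∃ k : ℕ, N.index = p ^ k) →
      ∃ M : Subgroup (Monoid.PushoutI φ), M.Normal ∧ (∃ k : ℕ, M.index = p ^ k) ∧
        M.comap (Monoid.PushoutI.of (φ := φ) i) ≤ N) := by
  have key : ∀ N : ∀ i, Subgroup (G i), (∀ i, (N i).Normal) →
      (∀ i, ∃ k : ℕ, (N i).index = p ^ k) →
      ∃ P : ∀ i, Subgroup (G i), (∀ i, (P i).Normal) ∧
        (∀ i, ∃ k : ℕ, (P i).index = p ^ k) ∧ (∀ i, P i ≤ N i) ∧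
        (P true).comap (φ true) = (P false).comap (φ false) := by
    intro N hNn hN
    have hc : ∀ i, IsPP p ((N i).comap (φ i)).index := fun i => by
      have := hNn i
      rw [Subgroup.index_comap]
      exact IsPP.dvd hp (hN i) (Subgroup.relIndex_dvd_index_of_normal _ _)
    let B : Subgroup A := (N true).comap (φ true) ⊓ (N false).comap (φ false)
    have hB : IsPP p B.index := isPP_inf hp _ _ (hc true) (hc false)
    have hle : ∀ i, B ≤ (N i).comap (φ i) := fun i => by
      cases i
      · exact inf_le_right
      · exact inf_le_left
    choose P h1 h2 h3 h4 using fun i =>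
      exists_adjust hp (φ i) (hinj i) (hcent i) (hemb i) B hB (N i) (hNn i) (hN i) (hle i)
    exact ⟨P, h1, h2, h3, (h4 true).trans (h4 false).symm⟩
  refine ⟨key, fun i N hNn hN => ?_⟩
  obtain ⟨P, h1, h2, h3, h4⟩ := key (Function.update (fun _ => ⊤) i N)
    (fun j => by
      by_cases hj : j = i
      · subst hj; simpa using hNn
      · rw [Function.update_of_ne hj]; infer_instance)
    (fun j => by
      by_cases hj : j = i
      · subst hj; simpa using hN
      · rw [Function.update_of_ne hj]; exact ⟨0, by simp⟩)
  obtain ⟨M, hMn, hM, hMP⟩ := amalgam_aux hp φ hcent P h1 h2 h4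
  exact ⟨M, hMn, hM, (hMP i).trans (by simpa using h3 i)⟩
end

section
/- Let p be a prime number, let A be a finitely generated abelian group, and let B be a subgroup of A whose index [A:B] is a power of p. Then the subgroup U = ⋂_{φ ∈ Aut(A)} φ(B), the intersection of the images of B under all automorphisms of A, is a subgroup of A contained in B, invariant under every automorphism of A, and of index [A:U] a power of p (in particular of finite index). -/
/-- If `B` is a subgroup of `p`-power index in a finitely generated abelian group `A`,
then the intersection `U` of the images of `B` under all automorphisms of `A` is
contained in `B`, is invariant under every automorphism of `A`, and has `p`-power
index in `A`. -/
theorem characteristic_core_of_p_power_index (p : ℕ) (hp : p.Prime)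
    (A : Type*) [CommGroup A] (hfg : Group.FG A) (B : Subgroup A)
    (hB : ∃ k : ℕ, B.index = p ^ k) :
    (⨅ φ : MulAut A, B.map φ.toMonoidHom) ≤ B ∧
    (∀ ψ : MulAut A,
      (⨅ φ : MulAut A, B.map φ.toMonoidHom).map ψ.toMonoidHom =
        ⨅ φ : MulAut A, B.map φ.toMonoidHom) ∧
    (∃ k : ℕ, (⨅ φ : MulAut A, B.map φ.toMonoidHom).index = p ^ k) := by
  classical
  obtain ⟨k, hk⟩ := hB
  have hinv : ∀ ψ : MulAut A,
      (⨅ φ : MulAut A, B.map φ.toMonoidHom) ≤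
        (⨅ φ : MulAut A, B.map φ.toMonoidHom).map ψ.toMonoidHom := by
    intro ψ x hx
    refine ⟨ψ.symm x, ?_, by simp⟩
    simp only [SetLike.mem_coe, Subgroup.mem_iInf] at hx ⊢
    intro φ
    obtain ⟨b, hb, hbx⟩ := hx (ψ * φ)
    refine ⟨b, hb, ?_⟩
    rw [← hbx]
    exact (ψ.symm_apply_apply (φ b)).symm
  refine ⟨?_, ?_, ?_⟩
  · intro x hx
    obtain ⟨b, hb, hbx⟩ := (Subgroup.mem_iInf.1 hx) 1
    have : b = x := hbx
    exact this ▸ hb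
  · intro ψ
    refine le_antisymm ?_ (hinv ψ)
    rintro _ ⟨y, hy, rfl⟩
    obtain ⟨z, hz, hzy⟩ := hinv ψ.symm hy
    have : ψ.toMonoidHom y = z := by
      rw [← hzy]; exact ψ.apply_symm_apply z
    rw [this]; exact hz
  · have hpow : ∀ x : A, x ^ p ^ k ∈ ⨅ φ : MulAut A, B.map φ.toMonoidHom := by
      intro x
      rw [Subgroup.mem_iInf]
      intro φ
      refine ⟨(φ.symm x) ^ p ^ k, ?_, ?_⟩
      · rw [← hk]; exact B.pow_index_mem _
      · rw [map_pow]; congr 1; exact φ.apply_symm_apply x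
    generalize (⨅ φ : MulAut A, B.map φ.toMonoidHom) = U at hpow
    have := Fact.mk hp
    have hq : ∀ g : A ⧸ U, g ^ p ^ k = 1 := by
      intro g
      induction g using QuotientGroup.induction_on with
      | H x => exact (QuotientGroup.eq_one_iff (x ^ p ^ k)).2 (hpow x)
    have : Group.FG (A ⧸ U) := QuotientGroup.fg U
    have : Finite (A ⧸ U) := CommGroup.finite_of_fg_isMulTorsion _ (by
      exact fun g => isOfFinOrder_iff_pow_eq_one.2 ⟨p ^ k, pow_pos hp.pos k, hq g⟩)
    rw [Subgroup.index_eq_card]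
    exact IsPGroup.iff_card.1 (fun g => ⟨k, hq g⟩)
end

section
/- Let p be a prime number and let σ and τ be the automorphisms of ℤ × ℤ given by σ(a,b) = (a+b, b) and τ(a,b) = (a, a+b). If M is a subgroup of ℤ × ℤ that is invariant under both σ and τ and whose index in ℤ × ℤ is a (finite) power of p, then M = p^nℤ × p^nℤ for some natural number n. -/
/-- The automorphism `σ(a,b) = (a+b, b)` of `ℤ × ℤ`. -/
def sigmaAut : (ℤ × ℤ) ≃+ (ℤ × ℤ) where
  toFun x := (x.1 + x.2, x.2)
  invFun x := (x.1 - x.2, x.2)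
  left_inv x := by simp
  right_inv x := by simp
  map_add' x y := by simp [Prod.ext_iff]; ring

/-- The automorphism `τ(a,b) = (a, a+b)` of `ℤ × ℤ`. -/
def tauAut : (ℤ × ℤ) ≃+ (ℤ × ℤ) where
  toFun x := (x.1, x.1 + x.2)
  invFun x := (x.1, x.2 - x.1)
  left_inv x := by simp
  right_inv x := by simp
  map_add' x y := by simp [Prod.ext_iff]; ring

/-- A subgroup of `ℤ × ℤ` of `p`-power index invariant under both `σ` and `τ` equals
`p^n ℤ × p^n ℤ` for some `n`. -/
theorem invariant_subgroup_eq_prod (p : ℕ) (hp : p.Prime)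
    (M : AddSubgroup (ℤ × ℤ))
    (hσ : M.map sigmaAut.toAddMonoidHom = M)
    (hτ : M.map tauAut.toAddMonoidHom = M)
    (hM : ∃ k : ℕ, M.index = p ^ k) :
    ∃ n : ℕ, M = (AddSubgroup.zmultiples ((p : ℤ) ^ n)).prod
      (AddSubgroup.zmultiples ((p : ℤ) ^ n)) := by
  obtain ⟨k, hk⟩ := hM
  have h1 : ∀ a b : ℤ, (a, b) ∈ M → (a + b, b) ∈ M := by
    intro a b h
    have := AddSubgroup.mem_map_of_mem sigmaAut.toAddMonoidHom h
    rw [hσ] at this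
    exact this
  have h2 : ∀ a b : ℤ, (a, b) ∈ M → (a, a + b) ∈ M := by
    intro a b h
    have := AddSubgroup.mem_map_of_mem tauAut.toAddMonoidHom h
    rw [hτ] at this
    exact this
  have h3 : ∀ a b : ℤ, (a, b) ∈ M → (b, 0) ∈ M := by
    intro a b h
    simpa using M.sub_mem (h1 a b h) h
  have h4 : ∀ a b : ℤ, (a, b) ∈ M → (0, a) ∈ M := by
    intro a b h
    simpa using M.sub_mem (h2 a b h) h
  obtain ⟨d, hd⟩ := Int.subgroup_cyclic (M.comap (AddMonoidHom.inl ℤ ℤ))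
  have hd' : ∀ a : ℤ, (a, 0) ∈ M ↔ d ∣ a := by
    intro a
    rw [← Int.mem_zmultiples_iff, AddSubgroup.zmultiples_eq_closure, ← hd]
    rfl
  have hpk : d ∣ (p : ℤ) ^ k := by
    rw [← hd']
    have := M.nsmul_index_mem ((1, 0) : ℤ × ℤ)
    rw [hk] at this
    simpa using this
  have hpk2 : d.natAbs ∣ p ^ k := by
    have h := Int.natAbs_dvd_natAbs.2 hpk
    rw [Int.natAbs_pow, Int.natAbs_natCast] at h
    exact h
  obtain ⟨n, -, hn⟩ := (Nat.dvd_prime_pow hp).1 hpk2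
  have hdn : ∀ a : ℤ, (p : ℤ) ^ n ∣ a ↔ d ∣ a := by
    intro a
    rw [← Int.natAbs_dvd (a := d), hn]
    push_cast
    rfl
  refine ⟨n, ?_⟩
  ext ⟨a, b⟩
  rw [AddSubgroup.mem_prod, Int.mem_zmultiples_iff, Int.mem_zmultiples_iff, hdn, hdn, ← hd', ← hd']
  constructor
  · intro h
    exact ⟨h3 _ _ (h4 _ _ h), h3 _ _ h⟩
  · rintro ⟨ha, hb⟩
    simpa using M.add_mem ha (h4 _ _ hb)
end

section
/- Let N = ℤ × ℤ, let σ and τ be the automorphisms of N given by σ(a,b) = (a+b, b) and τ(a,b) = (a, a+b), let G1 = N ⋊_σ ℤ and G2 = N ⋊_τ ℤ be the corresponding semidirect products (in which 1 ∈ ℤ acts by σ, respectively τ), and let G = G1 *_N G2 be the free product of G1 and G2 amalgamating the common subgroup N. Then for every prime p, every homomorphism θ from G to a finite p-group is trivial on N; that is, θ maps the image of N in G to the identity. -/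
/-- `N = ℤ × ℤ`, written multiplicatively. -/
abbrev Nmul : Type := Multiplicative (ℤ × ℤ)

/-- The action of `ℤ` on `N` in which `1` acts by `σ`. -/
def actSigma : Multiplicative ℤ →* MulAut Nmul :=
  zpowersHom (MulAut Nmul) (AddEquiv.toMultiplicative sigmaAut)

/-- The action of `ℤ` on `N` in which `1` acts by `τ`. -/
def actTau : Multiplicative ℤ →* MulAut Nmul :=
  zpowersHom (MulAut Nmul) (AddEquiv.toMultiplicative tauAut)

/-- `G₁ = N ⋊_σ ℤ`. -/
abbrev G1 : Type := Nmul ⋊[actSigma] Multiplicative ℤ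

/-- `G₂ = N ⋊_τ ℤ`. -/
abbrev G2 : Type := Nmul ⋊[actTau] Multiplicative ℤ

/-- The two factors of the amalgamated product, indexed by `Bool`. -/
abbrev Gfam : Bool → Type := fun b => match b with
  | true => G1
  | false => G2

instance (b : Bool) : Group (Gfam b) := by cases b <;> dsimp [Gfam] <;> infer_instance

/-- The canonical inclusions of `N` into the two factors. -/
def incl : ∀ b : Bool, Nmul →* Gfam b := fun b => match b with
  | true => SemidirectProduct.inl
  | false => SemidirectProduct.inl

/-- `G = G₁ *_N G₂`, the free product amalgamating the common subgroup `N`. -/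
abbrev Gamal : Type := Monoid.PushoutI incl

theorem kills_aux {P : Type} [Group P] [Group.IsNilpotent P] (x y s t : P)
    (h1 : s * y * s⁻¹ = x * y) (h2 : t * x * t⁻¹ = y * x) : x = 1 ∧ y = 1 := by
  have key : ∀ n, x ∈ Subgroup.lowerCentralSeries (⊤ : Subgroup P) n ∧
      y ∈ Subgroup.lowerCentralSeries (⊤ : Subgroup P) n := by
    intro n
    induction n with
    | zero => simp
    | succ n ih =>
      have ex : x = s * y * s⁻¹ * y⁻¹ := by rw [h1]; group
      have ey : y = t * x * t⁻¹ * x⁻¹ := by rw [h2]; group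
      rw [Subgroup.lowerCentralSeries_succ, Subgroup.commutator_comm]
      constructor
      · rw [ex]; exact Subgroup.commutator_mem_commutator (Subgroup.mem_top _) ih.2
      · rw [ey]; exact Subgroup.commutator_mem_commutator (Subgroup.mem_top _) ih.1
  obtain ⟨n, hn⟩ := Subgroup.nilpotent_iff_lowerCentralSeries.1 ‹Group.IsNilpotent P›
  have := key n
  rw [hn] at this
  simpa using this

/-- Any homomorphism from `G₁ *_N G₂` to a finite `p`-group kills the image of `N`. -/
theorem amalgam_hom_kills_N (p : ℕ) (hp : p.Prime) (P : Type) [Group P]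
    (hP : ∃ k : ℕ, Nat.card P = p ^ k) (θ : Gamal →* P) :
    ∀ x : Nmul, θ (Monoid.PushoutI.of (φ := incl) true (SemidirectProduct.inl x)) = 1 := by
  have : Fact p.Prime := ⟨hp⟩
  obtain ⟨k, hk⟩ := hP
  have : Finite P := Nat.finite_of_card_ne_zero (by rw [hk]; exact pow_ne_zero _ hp.ne_zero)
  have : Group.IsNilpotent P := (IsPGroup.of_card hk).isNilpotent
  have hb : ∀ n : Nmul, Monoid.PushoutI.of (φ := incl) true (SemidirectProduct.inl n : G1) =
      Monoid.PushoutI.of (φ := incl) false (SemidirectProduct.inl n : G2) := fun n =>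
    (Monoid.PushoutI.of_apply_eq_base incl true n).trans
      (Monoid.PushoutI.of_apply_eq_base incl false n).symm
  let f : Nmul →* P := θ.comp ((Monoid.PushoutI.of (φ := incl) true).comp
    (SemidirectProduct.inl : Nmul →* G1))
  let a : Multiplicative ℤ := Multiplicative.ofAdd 1
  let s : P := θ (Monoid.PushoutI.of (φ := incl) true (SemidirectProduct.inr a : G1))
  let t : P := θ (Monoid.PushoutI.of (φ := incl) false (SemidirectProduct.inr a : G2))
  have hs : ∀ n : Nmul, f (actSigma a n) = s * f n * s⁻¹ := by
    intro n
    have h : (SemidirectProduct.inl (actSigma a n) : G1) = _ := SemidirectProduct.inl_aut a n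
    have h' := congrArg (fun g : G1 => θ (Monoid.PushoutI.of (φ := incl) true g)) h
    refine h'.trans ?_
    rw [map_inv]
    exact (map_mul (θ.comp (Monoid.PushoutI.of (φ := incl) true)) _ _).trans
      (congrArg₂ _ (map_mul (θ.comp (Monoid.PushoutI.of (φ := incl) true)) _ _)
        (map_inv (θ.comp (Monoid.PushoutI.of (φ := incl) true)) _))
  have hf : ∀ n : Nmul, f n =
      θ (Monoid.PushoutI.of (φ := incl) false (SemidirectProduct.inl n : G2)) :=
    fun n => congrArg θ (hb n)
  have ht : ∀ n : Nmul, f (actTau a n) = t * f n * t⁻¹ := by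
    intro n
    rw [hf, hf]
    have h : (SemidirectProduct.inl (actTau a n) : G2) = _ := SemidirectProduct.inl_aut a n
    have h' := congrArg (fun g : G2 => θ (Monoid.PushoutI.of (φ := incl) false g)) h
    refine h'.trans ?_
    rw [map_inv]
    exact (map_mul (θ.comp (Monoid.PushoutI.of (φ := incl) false)) _ _).trans
      (congrArg₂ _ (map_mul (θ.comp (Monoid.PushoutI.of (φ := incl) false)) _ _)
        (map_inv (θ.comp (Monoid.PushoutI.of (φ := incl) false)) _))
  let X : Nmul := Multiplicative.ofAdd (1, 0)
  let Y : Nmul := Multiplicative.ofAdd (0, 1)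
  have e1 : actSigma a Y = X * Y := by
    have : actSigma a = AddEquiv.toMultiplicative sigmaAut := by simp [actSigma, a]
    rw [this]; rfl
  have e2 : actTau a X = Y * X := by
    have : actTau a = AddEquiv.toMultiplicative tauAut := by simp [actTau, a]
    rw [this]; rfl
  obtain ⟨hX, hY⟩ := kills_aux (f X) (f Y) s t
    (by rw [← hs, e1, map_mul]) (by rw [← ht, e2, map_mul])
  intro n
  change f n = 1
  have hn : n = X ^ (Multiplicative.toAdd n).1 * Y ^ (Multiplicative.toAdd n).2 := by
    apply Multiplicative.toAdd.injective
    simp [X, Y]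
  rw [hn, map_mul, map_zpow, map_zpow, hX, hY]
  simp
end

section
/- Let p be a prime number, let σ be the automorphism of ℤ × ℤ given by σ(a,b) = (a+b, b), and let G1 = (ℤ × ℤ) ⋊_σ ℤ be the semidirect product in which 1 ∈ ℤ acts by σ. Then the second group cohomology of G1 with coefficients in ℤ/p regarded as a trivial G1-module is nonzero: H²(G1, ℤ/p) ≠ 0. -/
lemma tri_add (k l : ℤ) :
    (k + l) * (k + l - 1) / 2 = k * (k - 1) / 2 + l * (l - 1) / 2 + k * l := by
  obtain ⟨c, hc⟩ := (Int.even_mul_pred_self k).two_dvd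
  obtain ⟨d, hd⟩ := (Int.even_mul_pred_self l).two_dvd
  have h : (k + l) * (k + l - 1) = 2 * (c + d + k * l) := by linarith
  rw [h, hc, hd]
  simp

lemma sigma_zpow (k : ℤ) : ∀ x : Nmul,
    ((AddEquiv.toMultiplicative sigmaAut : MulAut Nmul) ^ k) x
      = Multiplicative.ofAdd ((x.toAdd.1 + k * x.toAdd.2, x.toAdd.2) : ℤ × ℤ) := by
  have h1 : ∀ x : Nmul, (AddEquiv.toMultiplicative sigmaAut : MulAut Nmul) x
      = Multiplicative.ofAdd ((x.toAdd.1 + x.toAdd.2, x.toAdd.2) : ℤ × ℤ) := fun x => rfl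
  have h2 : ∀ x : Nmul, (AddEquiv.toMultiplicative sigmaAut : MulAut Nmul)⁻¹ x
      = Multiplicative.ofAdd ((x.toAdd.1 - x.toAdd.2, x.toAdd.2) : ℤ × ℤ) := fun x => rfl
  induction k with
  | zero => intro x; simp
  | succ n ih =>
    intro x
    rw [zpow_add_one, MulAut.mul_apply, ih, h1]
    simp only [toAdd_ofAdd]
    congr 2
    push_cast; ring
  | pred n ih =>
    intro x
    rw [zpow_sub_one, MulAut.mul_apply, ih, h2]
    simp only [toAdd_ofAdd]
    congr 2
    push_cast; ring

lemma act_apply (k : Multiplicative ℤ) (x : Nmul) :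
    actSigma k x
      = Multiplicative.ofAdd ((x.toAdd.1 + k.toAdd * x.toAdd.2, x.toAdd.2) : ℤ × ℤ) := by
  rw [← sigma_zpow]; rfl

/-- The Massey-type cocycle. -/
def fcoc (p : ℕ) (x : G1 × G1) : ZMod p :=
  ((x.1.right.toAdd * x.2.left.toAdd.1 +
    x.1.right.toAdd * (x.1.right.toAdd - 1) / 2 * x.2.left.toAdd.2 : ℤ) : ZMod p)

lemma fcoc_mem (p : ℕ) :
    fcoc p ∈ groupCohomology.cocycles₂ (Rep.trivial (ZMod p) G1 (ZMod p)) := by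
  rw [groupCohomology.mem_cocycles₂_iff]
  intro g h j
  change fcoc p (g * h, j) + fcoc p (g, h) = fcoc p (h, j) + fcoc p (g, h * j)
  simp only [fcoc, SemidirectProduct.mul_left, SemidirectProduct.mul_right, act_apply,
    toAdd_mul, toAdd_ofAdd, Prod.fst_add, Prod.snd_add, tri_add]
  rw [← Int.cast_add, ← Int.cast_add]
  congr 1
  ring

/-- `H²(G₁, ℤ/p) ≠ 0` for `ℤ/p` a trivial `G₁`-module. -/
theorem second_cohomology_G1_nontrivial (p : ℕ) (hp : p.Prime) :
    Nontrivial (groupCohomology (Rep.trivial (ZMod p) G1 (ZMod p)) 2) := by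
  have : Fact p.Prime := ⟨hp⟩
  refine ⟨groupCohomology.H2π _ ⟨fcoc p, fcoc_mem p⟩, 0, ?_⟩
  rw [Ne, groupCohomology.H2π_eq_zero_iff]
  rintro ⟨u, hu⟩
  let z : G1 := ⟨Multiplicative.ofAdd ((1, 0) : ℤ × ℤ), 1⟩
  let t : G1 := ⟨1, Multiplicative.ofAdd (1 : ℤ)⟩
  have hc : z * t = t * z := by
    apply SemidirectProduct.ext
    · simp [z, t, act_apply]
    · simp [z, t]
  have hu' : ∀ g h : G1, (u h - u (g * h) + u g : ZMod p) = fcoc p (g, h) :=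
    fun g h => congrFun hu (g, h)
  have e1 := hu' z t
  have e2 := hu' t z
  have f1 : fcoc p (z, t) = 0 := by simp [fcoc, z, t]
  have f2 : fcoc p (t, z) = 1 := by simp [fcoc, z, t]
  rw [f1, hc] at e1
  rw [f2] at e2
  have : (0 : ZMod p) = 1 := by
    rw [← e1, ← e2]
    abel
  exact zero_ne_one this
end

section
/- Let p be a prime number, let N = ℤ × ℤ, let σ and τ be the automorphisms of N given by σ(a,b) = (a+b, b) and τ(a,b) = (a, a+b), let G1 = N ⋊_σ ℤ and G2 = N ⋊_τ ℤ, and let G = G1 *_N G2 be the free product of G1 and G2 amalgamating the common subgroup N. Then the second group cohomology of G with coefficients in ℤ/p regarded as a trivial G-module is nonzero: H²(G, ℤ/p) ≠ 0. -/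
@[ext] structure QM (R : Type) where
  c1 : R
  c2 : R
  a : R
  b : R
  d : R
  e : R
  n1 : R
  n2 : R

namespace QM
variable {R : Type} [CommRing R]

instance : Mul (QM R) := ⟨fun x y =>
  ⟨y.c1 + (x.c1 * y.a + x.c2 * y.d), y.c2 + (x.c1 * y.b + x.c2 * y.e),
   x.a * y.a + x.b * y.d, x.a * y.b + x.b * y.e,
   x.d * y.a + x.e * y.d, x.d * y.b + x.e * y.e,
   x.a * y.n1 + x.b * y.n2 + x.n1, x.d * y.n1 + x.e * y.n2 + x.n2⟩⟩

instance : One (QM R) := ⟨⟨0, 0, 1, 0, 0, 1, 0, 0⟩⟩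

theorem mul_def (x y : QM R) : x * y =
  ⟨y.c1 + (x.c1 * y.a + x.c2 * y.d), y.c2 + (x.c1 * y.b + x.c2 * y.e),
   x.a * y.a + x.b * y.d, x.a * y.b + x.b * y.e,
   x.d * y.a + x.e * y.d, x.d * y.b + x.e * y.e,
   x.a * y.n1 + x.b * y.n2 + x.n1, x.d * y.n1 + x.e * y.n2 + x.n2⟩ := rfl

theorem one_def : (1 : QM R) = ⟨0, 0, 1, 0, 0, 1, 0, 0⟩ := rfl

instance : Monoid (QM R) where
  mul_assoc x y z := by ext <;> simp only [mul_def] <;> ring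
  one_mul x := by ext <;> simp [mul_def, one_def]
  mul_one x := by ext <;> simp [mul_def, one_def]

def f (x y : QM R) : R := x.c1 * y.n1 + x.c2 * y.n2

theorem f_cocycle (x y z : QM R) : f (x * y) z + f x y = f y z + f x (y * z) := by
  simp only [f, mul_def]; ring

variable (R)

def nHom0 : Nmul →* QM R where
  toFun x := ⟨0, 0, 1, 0, 0, 1, (x.toAdd.1 : R), (x.toAdd.2 : R)⟩
  map_one' := by simp [one_def]
  map_mul' x y := by simp [mul_def]; constructor <;> ring

def nHom : Nmul →* (QM R)ˣ := (nHom0 R).toHomUnits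

def sU : (QM R)ˣ where
  val := ⟨1, 0, 1, 1, 0, 1, 0, 0⟩
  inv := ⟨-1, 1, 1, -1, 0, 1, 0, 0⟩
  val_inv := by simp [mul_def, one_def]
  inv_val := by simp [mul_def, one_def]

def tU : (QM R)ˣ where
  val := ⟨0, 0, 1, 0, 1, 1, 0, 0⟩
  inv := ⟨0, 0, 1, 0, -1, 1, 0, 0⟩
  val_inv := by simp [mul_def, one_def]
  inv_val := by simp [mul_def, one_def]

end QM

/-- compatibility on the generator suffices -/
theorem compat_aux {K : Type} [Group K] (α : MulAut Nmul) (u : K) (F : Nmul →* K)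
    (h : ∀ x, F (α x) = u * F x * u⁻¹) (g : Multiplicative ℤ) :
    F.comp ((zpowersHom (MulAut Nmul) α g).toMonoidHom) =
      (MulAut.conj (zpowersHom K u g)).toMonoidHom.comp F := by
  have key : ∀ n : ℤ, ∀ x, F ((α ^ n) x) = u ^ n * F x * (u ^ n)⁻¹ := by
    intro n
    induction n using Int.induction_on with
    | zero => intro x; simp
    | succ i ih =>
      intro x
      rw [zpow_add_one, zpow_add_one, MulAut.mul_apply, ih, h]
      group
    | pred i ih =>
      intro x
      have h' : F (α⁻¹ x) = u⁻¹ * F x * u := by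
        have := h (α⁻¹ x)
        rw [MulAut.apply_inv_self] at this
        rw [this]; group
      rw [zpow_sub_one, zpow_sub_one, MulAut.mul_apply, ih, h']
      group
  refine MonoidHom.ext fun x => ?_
  exact key g.toAdd x

namespace QM
variable (R : Type) [CommRing R]

def hom1 : G1 →* (QM R)ˣ :=
  SemidirectProduct.lift (nHom R) (zpowersHom _ (sU R)) (by
    intro g
    refine compat_aux _ _ _ (fun x => ?_) g
    rw [eq_mul_inv_iff_mul_eq]
    ext <;> simp [mul_def, nHom, nHom0, sU, sigmaAut])

def hom2 : G2 →* (QM R)ˣ :=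
  SemidirectProduct.lift (nHom R) (zpowersHom _ (tU R)) (by
    intro g
    refine compat_aux _ _ _ (fun x => ?_) g
    rw [eq_mul_inv_iff_mul_eq]
    ext <;> simp [mul_def, nHom, nHom0, tU, tauAut])

theorem hom1_inl (x : Nmul) : hom1 R (SemidirectProduct.inl x) = nHom R x := by
  change nHom R x * zpowersHom _ (sU R) 1 = nHom R x
  rw [map_one, mul_one]

theorem hom2_inl (x : Nmul) : hom2 R (SemidirectProduct.inl x) = nHom R x := by
  change nHom R x * zpowersHom _ (tU R) 1 = nHom R x
  rw [map_one, mul_one]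

def homFam : ∀ b : Bool, Gfam b →* (QM R)ˣ := fun b => match b with
  | true => hom1 R
  | false => hom2 R

def homG : Gamal →* (QM R)ˣ :=
  Monoid.PushoutI.lift (homFam R) (nHom R) (by
    intro b
    cases b
    · exact MonoidHom.ext (hom2_inl R)
    · exact MonoidHom.ext (hom1_inl R))

end QM

def e1G : G1 := SemidirectProduct.inl (Multiplicative.ofAdd ((1, 0) : ℤ × ℤ))
def sG : G1 := SemidirectProduct.inr (Multiplicative.ofAdd (1 : ℤ))

theorem e1_s_comm : e1G * sG = sG * e1G := by
  refine SemidirectProduct.ext ?_ ?_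
  · change Multiplicative.ofAdd ((1, 0) : ℤ × ℤ) * actSigma 1 1 =
      1 * actSigma (Multiplicative.ofAdd (1 : ℤ)) (Multiplicative.ofAdd ((1, 0) : ℤ × ℤ))
    simp [actSigma, sigmaAut]
  · change (1 : Multiplicative ℤ) * Multiplicative.ofAdd (1 : ℤ) =
      Multiplicative.ofAdd (1 : ℤ) * 1
    simp

def toG : G1 →* Gamal := Monoid.PushoutI.of (φ := incl) true

theorem homG_toG (R : Type) [CommRing R] (x : G1) : QM.homG R (toG x) = QM.hom1 R x :=
  Monoid.PushoutI.lift_of (φ := incl) (i := true) _ _ _ _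

/-- `H²(G₁ *_N G₂, ℤ/p) ≠ 0` for `ℤ/p` a trivial module. -/
theorem second_cohomology_amalgam_nontrivial (p : ℕ) (hp : p.Prime) :
    Nontrivial (groupCohomology (Rep.trivial (ZMod p) Gamal (ZMod p)) 2) := by
  have : Fact p.Prime := ⟨hp⟩
  let A := Rep.trivial (ZMod p) Gamal (ZMod p)
  let F : Gamal × Gamal → A := fun x =>
    QM.f (QM.homG (ZMod p) x.1 : QM (ZMod p)) (QM.homG (ZMod p) x.2 : QM (ZMod p))
  have hF : F ∈ groupCohomology.cocycles₂ A := by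
    rw [groupCohomology.mem_cocycles₂_iff]
    intro g h j
    have := QM.f_cocycle (QM.homG (ZMod p) g : QM (ZMod p)) (QM.homG (ZMod p) h)
      (QM.homG (ZMod p) j)
    simpa [F, A] using this
  refine ⟨groupCohomology.H2π A ⟨F, hF⟩, 0, fun h0 => ?_⟩
  rw [groupCohomology.H2π_eq_zero_iff] at h0
  obtain ⟨φ, hφ⟩ := h0
  have h1 := congrFun hφ (toG sG, toG e1G)
  have h2 := congrFun hφ (toG e1G, toG sG)
  have hc : toG e1G * toG sG = toG sG * toG e1G := by
    rw [← map_mul, e1_s_comm, map_mul]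
  have v1 : F (toG sG, toG e1G) = (1 : ZMod p) := by
    simp [F, homG_toG, QM.hom1, sG, e1G, QM.f, QM.nHom, QM.nHom0, QM.sU]
  have v2 : F (toG e1G, toG sG) = (0 : ZMod p) := by
    simp [F, homG_toG, QM.hom1, sG, e1G, QM.f, QM.nHom, QM.nHom0, QM.sU]
  have h3 : F (toG sG, toG e1G) = F (toG e1G, toG sG) := by
    refine h1.symm.trans (Eq.trans ?_ h2)
    simp [A, groupCohomology.d₁₂, hc]
    abel
  rw [v1, v2] at h3
  exact one_ne_zero h3
end
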